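/- arXiv:1702.05242 — 7 statements merged into one kernel-verified Lean document; each statement's English description precedes it below -/
import Mathlib

section
/- Let p be a prime, let P be a finite p-group, and let G be a finite group of automorphisms of P (i.e. G is a subgroup of Aut(P)) whose order is not divisible by p. If p ≥ (|G| - 1)/2 (equivalently |G| ≤ 2p + 1), then G has a regular orbit on P, i.e. there exists x ∈ P whose stabilizer in G is trivial. -/
/-!
If `P` has no point with trivial stabilizer, the fixed subgroups of the nontrivial elements of `G`
cover `P`. They are proper and all contain `1`, so by B. H. Neumann's lemma the reciprocals of
their indices add up to more than `1`: if `a` of them have index `p` and `b` have larger index,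
then `p ^ 2 < p * a + b`. As `g` and `g⁻¹` have the same fixed subgroup, each of the `a` subgroups
comes from at least two elements of `G`, unless it comes from a single involution, which is then a
reflection. The fixed subgroup of the product of two distinct reflections does not have index `p`,
so multiplication by one reflection injects the others into the elements whose fixed subgroup has
larger index. Hence `2 * a ≤ |G|`, where `|G| ≤ 2 * p - 2` as `|G|` is even and prime to `p`; if
there are no reflections, then `2 * a + b ≤ |G| - 1`. Either way `p * a + b ≤ p ^ 2`.
-/

open Finset
open scoped Pointwise

section Subgroups

variable {P : Type*} [Group P] {p : ℕ}

theorem isCoatom_of_prime_index {H : Subgroup P} (hH : H.index.Prime) : IsCoatom H := by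
  refine ⟨fun htop => hH.ne_one (Subgroup.index_eq_one.2 htop), fun K hHK => ?_⟩
  have hrel : H.relIndex K ≠ 1 := fun h => hHK.not_ge (Subgroup.relIndex_eq_one.1 h)
  have hmul := Subgroup.relIndex_mul_index hHK.le
  exact Subgroup.index_eq_one.1 (((Nat.prime_mul_iff.1 (hmul ▸ hH)).resolve_right
    fun h => hrel h.2).2)

theorem normal_of_index_eq_prime (hp : p.Prime) (hP : IsPGroup p P) {H : Subgroup P}
    (hH : H.index = p) : H.Normal := by
  have := Fact.mk hp
  have hcard : Nat.card (P ⧸ H) = p := hH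
  have : Finite (P ⧸ H) := Nat.finite_of_card_ne_zero (hcard ▸ hp.ne_zero)
  have hbase : ((1 : P) : P ⧸ H) ∈ MulAction.fixedPoints H (P ⧸ H) := fun h =>
    QuotientGroup.eq.2 (by simp)
  have hdvd : p ∣ Nat.card (MulAction.fixedPoints H (P ⧸ H)) :=
    (((hP.to_subgroup H).card_modEq_card_fixedPoints (P ⧸ H)).dvd_iff dvd_rfl).1 hcard.symm.dvd
  have hall : MulAction.fixedPoints H (P ⧸ H) = Set.univ := by
    have : Nonempty (MulAction.fixedPoints H (P ⧸ H)) := ⟨⟨_, hbase⟩⟩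
    refine Set.eq_of_subset_of_ncard_le (Set.subset_univ _) ?_
    rw [Set.ncard_univ, hcard]
    exact Nat.le_of_dvd Nat.card_pos hdvd
  refine ⟨fun h hh x => ?_⟩
  have hfix : ((x⁻¹ : P) : P ⧸ H) ∈ MulAction.fixedPoints H (P ⧸ H) := hall ▸ Set.mem_univ _
  simpa [mul_assoc] using QuotientGroup.eq.1 (hfix ⟨h, hh⟩).symm

/-- Equality in Neumann's bound would make the subgroups of finite index disjoint, whereas they all
contain `1`. -/
theorem one_lt_sum_inv_index_of_cover {s : Finset (Subgroup P)} (htop : ⊤ ∉ s)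
    (hcover : ∀ x, ∃ H ∈ s, x ∈ H) : 1 < ∑ H ∈ s, (H.index : ℚ)⁻¹ := by
  classical
  have hcosets : ⋃ H ∈ s, (1 : P) • (H : Set P) = Set.univ := by
    simpa [Set.eq_univ_iff_forall] using hcover
  refine (Subgroup.one_le_sum_inv_index_of_leftCoset_cover hcosets).lt_of_ne fun hsum => htop ?_
  have hdisj := Subgroup.pairwiseDisjoint_leftCoset_cover_of_sum_inv_index_eq_one hcosets hsum.symm
  obtain ⟨K, hK, hKfin⟩ := Subgroup.exists_finiteIndex_of_leftCoset_cover hcosets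
  have heq : ∀ H ∈ s, H.FiniteIndex → H = K := fun H hH hHfin =>
    hdisj.elim_set (by simp [hH, hHfin]) (by simp [hK, hKfin]) 1 (by simp [H.one_mem])
      (by simp [K.one_mem])
  have hKtop : K = ⊤ := by
    refine (Subgroup.eq_top_iff' K).2 fun x => ?_
    have hx := Set.eq_univ_iff_forall.1 (Subgroup.leftCoset_cover_filter_FiniteIndex hcosets) x
    simp only [mem_filter, one_smul, Set.mem_iUnion, SetLike.mem_coe, exists_prop] at hx
    obtain ⟨H, ⟨hH, hHfin⟩, hxH⟩ := hx
    exact heq H hH hHfin ▸ hxH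
  exact hKtop ▸ hK

theorem inv_index_le_inv_sq (hp : p.Prime) (hP : IsPGroup p P) {H : Subgroup P} (htop : H ≠ ⊤)
    (hH : H.index ≠ p) : (H.index : ℚ)⁻¹ ≤ ((p : ℚ) ^ 2)⁻¹ := by
  have := Fact.mk hp
  rcases eq_or_ne H.index 0 with h0 | h0
  · simp [h0]
  have : H.FiniteIndex := ⟨h0⟩
  obtain ⟨k, hk⟩ := hP.index H
  have hk0 : k ≠ 0 := fun h => htop (Subgroup.index_eq_one.1 (by rw [hk, h, pow_zero]))
  have hk1 : k ≠ 1 := fun h => hH (by rw [hk, h, pow_one])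
  have hp0 : (0 : ℚ) < p := mod_cast hp.pos
  have hp1 : (1 : ℚ) ≤ p := mod_cast hp.one_le
  rw [hk, Nat.cast_pow]
  exact inv_anti₀ (by positivity) (pow_le_pow_right₀ hp1 (by omega))

theorem sq_lt_of_cover (hp : p.Prime) (hP : IsPGroup p P) {s : Finset (Subgroup P)}
    (htop : ⊤ ∉ s) (hcover : ∀ x, ∃ H ∈ s, x ∈ H) :
    p ^ 2 < p * #{H ∈ s | H.index = p} + #{H ∈ s | H.index ≠ p} := by
  have hp0 : (0 : ℚ) < p := mod_cast hp.pos
  have hsmall : ∑ H ∈ s with H.index = p, (H.index : ℚ)⁻¹ = #{H ∈ s | H.index = p} * (p : ℚ)⁻¹ := by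
    rw [sum_congr rfl fun H hH => by rw [(mem_filter.1 hH).2], sum_const, nsmul_eq_mul]
  have hlarge : ∑ H ∈ s with H.index ≠ p, (H.index : ℚ)⁻¹ ≤
      #{H ∈ s | H.index ≠ p} * ((p : ℚ) ^ 2)⁻¹ := by
    rw [← nsmul_eq_mul]
    refine sum_le_card_nsmul _ _ _ fun H hH => ?_
    obtain ⟨hHs, hHp⟩ := mem_filter.1 hH
    exact inv_index_le_inv_sq hp hP (ne_of_mem_of_not_mem hHs htop) hHp
  have hsum := one_lt_sum_inv_index_of_cover htop hcover
  rw [← sum_filter_add_sum_filter_not s (fun H => H.index = p), hsmall] at hsum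
  have hrat := hsum.trans_le (add_le_add_right hlarge _)
  field_simp at hrat
  rw [mul_comm p]
  exact_mod_cast hrat

end Subgroups

section FixedSubgroup

variable {G P : Type*} [Group G] [Group P] [MulDistribMulAction G P] {g h : G} {x : P}

variable (P) in
/-- The centralizer `C_P(g)`: the subgroup of points of `P` fixed by `g`. -/
def fixedSubgroup (g : G) : Subgroup P where
  carrier := MulAction.fixedBy P g
  mul_mem' {x y} (hx : g • x = x) (hy : g • y = y) := show g • (x * y) = x * y by
    rw [smul_mul', hx, hy]
  one_mem' := smul_one g
  inv_mem' {x} (hx : g • x = x) := show g • x⁻¹ = x⁻¹ by rw [smul_inv', hx]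

theorem mem_fixedSubgroup : x ∈ fixedSubgroup P g ↔ g • x = x := Iff.rfl

theorem fixedSubgroup_inv (g : G) : fixedSubgroup P g⁻¹ = fixedSubgroup P g :=
  SetLike.coe_injective (MulAction.fixedBy_inv P g)

theorem fixedSubgroup_eq_top_iff [FaithfulSMul G P] : fixedSubgroup P g = ⊤ ↔ g = 1 := by
  refine ⟨fun htop => eq_of_smul_eq_smul fun x : P => ?_, ?_⟩
  · rw [one_smul, mem_fixedSubgroup.1 (htop ▸ Subgroup.mem_top x)]
  · rintro rfl
    exact (Subgroup.eq_top_iff' _).2 fun x => one_smul G x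

theorem smul_smul_self_of_orderOf_eq_two (hg : orderOf g = 2) (x : P) : g • g • x = x := by
  simpa only [inv_eq_self_of_orderOf_eq_two hg] using inv_smul_smul g x

theorem smul_mem_fixedSubgroup_mul (hg : orderOf g = 2) (hh : orderOf h = 2)
    (hx : x ∈ fixedSubgroup P (g * h)) :
    g • x ∈ fixedSubgroup P (g * h) ∧ h • x ∈ fixedSubgroup P (g * h) := by
  rw [mem_fixedSubgroup, mul_smul] at hx
  have hgx : g • x = h • x := by rw [← smul_smul_self_of_orderOf_eq_two hg (h • x), hx]
  rw [← hgx, and_self, mem_fixedSubgroup, mul_smul, hgx, smul_smul_self_of_orderOf_eq_two hh, hgx]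

theorem fixedSubgroup_mul_inf_left_le :
    fixedSubgroup P (g * h) ⊓ fixedSubgroup P g ≤ fixedSubgroup P h := by
  rintro x ⟨hgh : (g * h) • x = x, hg : g • x = x⟩
  exact smul_left_cancel g (by rw [smul_smul, hgh, hg])

theorem fixedSubgroup_mul_inf_right_le :
    fixedSubgroup P (g * h) ⊓ fixedSubgroup P h ≤ fixedSubgroup P g := by
  rintro x ⟨hgh : (g * h) • x = x, hh : h • x = x⟩
  rwa [mul_smul, hh] at hgh

theorem fixedSubgroup_eq_fixedSubgroup_mul_iff (hg : IsCoatom (fixedSubgroup P g))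
    (hh : IsCoatom (fixedSubgroup P h)) (hgh : IsCoatom (fixedSubgroup P (g * h))) :
    fixedSubgroup P g = fixedSubgroup P (g * h) ↔ fixedSubgroup P h = fixedSubgroup P (g * h) := by
  constructor <;> intro heq
  · exact (hgh.le_iff_eq hh.ne_top).1
      ((le_inf le_rfl heq.ge).trans fixedSubgroup_mul_inf_left_le)
  · exact (hgh.le_iff_eq hg.ne_top).1
      ((le_inf le_rfl heq.ge).trans fixedSubgroup_mul_inf_right_le)

end FixedSubgroup

section FixedModulo

variable {G P : Type*} [Group G] [Group P] [MulDistribMulAction G P] {g h : G} {x : P}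
  {D : Subgroup P} [D.Normal] {p : ℕ}

/-- The points of `P` that `g` fixes modulo the normal subgroup `D`. When `g` leaves `D` invariant
this is the preimage of `C_{P/D}(g)`; phrasing it in `P` avoids carrying that invariance around in
order to have an action on `P ⧸ D`. -/
def fixedModulo (D : Subgroup P) [D.Normal] (g : G) : Subgroup P :=
  (QuotientGroup.mk' D).eqLocus ((QuotientGroup.mk' D).comp (MulDistribMulAction.toMonoidHom P g))

theorem mem_fixedModulo : x ∈ fixedModulo D g ↔ (x : P ⧸ D) = (g • x : P) := Iff.rfl

theorem mem_fixedModulo_iff_inv_mul_smul_mem : x ∈ fixedModulo D g ↔ x⁻¹ * g • x ∈ D :=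
  QuotientGroup.eq

theorem fixedSubgroup_le_fixedModulo : fixedSubgroup P g ≤ fixedModulo D g := fun x hx => by
  rw [mem_fixedModulo, mem_fixedSubgroup.1 hx]

theorem le_fixedModulo (hD : ∀ d ∈ D, g • d ∈ D) : D ≤ fixedModulo D g := fun d hd =>
  mem_fixedModulo_iff_inv_mul_smul_mem.2 (mul_mem (inv_mem hd) (hD d hd))

theorem fixedModulo_mul_eq_top (hg : fixedModulo D g = ⊤) (hh : fixedModulo D h = ⊤) :
    fixedModulo D (g * h) = ⊤ := by
  refine (Subgroup.eq_top_iff' _).2 fun x => ?_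
  have hx := mem_fixedModulo.1 (hh ▸ Subgroup.mem_top x)
  have hhx := mem_fixedModulo.1 (hg ▸ Subgroup.mem_top (h • x))
  rw [mem_fixedModulo, hx, hhx, mul_smul]

theorem fixedModulo_eq_top_of_not_le (hmax : IsCoatom D) (hD : ∀ d ∈ D, g • d ∈ D)
    (hle : ¬ fixedModulo D g ≤ D) : fixedModulo D g = ⊤ :=
  hmax.2 _ (lt_of_le_not_ge (le_fixedModulo hD) hle)

theorem fixedModulo_eq_top_of_fixedSubgroup_ne (hmax : IsCoatom D) (hD : ∀ d ∈ D, g • d ∈ D)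
    (hg : IsCoatom (fixedSubgroup P g)) (hne : fixedSubgroup P g ≠ D) : fixedModulo D g = ⊤ :=
  fixedModulo_eq_top_of_not_le hmax hD fun hle =>
    hne ((hg.le_iff_eq hmax.ne_top).1 (fixedSubgroup_le_fixedModulo.trans hle)).symm

/-- Here `g ^ n • x = x * (x⁻¹ * g • x) ^ n`, which is `x` when `n` is a suitable power of `p`, and
then `g` is a power of `g ^ n` by coprimality. -/
theorem eq_one_of_forall_inv_mul_smul_mem [FaithfulSMul G P] (hp : p.Prime) (hP : IsPGroup p P)
    (hg : ¬ p ∣ orderOf g) (htriv : ∀ x : P, x⁻¹ * g • x ∈ fixedSubgroup P g) : g = 1 := by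
  have hpow : ∀ (x : P) (n : ℕ), g ^ n • x = x * (x⁻¹ * g • x) ^ n := by
    intro x n
    induction n with
    | zero => simp
    | succ n ih =>
      have hfix : g • (x⁻¹ * g • x) = x⁻¹ * g • x := htriv x
      rw [pow_succ', mul_smul, ih, smul_mul', smul_pow', hfix, pow_succ']
      simp only [mul_assoc, mul_inv_cancel_left]
  refine (fixedSubgroup_eq_top_iff (P := P)).1 ((Subgroup.eq_top_iff' _).2 fun x => ?_)
  obtain ⟨k, hk⟩ := hP (x⁻¹ * g • x)
  have hfix : g ^ p ^ k ∈ MulAction.stabilizer G x := by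
    rw [MulAction.mem_stabilizer_iff, hpow, hk, mul_one]
  have hcoprime : (p ^ k).Coprime (orderOf g) := (hp.coprime_iff_not_dvd.2 hg).pow_left k
  obtain ⟨m, hm⟩ := exists_pow_eq_self_of_coprime hcoprime
  exact MulAction.mem_stabilizer_iff.1 (hm ▸ pow_mem hfix m)

theorem eq_one_of_fixedModulo_fixedSubgroup_eq_top [FaithfulSMul G P] (hp : p.Prime)
    (hP : IsPGroup p P) (hg : ¬ p ∣ orderOf g) [(fixedSubgroup P g).Normal]
    (htop : fixedModulo (fixedSubgroup P g) g = ⊤) : g = 1 :=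
  eq_one_of_forall_inv_mul_smul_mem hp hP hg fun x =>
    mem_fixedModulo_iff_inv_mul_smul_mem.1 (htop ▸ Subgroup.mem_top x)

end FixedModulo

section Reflections

variable {G P : Type*} [Group G] [Group P] [MulDistribMulAction G P] {t u : G} {p : ℕ}

variable (P) in
/-- An involution `t` is a reflection of the `p`-group `P` if its fixed subgroup has index `p`, like
the linear reflections of an `𝔽_p`-vector space in its hyperplanes. -/
structure IsReflection (p : ℕ) (t : G) : Prop where
  orderOf_eq_two : orderOf t = 2
  index_fixedSubgroup : (fixedSubgroup P t).index = p

theorem IsReflection.ne_one (ht : IsReflection P p t) : t ≠ 1 := fun h => by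
  simpa [h] using ht.orderOf_eq_two

theorem IsReflection.isCoatom_fixedSubgroup (hp : p.Prime) (ht : IsReflection P p t) :
    IsCoatom (fixedSubgroup P t) :=
  isCoatom_of_prime_index (ht.index_fixedSubgroup.symm ▸ hp)

theorem IsReflection.smul_mul_self_mem [FaithfulSMul G P] (hp : p.Prime) (hp2 : p ≠ 2)
    (hP : IsPGroup p P) (ht : IsReflection P p t) (x : P) : t • x * x ∈ fixedSubgroup P t := by
  have hnormal := normal_of_index_eq_prime hp hP ht.index_fixedSubgroup
  have := Fact.mk hp
  have := isCyclic_of_prime_card (α := P ⧸ fixedSubgroup P t) ht.index_fixedSubgroup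
  have hcoprime : ¬ p ∣ orderOf t := by
    rwa [ht.orderOf_eq_two, Nat.prime_dvd_prime_iff_eq hp Nat.prime_two]
  have hinvariant : t • x * x ∈ fixedModulo (fixedSubgroup P t) t := by
    rw [mem_fixedModulo, smul_mul', smul_smul_self_of_orderOf_eq_two ht.orderOf_eq_two,
      QuotientGroup.mk_mul, QuotientGroup.mk_mul, mul_comm']
  by_contra hx
  refine ht.ne_one (eq_one_of_fixedModulo_fixedSubgroup_eq_top hp hP hcoprime
    (fixedModulo_eq_top_of_not_le (ht.isCoatom_fixedSubgroup hp) (fun d hd => ?_)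
      fun hle => hx (hle hinvariant)))
  rwa [mem_fixedSubgroup.1 hd]

/-- If the product fixes `D` of index `p`, then `t` and `u` act on `P / D` either both trivially or
both by inversion, so the product acts trivially on `P / D` as well. For linear reflections this
would be immediate from the determinant. -/
theorem IsReflection.index_fixedSubgroup_mul_ne [FaithfulSMul G P] (hp : p.Prime) (hp2 : p ≠ 2)
    (hP : IsPGroup p P) (ht : IsReflection P p t) (hu : IsReflection P p u)
    (hcoprime : ¬ p ∣ orderOf (t * u)) (hne : t ≠ u) : (fixedSubgroup P (t * u)).index ≠ p := by
  intro hD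
  have hnormal := normal_of_index_eq_prime hp hP hD
  suffices htop : fixedModulo (fixedSubgroup P (t * u)) (t * u) = ⊤ by
    have hone := eq_one_of_fixedModulo_fixedSubgroup_eq_top hp hP hcoprime htop
    exact hne ((eq_inv_of_mul_eq_one_left hone).trans
      (inv_eq_self_of_orderOf_eq_two hu.orderOf_eq_two))
  have hDmax : IsCoatom (fixedSubgroup P (t * u)) := isCoatom_of_prime_index (hD.symm ▸ hp)
  have htmax := ht.isCoatom_fixedSubgroup hp
  have humax := hu.isCoatom_fixedSubgroup hp
  have hiff := fixedSubgroup_eq_fixedSubgroup_mul_iff htmax humax hDmax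
  by_cases heq : fixedSubgroup P t = fixedSubgroup P (t * u)
  · refine (Subgroup.eq_top_iff' _).2 fun x => ?_
    have htx := ht.smul_mul_self_mem hp hp2 hP (u • x)
    have hux := hu.smul_mul_self_mem hp hp2 hP x
    rw [heq, ← QuotientGroup.eq_one_iff, QuotientGroup.mk_mul] at htx
    rw [hiff.1 heq, ← QuotientGroup.eq_one_iff, QuotientGroup.mk_mul] at hux
    rw [mem_fixedModulo, mul_smul, eq_inv_of_mul_eq_one_left htx, eq_inv_of_mul_eq_one_right hux]
  · have hinv := fun (d : P) => smul_mem_fixedSubgroup_mul (x := d)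
      ht.orderOf_eq_two hu.orderOf_eq_two
    exact fixedModulo_mul_eq_top
      (fixedModulo_eq_top_of_fixedSubgroup_ne hDmax (fun d hd => (hinv d hd).1) htmax heq)
      (fixedModulo_eq_top_of_fixedSubgroup_ne hDmax (fun d hd => (hinv d hd).2) humax
        (mt hiff.2 heq))

end Reflections

section Counting

theorem add_two_le_two_mul_of_two_dvd {n p : ℕ} (heven : 2 ∣ n) (hcop : ¬ p ∣ n)
    (hle : n ≤ 2 * p + 1) : n + 2 ≤ 2 * p := by
  have hne : n ≠ 2 * p := fun h => hcop (h ▸ Nat.dvd_mul_left p 2)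
  omega

theorem mul_add_le_sq_of_two_mul_add_le {p a b : ℕ} (hp : 2 ≤ p) (hab : 2 * a + b ≤ 2 * p) :
    p * a + b ≤ p ^ 2 := by
  obtain ⟨k, rfl⟩ : ∃ k, p = a + k := Nat.exists_eq_add_of_le (by omega)
  have := Nat.mul_le_mul_right k hp
  nlinarith

theorem mul_add_le_sq_of_lt {p a b : ℕ} (ha : a < p) (hab : a + b < 2 * p) :
    p * a + b ≤ p ^ 2 := by
  obtain ⟨q, rfl⟩ : ∃ q, p = q + 1 := Nat.exists_eq_add_one.2 (Nat.zero_lt_of_lt ha)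
  have := Nat.mul_le_mul_left q (Nat.le_of_lt_succ ha)
  nlinarith

theorem two_mul_card_image_le_card_add_card_inv_eq_self {α β : Type*} [InvolutiveInv α]
    [DecidableEq α] [DecidableEq β] {f : α → β} {s : Finset α} (hs : ∀ a ∈ s, a⁻¹ ∈ s)
    (hf : ∀ a ∈ s, f a⁻¹ = f a) : 2 * #(s.image f) ≤ #s + #{a ∈ s | a⁻¹ = a} := by
  have hmaps : Set.MapsTo f ↑({a ∈ s | a⁻¹ = a} : Finset α) ↑(s.image f) := fun a ha =>
    mem_image_of_mem f (mem_filter.1 ha).1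
  rw [card_eq_sum_card_image f s, card_eq_sum_card_fiberwise hmaps, ← sum_add_distrib, mul_comm,
    ← smul_eq_mul]
  refine card_nsmul_le_sum _ _ _ fun b hb => ?_
  obtain ⟨a, ha, rfl⟩ := mem_image.1 hb
  by_cases hinv : a⁻¹ = a
  · have hfiber : 0 < #{c ∈ s | f c = f a} := card_pos.2 ⟨a, by simp [ha]⟩
    have hfixed : 0 < #{c ∈ ({c ∈ s | c⁻¹ = c} : Finset α) | f c = f a} :=
      card_pos.2 ⟨a, by simp [ha, hinv]⟩
    exact Nat.add_le_add hfiber hfixed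
  · have hpair : {a, a⁻¹} ⊆ {c ∈ s | f c = f a} := by
      simp [insert_subset_iff, ha, hs a ha, hf a ha]
    exact (card_pair (Ne.symm hinv)).symm.le.trans ((card_le_card hpair).trans le_self_add)

variable {G P : Type*} [Group G] [Fintype G] [Group P] [MulDistribMulAction G P] {p : ℕ}

open Classical in
theorem sq_lt_of_forall_stabilizer_ne_bot [FaithfulSMul G P] (hp : p.Prime) (hP : IsPGroup p P)
    (hfix : ∀ x : P, MulAction.stabilizer G x ≠ ⊥) :
    p ^ 2 < p * #(image (fixedSubgroup P) {g : G | g ≠ 1 ∧ (fixedSubgroup P g).index = p}) +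
      #(image (fixedSubgroup P) {g : G | g ≠ 1 ∧ (fixedSubgroup P g).index ≠ p}) := by
  have htop : ⊤ ∉ image (fixedSubgroup P) {g : G | g ≠ 1} := by
    simp [fixedSubgroup_eq_top_iff]
  have hcover : ∀ x : P, ∃ H ∈ image (fixedSubgroup P) {g : G | g ≠ 1}, x ∈ H := fun x => by
    obtain ⟨g, hgx, hg⟩ := (Subgroup.bot_or_exists_ne_one _).resolve_left (hfix x)
    exact ⟨_, mem_image_of_mem _ (by simpa using hg), hgx⟩
  simpa only [filter_image, filter_filter] using sq_lt_of_cover hp hP htop hcover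

open Classical in
variable (G P p) in
theorem two_mul_card_image_fixedSubgroup_le :
    2 * #(image (fixedSubgroup P) {g : G | g ≠ 1 ∧ (fixedSubgroup P g).index = p}) ≤
      #{g : G | g ≠ 1 ∧ (fixedSubgroup P g).index = p} + #{t : G | IsReflection P p t} := by
  refine (two_mul_card_image_le_card_add_card_inv_eq_self ?_ fun g _ => fixedSubgroup_inv g).trans
    (add_le_add_right (card_le_card fun g hg => ?_) _)
  · simp [fixedSubgroup_inv]
  · simp only [mem_filter, mem_univ, true_and] at hg ⊢
    obtain ⟨⟨hg1, hindex⟩, hinv⟩ := hg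
    exact ⟨orderOf_eq_prime (by rw [pow_two, mul_eq_one_iff_inv_eq, hinv]) hg1, hindex⟩

open Classical in
theorem card_isReflection_le [FaithfulSMul G P] (hp : p.Prime) (hP : IsPGroup p P)
    (hcop : ¬ p ∣ Nat.card G) :
    #{t : G | IsReflection P p t} ≤ #{g : G | g ≠ 1 ∧ (fixedSubgroup P g).index ≠ p} + 1 := by
  rcases ({t : G | IsReflection P p t} : Finset G).eq_empty_or_nonempty with hempty | ⟨t, ht⟩
  · simp [hempty]
  have htrefl : IsReflection P p t := by simpa using ht
  have hp2 : p ≠ 2 := by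
    rintro rfl
    exact hcop (htrefl.orderOf_eq_two ▸ orderOf_dvd_natCard t)
  rw [← card_erase_add_one ht, ← card_image_of_injective _ (mul_right_injective t)]
  refine Nat.add_le_add_right (card_le_card (image_subset_iff.2 fun u hu => ?_)) 1
  simp only [mem_erase, mem_filter, mem_univ, true_and] at hu ⊢
  obtain ⟨hut, hurefl⟩ := hu
  refine ⟨fun hone => hut ?_, htrefl.index_fixedSubgroup_mul_ne hp hp2 hP hurefl
    (fun hdvd => hcop (hdvd.trans (orderOf_dvd_natCard _))) hut.symm⟩
  exact (eq_inv_of_mul_eq_one_right hone).trans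
    (inv_eq_self_of_orderOf_eq_two htrefl.orderOf_eq_two)

open Classical in
variable (G P p) in
theorem card_index_eq_add_card_index_ne_add_one :
    #{g : G | g ≠ 1 ∧ (fixedSubgroup P g).index = p} +
      #{g : G | g ≠ 1 ∧ (fixedSubgroup P g).index ≠ p} + 1 = Nat.card G := by
  rw [← filter_filter, ← filter_filter, card_filter_add_card_filter_not, filter_ne',
    card_erase_add_one (mem_univ 1), card_univ, Nat.card_eq_fintype_card]

end Counting

theorem regular_orbit_of_le_two_mul_add_one_general {p : ℕ} (hp : p.Prime) {G P : Type*} [Group G]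
    [Group P] [MulDistribMulAction G P] [FaithfulSMul G P] (hP : IsPGroup p P)
    (hcop : ¬ p ∣ Nat.card G) (hle : Nat.card G ≤ 2 * p + 1) :
    ∃ x : P, MulAction.stabilizer G x = ⊥ := by
  classical
  by_contra! hfix
  have : Finite G := Nat.finite_of_card_ne_zero fun h => hcop (h ▸ dvd_zero p)
  have := Fintype.ofFinite G
  have hcover := sq_lt_of_forall_stabilizer_ne_bot hp hP hfix
  have hpairs := two_mul_card_image_fixedSubgroup_le G P p
  have hprod := card_isReflection_le hp hP hcop
  have hcard := card_index_eq_add_card_index_ne_add_one G P p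
  have hsmall := card_image_le (f := fixedSubgroup P)
    (s := {g : G | g ≠ 1 ∧ (fixedSubgroup P g).index = p})
  have hlarge := card_image_le (f := fixedSubgroup P)
    (s := {g : G | g ≠ 1 ∧ (fixedSubgroup P g).index ≠ p})
  rcases ({t : G | IsReflection P p t} : Finset G).eq_empty_or_nonempty with hempty | ⟨t, ht⟩
  · rw [hempty, card_empty] at hpairs
    exact hcover.not_ge (mul_add_le_sq_of_two_mul_add_le hp.two_le (by omega))
  · have htrefl : IsReflection P p t := by simpa using ht
    have heven : 2 ∣ Nat.card G := htrefl.orderOf_eq_two ▸ orderOf_dvd_natCard t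
    have hcard_le := add_two_le_two_mul_of_two_dvd heven hcop hle
    exact hcover.not_ge (mul_add_le_sq_of_lt (by omega) (by omega))

/-- A finite coprime automorphism group `G ≤ Aut(P)` of a finite `p`-group `P` with
`|G| ≤ 2p + 1` (equivalently `p ≥ (|G| - 1)/2`) has a regular orbit on `P`:
there is `x ∈ P` whose stabilizer in `G` is trivial. -/
theorem regular_orbit_of_le_two_mul_add_one
    (p : ℕ) (hp : p.Prime) (P : Type*) [Group P] [Finite P] (hP : IsPGroup p P)
    (G : Subgroup (MulAut P)) (hcop : ¬ p ∣ Nat.card G)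
    (hle : Nat.card G ≤ 2 * p + 1) :
    ∃ x : P, ∀ g ∈ G, g x = x → g = 1 := by
  obtain ⟨x, hx⟩ := regular_orbit_of_le_two_mul_add_one_general (G := G) hp hP hcop hle
  exact ⟨x, fun g hg hgx => congrArg Subtype.val ((Subgroup.eq_bot_iff_forall _).1 hx ⟨g, hg⟩ hgx)⟩
end

section
/- Let p be a prime, let P be a finite p-group, and let G ≤ Aut(P) be a group of automorphisms with p ∤ |G| and |G| ≤ 2p + 9. Then one of the following holds: (i) G has a regular orbit on P; (ii) G is isomorphic to the dihedral group D_{2p+2} of order 2p + 2; (iii) p = 5 and G is isomorphic to the central product D_8 ∗ C_4, i.e. the nonabelian group of order 16 with cyclic center of order 4 and exponent 4. -/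
/-!
`G` acts faithfully on the `𝔽_p`-vector space `V = P / Φ(P)`, and a regular vector of `V` lifts to
a point of `P` in a regular orbit. A commutative `p'`-group of linear maps has a regular vector: one
with a minimal stabilizer. Otherwise, if there is no regular vector, the fixed spaces of the
nontrivial elements cover `V`; since `|G| ≤ 2p + 9`, counting shows that at least `p` of them are
hyperplanes, fixed by reflections of order two. The kernel `N` of the determinant then has index
two, order at most `p + 4`, and a reflection inverts at least `p` of its elements. If `N` is
commutative, all of it is inverted, a root of the reflection is an eigenvector over a larger field,
and Frobenius forces `N` to be cyclic of order `p + 1`, so that `G` is dihedral. Otherwise `p = 5`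
and `|N| = 8`, and counting involutions gives `G ≃ D₈ ∗ C₄`.
-/

namespace RegularOrbit

open Module

universe u v

/-! ### Semisimplicity and the commutative case -/

section Semisimplicity

variable {K V : Type*} [Field K] [AddCommGroup V] [Module K V]

lemma finite_of_natCard_ne_zero {G : Type*} (hG : (Nat.card G : K) ≠ 0) : Finite G :=
  Nat.finite_of_card_ne_zero fun h => hG (by simp [h])

lemma apply_eq_self_of_apply_sub_eq_self {f : End K V} {n : ℕ} (hf : f ^ n = 1)
    (hn : (n : K) ≠ 0) {u : V} (hu : f (f u - u) = f u - u) : f u = u := by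
  have pow_apply (j : ℕ) : (f ^ j) u = u + (j : K) • (f u - u) := by
    induction j with
    | zero => simp
    | succ j ih =>
      rw [pow_succ', Module.End.mul_apply, ih, map_add, map_smul, hu, Nat.cast_succ, add_smul,
        one_smul]
      abel
  have smul_eq_zero : (n : K) • (f u - u) = 0 := by
    simpa [hf] using (pow_apply n).symm
  exact sub_eq_zero.mp ((smul_eq_zero_iff_right hn).mp smul_eq_zero)

lemma apply_eq_self_of_commute {f h : End K V} (hfh : Commute f h) {n : ℕ} (hf : f ^ n = 1)
    (hn : (n : K) ≠ 0) {u v : V} (hv : f v = v) (hsum : h (v + (f u - u)) = v + (f u - u)) :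
    h v = v := by
  have comm (x : V) : f (h x) = h (f x) := LinearMap.congr_fun hfh x
  have hdiff : h v - v = f (u - h u) - (u - h u) := by
    rw [map_add, map_sub, ← comm] at hsum
    rw [map_sub, ← sub_eq_zero, ← sub_eq_zero.mpr hsum]
    abel
  have hfixed : f (h v - v) = h v - v := by rw [map_sub, comm, hv]
  rw [hdiff] at hfixed
  rw [← sub_eq_zero, hdiff, apply_eq_self_of_apply_sub_eq_self hf hn hfixed, sub_self]

end Semisimplicity

section Representation

variable {K V G : Type*} [Field K] [AddCommGroup V] [Module K V] [Group G]
  {ρ : Representation K G V}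

/-- A vector with trivial stabilizer, that is, a regular orbit of the linear action `ρ`. -/
def HasRegularVector (ρ : Representation K G V) : Prop :=
  ∃ v : V, ∀ g, ρ g v = v → g = 1

lemma exists_ne_one_of_not_hasRegularVector (h : ¬ HasRegularVector ρ) (v : V) :
    ∃ g ≠ 1, ρ g v = v := by
  by_contra! hv
  exact h ⟨v, fun g hg => by_contra fun hg1 => hv g hg1 hg⟩

lemma eq_one_of_forall_apply_eq_self (hinj : Function.Injective ρ) {g : G}
    (h : ∀ v, ρ g v = v) : g = 1 :=
  hinj <| by rw [map_one]; exact LinearMap.ext h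

lemma eq_one_of_apply_sub_eq_self (hinj : Function.Injective ρ) (hG : (Nat.card G : K) ≠ 0)
    {g : G} (h : ∀ u, ρ g (ρ g u - u) = ρ g u - u) : g = 1 :=
  eq_one_of_forall_apply_eq_self hinj fun u =>
    apply_eq_self_of_apply_sub_eq_self (by rw [← map_pow, pow_card_eq_one', map_one]) hG (h u)

theorem hasRegularVector_of_isMulCommutative [IsMulCommutative G]
    (hinj : Function.Injective ρ) (hG : (Nat.card G : K) ≠ 0) : HasRegularVector ρ := by
  have := finite_of_natCard_ne_zero hG
  have pow_eq (g : G) : ρ g ^ Nat.card G = 1 := by rw [← map_pow, pow_card_eq_one', map_one]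
  let stab (v : V) : Set G := {g | ρ g v = v}
  let v := Function.argmin fun v => (stab v).ncard
  refine ⟨v, fun g hg => ?_⟩
  -- Otherwise translating `v` by a vector of the image of `g - 1` shrinks its stabilizer.
  by_contra hg1
  obtain ⟨u, hu⟩ : ∃ u, ρ g u ≠ u := by
    by_contra! h
    exact hg1 (eq_one_of_forall_apply_eq_self hinj h)
  have hle (h : G) (hh : h ∈ stab (v + (ρ g u - u))) : h ∈ stab v :=
    have hcomm : Commute (ρ g) (ρ h) := by rw [Commute, SemiconjBy, ← map_mul, mul_comm', map_mul]
    apply_eq_self_of_commute hcomm (pow_eq g) hG hg hh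
  have hg_notMem : g ∉ stab (v + (ρ g u - u)) := fun h => hu <|
    apply_eq_self_of_apply_sub_eq_self (pow_eq g) hG <| by
      change ρ g (v + (ρ g u - u)) = _ at h
      rwa [map_add, hg, add_right_inj] at h
  have hlt : (stab (v + (ρ g u - u))).ncard < (stab v).ncard :=
    Set.ncard_lt_ncard ⟨hle, fun h => hg_notMem (h hg)⟩ (Set.toFinite _)
  exact Function.not_lt_argmin (fun v => (stab v).ncard) _ hlt

/-! ### Reflections -/

/-- A nontrivial element whose fixed space has codimension at most one. For a faithful action the
codimension is exactly one; diagonalizability is not part of the definition. -/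
def IsReflection (ρ : Representation K G V) (g : G) : Prop :=
  g ≠ 1 ∧ finrank K (V ⧸ (ρ g).fixedSubmodule) ≤ 1

lemma fixedSubmodule_inv (ρ : Representation K G V) (g : G) :
    (ρ g⁻¹).fixedSubmodule = (ρ g).fixedSubmodule := by
  ext v
  rw [LinearMap.mem_fixedSubmodule_iff, LinearMap.mem_fixedSubmodule_iff,
    Representation.inv_apply_eq_iff, eq_comm]

lemma inf_fixedSubmodule_le_mul (ρ : Representation K G V) (g h : G) :
    (ρ g).fixedSubmodule ⊓ (ρ h).fixedSubmodule ≤ (ρ (g * h)).fixedSubmodule := by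
  rw [map_mul]
  exact LinearMap.fixedSubmodule_inf_fixedSubmodule_le_comp _ _

lemma fixedSubmodule_le_pow (ρ : Representation K G V) (g : G) (n : ℕ) :
    (ρ g).fixedSubmodule ≤ (ρ (g ^ n)).fixedSubmodule := by
  induction n with
  | zero => intro v _; simp
  | succ n ih =>
    rw [pow_succ]
    exact (le_inf ih le_rfl).trans (inf_fixedSubmodule_le_mul ρ _ _)

lemma fixedSubmodule_conj (ρ : Representation K G V) (g h : G) :
    (ρ (h * g * h⁻¹)).fixedSubmodule = (ρ g).fixedSubmodule.comap (ρ h⁻¹) := by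
  ext v
  simp only [Submodule.mem_comap, LinearMap.mem_fixedSubmodule_iff, map_mul,
    Module.End.mul_apply]
  rw [eq_comm (b := ρ h⁻¹ v), Representation.inv_apply_eq_iff, eq_comm]

lemma IsReflection.of_fixedSubmodule_le [FiniteDimensional K V] {r g : G} (hr : IsReflection ρ r)
    (hg : g ≠ 1) (hle : (ρ r).fixedSubmodule ≤ (ρ g).fixedSubmodule) : IsReflection ρ g :=
  ⟨hg, (LinearMap.finrank_le_finrank_of_surjective
    (Submodule.factor_surjective hle)).trans hr.2⟩

lemma IsReflection.inv [FiniteDimensional K V] {r : G} (hr : IsReflection ρ r) :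
    IsReflection ρ r⁻¹ :=
  hr.of_fixedSubmodule_le (inv_ne_one.mpr hr.1) (fixedSubmodule_inv ρ r).ge

lemma fixedSubmodule_ne_top (hinj : Function.Injective ρ) {g : G} (hg : g ≠ 1) :
    (ρ g).fixedSubmodule ≠ ⊤ := fun htop =>
  hg <| eq_one_of_forall_apply_eq_self hinj fun _ =>
    LinearMap.mem_fixedSubmodule_iff.mp (htop ▸ Submodule.mem_top)

lemma IsReflection.isCoatom_fixedSubmodule [FiniteDimensional K V] (hinj : Function.Injective ρ)
    {r : G} (hr : IsReflection ρ r) : IsCoatom (ρ r).fixedSubmodule := by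
  rw [← isSimpleModule_iff_isCoatom, isSimpleModule_iff_finrank_eq_one]
  refine hr.2.antisymm (Nat.one_le_iff_ne_zero.mpr fun h => ?_)
  exact fixedSubmodule_ne_top hinj hr.1 (Submodule.Quotient.subsingleton_iff.mp
    (finrank_zero_iff.mp h))

lemma IsReflection.fixedSubmodule_eq [FiniteDimensional K V] (hinj : Function.Injective ρ)
    {r g : G} (hr : IsReflection ρ r) (hg : g ≠ 1)
    (hle : (ρ r).fixedSubmodule ≤ (ρ g).fixedSubmodule) :
    (ρ g).fixedSubmodule = (ρ r).fixedSubmodule :=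
  ((hr.isCoatom_fixedSubmodule hinj).le_iff_eq (fixedSubmodule_ne_top hinj hg)).mp hle

lemma IsReflection.conj {r : G} (hr : IsReflection ρ r) (h : G) :
    IsReflection ρ (h * r * h⁻¹) := by
  refine ⟨fun h1 => hr.1 (conj_eq_one_iff.mp h1), ?_⟩
  let e : V ≃ₗ[K] V :=
    { ρ h⁻¹ with invFun := ρ h, left_inv := ρ.self_inv_apply h, right_inv := ρ.inv_self_apply h }
  have hmap : (ρ (h * r * h⁻¹)).fixedSubmodule.map e.toLinearMap = (ρ r).fixedSubmodule := by
    rw [fixedSubmodule_conj]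
    exact Submodule.map_comap_eq_of_surjective e.surjective _
  exact (Submodule.Quotient.equiv _ _ e hmap).finrank_eq.trans_le hr.2

lemma IsReflection.exists_transvection [FiniteDimensional K V] {r : G} (hr : IsReflection ρ r) :
    ∃ (f : Dual K V) (a : V), ρ r = LinearMap.transvection f a :=
  let e : V ≃ₗ[K] V :=
    { ρ r with invFun := ρ r⁻¹, left_inv := ρ.inv_self_apply r, right_inv := ρ.self_inv_apply r }
  LinearEquiv.mem_dilatransvections_iff_finrank_quotient (e := e).mpr hr.2

lemma IsReflection.det_ne_one [FiniteDimensional K V] (hinj : Function.Injective ρ)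
    (hG : (Nat.card G : K) ≠ 0) {r : G} (hr : IsReflection ρ r) : LinearMap.det (ρ r) ≠ 1 := by
  obtain ⟨f, a, hfa⟩ := hr.exists_transvection
  intro hdet
  have hf : f a = 0 := by simpa [hfa] using hdet
  exact hr.1 <| eq_one_of_apply_sub_eq_self hinj hG fun u => by
    simp [hfa, LinearMap.transvection.apply, hf]

lemma IsReflection.eq_of_det_eq [FiniteDimensional K V] (hinj : Function.Injective ρ)
    (hG : (Nat.card G : K) ≠ 0) {r s : G} (hr : IsReflection ρ r)
    (hfix : (ρ r).fixedSubmodule = (ρ s).fixedSubmodule)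
    (hdet : LinearMap.det (ρ r) = LinearMap.det (ρ s)) : r = s := by
  by_contra hne
  have hquot : IsReflection ρ (r⁻¹ * s) := by
    refine hr.of_fixedSubmodule_le (fun h => hne (inv_mul_eq_one.mp h)) ?_
    refine le_trans ?_ (inf_fixedSubmodule_le_mul ρ _ _)
    rw [fixedSubmodule_inv, ← hfix, inf_idem]
  apply hquot.det_ne_one hinj hG
  rw [map_mul, map_mul, ← hdet, ← map_mul, ← map_mul, inv_mul_cancel, map_one, map_one]

end Representation

/-! ### Covering a vector space by fixed spaces -/

section Covering

lemma sq_le_of_forall_exists_mem {ι α : Type*} {A : Set α} (hA : A.Nonempty) [Finite α]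
    {S T : Set ι} (hS : S.Finite) (hT : T.Finite) (B : ι → Set α)
    (hcover : ∀ x ∈ A, ∃ i ∈ S ∪ T, x ∈ B i) {q : ℕ}
    (hBS : ∀ i ∈ S, (A ∩ B i).ncard * q ≤ A.ncard)
    (hBT : ∀ i ∈ T, (A ∩ B i).ncard * q ^ 2 ≤ A.ncard) :
    q ^ 2 ≤ S.ncard * q + T.ncard := by
  classical
  rw [Set.ncard_eq_toFinset_card S hS, Set.ncard_eq_toFinset_card T hT]
  have hsub : A ⊆ ⋃ i ∈ hS.toFinset ∪ hT.toFinset, A ∩ B i := fun x hx => by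
    obtain ⟨i, hi, hxi⟩ := hcover x hx
    exact Set.mem_biUnion (by simpa using hi) ⟨hx, hxi⟩
  have hsum : A.ncard ≤
      ∑ i ∈ hS.toFinset, (A ∩ B i).ncard + ∑ i ∈ hT.toFinset, (A ∩ B i).ncard :=
    calc A.ncard ≤ ∑ i ∈ hS.toFinset ∪ hT.toFinset, (A ∩ B i).ncard :=
          (Set.ncard_le_ncard hsub (Set.toFinite _)).trans (Finset.set_ncard_biUnion_le _ _)
      _ ≤ _ := by
        have := Finset.sum_union_inter (s₁ := hS.toFinset) (s₂ := hT.toFinset)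
          (f := fun i => (A ∩ B i).ncard)
        lia
  have hsumS : (∑ i ∈ hS.toFinset, (A ∩ B i).ncard) * q ≤ hS.toFinset.card * A.ncard := by
    rw [Finset.sum_mul]
    exact Finset.sum_le_card_nsmul _ _ _ fun i hi => hBS i (hS.mem_toFinset.mp hi)
  have hsumT : (∑ i ∈ hT.toFinset, (A ∩ B i).ncard) * q ^ 2 ≤ hT.toFinset.card * A.ncard := by
    rw [Finset.sum_mul]
    exact Finset.sum_le_card_nsmul _ _ _ fun i hi => hBT i (hT.mem_toFinset.mp hi)
  have hA0 : 0 < A.ncard := hA.ncard_pos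
  refine Nat.le_of_mul_le_mul_left ?_ hA0
  calc A.ncard * q ^ 2
      ≤ (∑ i ∈ hS.toFinset, (A ∩ B i).ncard) * q * q
          + (∑ i ∈ hT.toFinset, (A ∩ B i).ncard) * q ^ 2 := by
        rw [mul_assoc, ← sq, ← add_mul]
        exact Nat.mul_le_mul_right _ hsum
    _ ≤ hS.toFinset.card * A.ncard * q + hT.toFinset.card * A.ncard :=
        Nat.add_le_add (Nat.mul_le_mul_right _ hsumS) hsumT
    _ = A.ncard * (hS.toFinset.card * q + hT.toFinset.card) := by ring

variable {K V : Type*} [Field K] [AddCommGroup V] [Module K V]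

lemma card_setOf_dual_eq_one_mul_card {f : Dual K V} (hf : f ≠ 0) :
    {v | f v = 1}.ncard * Nat.card K = Nat.card V := by
  obtain ⟨u, hu⟩ : ∃ u, f u = 1 := LinearMap.surjective hf 1
  let e : {v | f v = 1} × K ≃ V :=
    { toFun := fun x => x.1 + x.2 • u
      invFun := fun v => (⟨v - (f v - 1) • u, by simp [hu]⟩, f v - 1)
      left_inv := fun ⟨⟨v, hv⟩, c⟩ => by
        replace hv : f v = 1 := hv
        ext <;> simp [hu, hv]
      right_inv := fun v => by simp }
  rw [← Nat.card_coe_set_eq, ← Nat.card_prod, Nat.card_congr e]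

lemma card_setOf_dual_eq_one_inter_mul_card_le [Finite V] (U : Submodule K V) (f : Dual K V) :
    ({v | f v = 1} ∩ U).ncard * Nat.card K ≤ Nat.card U := by
  by_cases hf : f.domRestrict U = 0
  · have hempty : {v | f v = 1} ∩ U = ∅ := by
      ext v
      simp only [Set.mem_inter_iff, Set.mem_ofPred_eq, SetLike.mem_coe, Set.mem_empty_iff_false,
        iff_false, not_and]
      intro hv hU
      have := LinearMap.congr_fun hf ⟨v, hU⟩
      simp [hv] at this
    simp [hempty]
  · rw [← card_setOf_dual_eq_one_mul_card hf]
    have himage : {v | f v = 1} ∩ U = Subtype.val '' {u : U | f.domRestrict U u = 1} := by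
      ext v
      simp [and_comm]
    rw [himage, Set.ncard_image_of_injective _ Subtype.val_injective]

lemma card_submodule_mul_pow_le [Finite K] [Finite V] {U : Submodule K V} {n : ℕ}
    (hn : n ≤ finrank K (V ⧸ U)) : Nat.card U * Nat.card K ^ n ≤ Nat.card V := by
  rw [Submodule.card_eq_card_quotient_mul_card U,
    Module.natCard_eq_pow_finrank (K := K) (V := V ⧸ U)]
  exact Nat.mul_le_mul_left _ (Nat.pow_le_pow_right (Nat.card_pos (α := K)) hn)

variable {G : Type*} [Group G] {ρ : Representation K G V}

/-- The fixed spaces of the nontrivial elements; they cover `V` when there is no regular vector. -/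
def fixedSpaces (ρ : Representation K G V) : Set (Submodule K V) :=
  (fun g => (ρ g).fixedSubmodule) '' {g | g ≠ 1}

/-- The fixed spaces of the reflections. -/
def reflectionHyperplanes (ρ : Representation K G V) : Set (Submodule K V) :=
  (fun g => (ρ g).fixedSubmodule) '' {g | IsReflection ρ g}

lemma reflectionHyperplanes_subset_fixedSpaces (ρ : Representation K G V) :
    reflectionHyperplanes ρ ⊆ fixedSpaces ρ :=
  Set.image_mono fun _ hg => hg.1

lemma card_mul_card_le_of_mem_fixedSpaces [Finite K] [Finite V] (hinj : Function.Injective ρ)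
    {U : Submodule K V} (hU : U ∈ fixedSpaces ρ) : Nat.card U * Nat.card K ≤ Nat.card V := by
  obtain ⟨g, hg, rfl⟩ := hU
  rw [← pow_one (Nat.card K)]
  exact card_submodule_mul_pow_le (Nat.one_le_iff_ne_zero.mpr fun h =>
    fixedSubmodule_ne_top hinj hg (Submodule.Quotient.subsingleton_iff.mp (finrank_zero_iff.mp h)))

lemma card_mul_sq_card_le_of_notMem_reflectionHyperplanes [Finite K] [Finite V]
    {U : Submodule K V} (hU : U ∈ fixedSpaces ρ) (hU' : U ∉ reflectionHyperplanes ρ) :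
    Nat.card U * Nat.card K ^ 2 ≤ Nat.card V := by
  obtain ⟨g, hg, rfl⟩ := hU
  exact card_submodule_mul_pow_le (Nat.lt_of_not_le fun h => hU' ⟨g, ⟨hg, h⟩, rfl⟩)

lemma exists_mem_fixedSpaces (hreg : ¬ HasRegularVector ρ) (v : V) : ∃ U ∈ fixedSpaces ρ, v ∈ U :=
  let ⟨g, hg, hgv⟩ := exists_ne_one_of_not_hasRegularVector hreg v
  ⟨_, ⟨g, hg, rfl⟩, hgv⟩

theorem sq_card_le_ncard_fixedSpaces [Finite K] [Finite V] (hreg : ¬ HasRegularVector ρ)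
    (hrefl : reflectionHyperplanes ρ = ∅) : Nat.card K ^ 2 ≤ (fixedSpaces ρ).ncard := by
  simpa using sq_le_of_forall_exists_mem (A := (Set.univ : Set V)) (q := Nat.card K)
    Set.univ_nonempty Set.finite_empty (Set.toFinite (fixedSpaces ρ)) (fun U => (U : Set V))
    (fun v _ => by simpa using exists_mem_fixedSpaces hreg v) (by simp)
    (fun U hU => by
      rw [Set.univ_inter, Set.ncard_univ]
      exact card_mul_sq_card_le_of_notMem_reflectionHyperplanes hU (by simp [hrefl]))

lemma IsReflection.exists_dual [FiniteDimensional K V] (hinj : Function.Injective ρ) {r : G}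
    (hr : IsReflection ρ r) :
    ∃ f : Dual K V, f ≠ 0 ∧ ∀ v, f v = 1 → v ∉ (ρ r).fixedSubmodule := by
  obtain ⟨f, a, hfa⟩ := hr.exists_transvection
  have ne_zero (h : ∀ v, f v • a = 0) : False :=
    hr.1 (eq_one_of_forall_apply_eq_self hinj fun v => by
      rw [hfa, LinearMap.transvection.apply, h, add_zero])
  refine ⟨f, fun hf => ne_zero (by simp [hf]), fun v hv hmem => ne_zero fun w => ?_⟩
  have ha : a = 0 := by simpa [hfa, LinearMap.transvection.apply, hv] using hmem
  simp [ha]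

-- An affine hyperplane parallel to one reflection hyperplane avoids it, which saves one term.
theorem sq_card_add_card_le [Finite K] [Finite V] (hinj : Function.Injective ρ)
    (hreg : ¬ HasRegularVector ρ) (hrefl : (reflectionHyperplanes ρ).Nonempty) :
    Nat.card K ^ 2 + Nat.card K + (reflectionHyperplanes ρ).ncard ≤
      (reflectionHyperplanes ρ).ncard * Nat.card K + (fixedSpaces ρ).ncard := by
  obtain ⟨_, r, hr, rfl⟩ := hrefl
  have hH : (ρ r).fixedSubmodule ∈ reflectionHyperplanes ρ := ⟨r, hr, rfl⟩
  obtain ⟨f, hf, hfr⟩ := hr.exists_dual hinj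
  have hcardA := card_setOf_dual_eq_one_mul_card hf
  have hK : 0 < Nat.card K := Nat.card_pos
  have hcover : ∀ v ∈ {v | f v = 1}, ∃ U ∈ (reflectionHyperplanes ρ \ {(ρ r).fixedSubmodule}) ∪
      (fixedSpaces ρ \ reflectionHyperplanes ρ), v ∈ (U : Set V) := by
    intro v hv
    obtain ⟨U, hU, hvU⟩ := exists_mem_fixedSpaces hreg v
    have hne : U ≠ (ρ r).fixedSubmodule := by
      rintro rfl
      exact hfr v hv hvU
    refine ⟨U, ?_, hvU⟩
    by_cases hUH : U ∈ reflectionHyperplanes ρ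
    · exact Or.inl ⟨hUH, hne⟩
    · exact Or.inr ⟨hU, hUH⟩
  have hcount := sq_le_of_forall_exists_mem (LinearMap.surjective hf 1) (Set.toFinite _)
    (Set.toFinite _) (fun U : Submodule K V => (U : Set V)) hcover (q := Nat.card K)
    (fun U hU => by
      have hUV := card_mul_card_le_of_mem_fixedSpaces hinj
        (reflectionHyperplanes_subset_fixedSpaces ρ hU.1)
      rw [← hcardA] at hUV
      exact (card_setOf_dual_eq_one_inter_mul_card_le U f).trans
        (Nat.le_of_mul_le_mul_right hUV hK))
    (fun U hU => by
      have hUV := card_mul_sq_card_le_of_notMem_reflectionHyperplanes hU.1 hU.2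
      rw [← hcardA, sq, ← mul_assoc] at hUV
      rw [sq, ← mul_assoc]
      exact (Nat.mul_le_mul_right _ (card_setOf_dual_eq_one_inter_mul_card_le U f)).trans
        (Nat.le_of_mul_le_mul_right hUV hK))
  have hS := Set.ncard_sdiff_singleton_add_one hH
  have hT := Set.ncard_sdiff_add_ncard_of_subset (reflectionHyperplanes_subset_fixedSpaces ρ)
  rw [← hS, ← hT, ← hS]
  linarith

theorem two_mul_ncard_fixedSpaces_add_two_le [Finite G] (ρ : Representation K G V) :
    2 * (fixedSpaces ρ).ncard + 2 ≤ Nat.card G + {g : G | g = g⁻¹}.ncard := by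
  let I : Set G := {g | g = g⁻¹}
  -- The remaining elements come in pairs `{g, g⁻¹}` with a common fixed space.
  have hIc : 2 * ((fun g => (ρ g).fixedSubmodule) '' Iᶜ).ncard ≤ Iᶜ.ncard := by
    classical
    obtain ⟨s, hs⟩ := (Set.toFinite Iᶜ).exists_finset_coe
    rw [← hs, ← Finset.coe_image, Set.ncard_coe_finset, Set.ncard_coe_finset]
    refine Finset.mul_card_image_le_card _ _ fun U hU => ?_
    obtain ⟨g, hg, rfl⟩ := Finset.mem_image.mp hU
    have mem_s (x : G) : x ∈ s ↔ x ≠ x⁻¹ := by rw [← Finset.mem_coe, hs]; rfl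
    rw [← Finset.card_pair ((mem_s g).mp hg)]
    refine Finset.card_le_card ?_
    simp [Finset.insert_subset_iff, hg, (mem_s g⁻¹), fixedSubmodule_inv, ((mem_s g).mp hg).symm]
  have hI : ((fun g => (ρ g).fixedSubmodule) '' (I \ {1})).ncard + 1 ≤ I.ncard := by
    rw [← Set.ncard_sdiff_singleton_add_one (s := I) (a := 1) (by simp [I])]
    exact Nat.succ_le_succ (Set.ncard_image_le (Set.toFinite _))
  have hsub : fixedSpaces ρ ⊆ ((fun g => (ρ g).fixedSubmodule) '' (I \ {1})) ∪
      ((fun g => (ρ g).fixedSubmodule) '' Iᶜ) := by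
    rw [← Set.image_union]
    exact Set.image_mono fun g hg => by by_cases h : g ∈ I <;> simp_all
  have hcard := (Set.ncard_le_ncard hsub (Set.toFinite _)).trans (Set.ncard_union_le _ _)
  have := Set.ncard_add_ncard_compl I
  lia

theorem ncard_fixedSpaces_add_card_le [Finite G] (ρ : Representation K G V) (H : Subgroup G)
    (hH : (Nat.card H).Prime) : (fixedSpaces ρ).ncard + Nat.card H ≤ Nat.card G + 1 := by
  let F (g : G) : Submodule K V := (ρ g).fixedSubmodule
  have hle (a : G) (ha : a ∈ H) (ha1 : a ≠ 1) (b : G) (hb : b ∈ H) : F a ≤ F b := by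
    have : Fact (Nat.card H).Prime := ⟨hH⟩
    have htop : Subgroup.zpowers (⟨a, ha⟩ : H) = ⊤ :=
      zpowers_eq_top_of_prime_card rfl fun h => ha1 (congrArg Subtype.val h)
    obtain ⟨n, hn⟩ := mem_powers_iff_mem_zpowers.mpr (htop ▸ Subgroup.mem_top (⟨b, hb⟩ : H))
    have hab : a ^ n = b := congrArg Subtype.val hn
    exact hab ▸ fixedSubmodule_le_pow ρ a n
  have hone : (F '' ((H : Set G) \ {1})).ncard ≤ 1 := by
    rw [Set.ncard_le_one (Set.toFinite _)]
    rintro _ ⟨a, ⟨ha, ha1⟩, rfl⟩ _ ⟨b, ⟨hb, hb1⟩, rfl⟩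
    exact le_antisymm (hle a ha ha1 b hb) (hle b hb hb1 a ha)
  have hsub : fixedSpaces ρ ⊆ F '' ((H : Set G) \ {1}) ∪ F '' (H : Set G)ᶜ := by
    rw [← Set.image_union]
    exact Set.image_mono fun g hg => by by_cases h : g ∈ H <;> simp_all
  have hcard := (Set.ncard_le_ncard hsub (Set.toFinite _)).trans (Set.ncard_union_le _ _)
  have hcompl : (F '' (H : Set G)ᶜ).ncard ≤ (H : Set G)ᶜ.ncard :=
    Set.ncard_image_le (Set.toFinite _)
  have hsum := Set.ncard_add_ncard_compl (H : Set G)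
  rw [← Nat.card_coe_set_eq (H : Set G)] at hsum
  change Nat.card H + _ = _ at hsum
  lia

end Covering

/-! ### Recognizing commutative and dihedral groups -/

section GroupTheory

variable {G : Type*} [Group G]

lemma eq_top_of_card_lt_two_mul_card [Finite G] {H : Subgroup G}
    (h : Nat.card G < 2 * Nat.card H) : H = ⊤ := by
  by_contra hH
  have := H.index_mul_card
  have := Nat.mul_le_mul_right (Nat.card H) (Subgroup.one_lt_index_of_ne_top hH)
  lia

lemma minFac_mul_card_le_of_ne_top [Finite G] {H : Subgroup G} (hH : H ≠ ⊤) :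
    (Nat.card G).minFac * Nat.card H ≤ Nat.card G := by
  conv_rhs => rw [← H.index_mul_card]
  exact Nat.mul_le_mul_right _
    (Nat.minFac_le_of_dvd (Subgroup.one_lt_index_of_ne_top hH) H.index_dvd_card)

lemma isMulCommutative_of_center_eq_top (h : Subgroup.center G = ⊤) : IsMulCommutative G :=
  .of_comm fun a b => Subgroup.mem_center_iff.mp (h ▸ Subgroup.mem_top b) a

lemma mem_center_of_centralizer_eq_top {x : G} (h : Subgroup.centralizer {x} = ⊤) :
    x ∈ Subgroup.center G :=
  Subgroup.mem_center_iff.mpr fun g =>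
    Subgroup.mem_centralizer_singleton_iff.mp (h ▸ Subgroup.mem_top g)

lemma isMulCommutative_of_prime_card (h : (Nat.card G).Prime) : IsMulCommutative G := by
  have : Fact (Nat.card G).Prime := ⟨h⟩
  have := isCyclic_of_prime_card (α := G) rfl
  exact IsCyclic.isMulCommutative

lemma isMulCommutative_of_prime_index_center (h : (Subgroup.center G).index.Prime) :
    IsMulCommutative G := by
  have : Fact (Subgroup.center G).index.Prime := ⟨h⟩
  have : IsCyclic (G ⧸ Subgroup.center G) :=
    isCyclic_of_prime_card (p := (Subgroup.center G).index) rfl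
  exact isMulCommutative_of_isCyclic_quotient_center_self G

lemma isMulCommutative_of_card_eq_two_mul_prime [Finite G] {q : ℕ} (hq : q.Prime)
    (hG : Nat.card G = 2 * q) {x : G} (hx : Even (orderOf x))
    (hC : 2 < Nat.card (Subgroup.centralizer {x})) : IsMulCommutative G := by
  have even_card {H : Subgroup G} (hxH : x ∈ H) : 2 ∣ Nat.card H :=
    hx.two_dvd.trans (Subgroup.orderOf_dvd_natCard H hxH)
  have index_dvd {H : Subgroup G} (hH : 2 ∣ Nat.card H) : H.index ∣ q := by
    obtain ⟨k, hk⟩ := hH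
    have := H.index_mul_card
    rw [hG, hk, mul_left_comm] at this
    exact ⟨k, (Nat.eq_of_mul_eq_mul_left two_pos this).symm⟩
  have hxC : x ∈ Subgroup.center G := by
    apply mem_center_of_centralizer_eq_top
    have hdvd := index_dvd (even_card (Subgroup.mem_centralizer_singleton_iff.mpr rfl))
    refine Subgroup.index_eq_one.mp (((Nat.dvd_prime hq).mp hdvd).resolve_right fun h => ?_)
    have hmul := (Subgroup.centralizer {x}).index_mul_card
    rw [h, hG, mul_comm 2] at hmul
    exact hC.ne' (Nat.eq_of_mul_eq_mul_left hq.pos hmul)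
  rcases (Nat.dvd_prime hq).mp (index_dvd (even_card hxC)) with h | h
  · exact isMulCommutative_of_center_eq_top (Subgroup.index_eq_one.mp h)
  · exact isMulCommutative_of_prime_index_center (h ▸ hq)

-- If `y` and `x⁻¹ * y` are both inverted by `σ`, then `y` commutes with `x`.
lemma two_mul_ncard_inverted_le [Finite G] (σ : G →* G) {x : G} (hx : σ x = x⁻¹) :
    2 * {y | σ y = y⁻¹}.ncard ≤ Nat.card G + Nat.card (Subgroup.centralizer {x}) := by
  let I : Set G := {y | σ y = y⁻¹}
  have hinter : (I ∩ (x⁻¹ * ·) '' I).ncard ≤ Nat.card (Subgroup.centralizer {x}) := by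
    rw [← SetLike.coe_sort_coe, Nat.card_coe_set_eq]
    refine Set.ncard_le_ncard ?_ (Set.toFinite _)
    rintro _ ⟨hy, z, hz, rfl⟩
    replace hy : σ (x⁻¹ * z) = (x⁻¹ * z)⁻¹ := hy
    replace hz : σ z = z⁻¹ := hz
    have hcomm : x * z⁻¹ = z⁻¹ * x := by simpa [hx, hz] using hy
    rw [SetLike.mem_coe, Subgroup.mem_centralizer_singleton_iff]
    have hxz : Commute x z := by simpa using (show Commute x z⁻¹ from hcomm).inv_right
    exact ((Commute.refl x).inv_left.mul_left hxz.symm).eq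
  have hunion := Set.ncard_union_add_ncard_inter I ((x⁻¹ * ·) '' I)
  rw [Set.ncard_image_of_injective _ (mul_right_injective _)] at hunion
  have := Set.ncard_le_card (I ∪ (x⁻¹ * ·) '' I)
  change 2 * I.ncard ≤ _
  lia

theorem isMulCommutative_of_minFac_lt_ncard_inverted [Finite G] (σ : G →* G)
    (h : ((Nat.card G).minFac + 1) * Nat.card G <
      2 * (Nat.card G).minFac * {x | σ x = x⁻¹}.ncard) : IsMulCommutative G := by
  have hcentral : {x | σ x = x⁻¹} ⊆ Subgroup.center G := fun x hx => by
    apply mem_center_of_centralizer_eq_top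
    by_contra hC
    have hcount := Nat.mul_le_mul_left (Nat.card G).minFac (two_mul_ncard_inverted_le σ hx)
    have := minFac_mul_card_le_of_ne_top hC
    linarith
  have hle := Set.ncard_le_ncard hcentral (Set.toFinite _)
  rw [← Nat.card_coe_set_eq (Subgroup.center G : Set G), SetLike.coe_sort_coe] at hle
  apply isMulCommutative_of_center_eq_top
  by_contra hZ
  have hcard := minFac_mul_card_le_of_ne_top hZ
  have hmul := Nat.mul_le_mul_left (2 * (Nat.card G).minFac) hle
  have hmin : 1 ≤ (Nat.card G).minFac := Nat.minFac_pos _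
  have := Nat.mul_le_mul_right (Nat.card G) hmin
  linarith

theorem isMulCommutative_of_three_mul_card_lt [Finite G] (σ : G →* G)
    (h : 3 * Nat.card G < 4 * {x | σ x = x⁻¹}.ncard) : IsMulCommutative G := by
  rcases subsingleton_or_nontrivial G with hG | hG
  · exact .of_comm fun a b => Subsingleton.elim _ _
  · apply isMulCommutative_of_minFac_lt_ncard_inverted σ
    have hmin : 2 ≤ (Nat.card G).minFac := (Nat.minFac_prime Finite.one_lt_card.ne').two_le
    nlinarith

lemma isMulCommutative_of_card_eq_two_mul_prime_of_inverted [Finite G] {q : ℕ} (hq : q.Prime)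
    (hG : Nat.card G = 2 * q) (σ : G →* G) (h : q + 2 ≤ {x | σ x = x⁻¹}.ncard) :
    IsMulCommutative G := by
  have : Fact q.Prime := ⟨hq⟩
  obtain ⟨c, hc⟩ := exists_prime_orderOf_dvd_card' (G := G) q ⟨2, by rw [hG, mul_comm]⟩
  have hcard : Nat.card (Subgroup.zpowers c) = q := by rw [Nat.card_zpowers, hc]
  obtain ⟨x, hx, hxc⟩ : ∃ x, σ x = x⁻¹ ∧ x ∉ Subgroup.zpowers c := by
    by_contra! hsub
    have := Set.ncard_le_ncard (s := {x | σ x = x⁻¹}) (t := Subgroup.zpowers c) hsub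
      (Set.toFinite _)
    rw [← Nat.card_coe_set_eq (Subgroup.zpowers c : Set G), SetLike.coe_sort_coe, hcard] at this
    lia
  have hindex : (Subgroup.zpowers c).index = 2 := by
    have := (Subgroup.zpowers c).index_mul_card
    rw [hcard, hG] at this
    exact Nat.eq_of_mul_eq_mul_right hq.pos this
  have hx_even : Even (orderOf x) := by
    by_contra hodd
    obtain ⟨k, hk⟩ := Nat.not_even_iff_odd.mp hodd
    apply hxc
    have hxx : x = (x ^ 2) ^ (k + 1) := by
      rw [← pow_mul, show 2 * (k + 1) = orderOf x + 1 by lia, pow_succ, pow_orderOf_eq_one,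
        one_mul]
    rw [hxx]
    exact pow_mem (Subgroup.sq_mem_of_index_two hindex x) _
  have := two_mul_ncard_inverted_le σ hx
  exact isMulCommutative_of_card_eq_two_mul_prime hq hG hx_even (by lia)

lemma ncard_setOf_eq_inv_add_card_le [Finite G] {H : Subgroup G} (hH : Odd (Nat.card H)) :
    {x : G | x = x⁻¹}.ncard + Nat.card H ≤ Nat.card G + 1 := by
  have hinter : {x : G | x = x⁻¹} ∩ H ⊆ {1} := by
    rintro x ⟨hx, hxH⟩
    have hsq : x ^ 2 = 1 := by rw [sq, ← eq_inv_iff_mul_eq_one]; exact hx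
    have hone : x ^ Nat.gcd 2 (Nat.card H) = 1 :=
      pow_gcd_eq_one.mpr
        ⟨hsq, orderOf_dvd_iff_pow_eq_one.mp (Subgroup.orderOf_dvd_natCard H hxH)⟩
    simpa [Nat.Coprime.gcd_eq_one (Nat.coprime_two_left.mpr hH)] using hone
  have hunion := Set.ncard_union_add_ncard_inter {x : G | x = x⁻¹} H
  rw [← Nat.card_coe_set_eq (H : Set G), SetLike.coe_sort_coe] at hunion
  have := Set.ncard_le_ncard hinter (Set.toFinite _)
  rw [Set.ncard_singleton] at this
  have := Set.ncard_le_card ({x : G | x = x⁻¹} ∪ H)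
  lia

lemma zpow_zmod_cast {n : ℕ} {c : G} (hc : c ^ n = 1) (k : ℤ) :
    c ^ ((k : ZMod n).cast : ℤ) = c ^ k := by
  rw [ZMod.coe_intCast, ← zpow_eq_zpow_emod' k hc]

/-- The homomorphism from a dihedral group given by its presentation. -/
def dihedralLift {n : ℕ} {c t : G} (hc : c ^ n = 1) (ht : t * t = 1) (htc : t * c * t = c⁻¹) :
    DihedralGroup n →* G where
  toFun
    | .r i => c ^ (i.cast : ℤ)
    | .sr i => t * c ^ (i.cast : ℤ)
  map_one' := by
    change c ^ ((0 : ZMod n).cast : ℤ) = 1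
    simp
  map_mul' := by
    have hsemi : SemiconjBy t c c⁻¹ := by rw [SemiconjBy, ← htc, mul_assoc _ t t, ht, mul_one]
    have move (k : ℤ) : c ^ k * t = t * c ^ (-k) := by
      rw [(hsemi.zpow_right (-k)).eq, inv_zpow', neg_neg]
    rintro (i | i) (j | j) <;> obtain ⟨i, rfl⟩ := ZMod.intCast_surjective i <;>
      obtain ⟨j, rfl⟩ := ZMod.intCast_surjective j
    · simp only [DihedralGroup.r_mul_r, ← Int.cast_add, zpow_zmod_cast hc, zpow_add]
    · simp only [DihedralGroup.r_mul_sr, ← Int.cast_sub, zpow_zmod_cast hc]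
      rw [← mul_assoc, move, mul_assoc, ← zpow_add, sub_eq_neg_add]
    · simp only [DihedralGroup.sr_mul_r, ← Int.cast_add, zpow_zmod_cast hc, zpow_add, mul_assoc]
    · simp only [DihedralGroup.sr_mul_sr, ← Int.cast_sub, zpow_zmod_cast hc]
      rw [mul_assoc, ← mul_assoc _ t, move, ← mul_assoc, ← mul_assoc, ht, one_mul, ← zpow_add,
        sub_eq_neg_add]

lemma nonempty_mulEquiv_dihedralGroup [Finite G] {n : ℕ} [NeZero n] (hG : Nat.card G = 2 * n)
    {c t : G} (hc : orderOf c = n) (ht : t * t = 1) (htc : t ∉ Subgroup.zpowers c)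
    (hconj : t * c * t = c⁻¹) : Nonempty (G ≃* DihedralGroup n) := by
  have hcn : c ^ n = 1 := hc ▸ pow_orderOf_eq_one c
  have hF : Function.Injective (dihedralLift hcn ht hconj) := by
    refine (injective_iff_map_eq_one _).mpr ?_
    rintro (i | i) h <;> obtain ⟨i, rfl⟩ := ZMod.intCast_surjective i
    · replace h : c ^ ((i : ZMod n).cast : ℤ) = 1 := h
      rw [zpow_zmod_cast hcn, ← orderOf_dvd_iff_zpow_eq_one, hc,
        ← ZMod.intCast_zmod_eq_zero_iff_dvd] at h
      rw [h, DihedralGroup.r_zero]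
    · exact absurd (eq_inv_of_mul_eq_one_left h ▸ inv_mem (Subgroup.zpow_mem_zpowers c _)) htc
  have hbij := (Nat.bijective_iff_injective_and_card (dihedralLift hcn ht hconj)).mpr
    ⟨hF, by rw [DihedralGroup.nat_card, hG]⟩
  exact ⟨(MulEquiv.ofBijective _ hbij).symm⟩

end GroupTheory

/-! ### Reflections of determinant `-1` -/

section Involutions

variable {K V G : Type*} [Field K] [AddCommGroup V] [Module K V] [FiniteDimensional K V] [Group G]
  {ρ : Representation K G V}

lemma IsReflection.det_eq_neg_one (hinj : Function.Injective ρ) (hG : (Nat.card G : K) ≠ 0)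
    (hsq : ∀ g, LinearMap.det (ρ g) ^ 2 = 1) {r : G} (hr : IsReflection ρ r) :
    LinearMap.det (ρ r) = -1 :=
  (sq_eq_one_iff.mp (hsq r)).resolve_left (hr.det_ne_one hinj hG)

lemma IsReflection.eq_of_fixedSubmodule_eq (hinj : Function.Injective ρ)
    (hG : (Nat.card G : K) ≠ 0) (hsq : ∀ g, LinearMap.det (ρ g) ^ 2 = 1) {r s : G}
    (hr : IsReflection ρ r) (hs : IsReflection ρ s)
    (hfix : (ρ r).fixedSubmodule = (ρ s).fixedSubmodule) : r = s :=
  hr.eq_of_det_eq hinj hG hfix <| by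
    rw [hr.det_eq_neg_one hinj hG hsq, hs.det_eq_neg_one hinj hG hsq]

lemma IsReflection.mul_self (hinj : Function.Injective ρ) (hG : (Nat.card G : K) ≠ 0)
    (hsq : ∀ g, LinearMap.det (ρ g) ^ 2 = 1) {r : G} (hr : IsReflection ρ r) : r * r = 1 :=
  eq_inv_iff_mul_eq_one.mp <|
    hr.eq_of_fixedSubmodule_eq hinj hG hsq hr.inv (fixedSubmodule_inv ρ r).symm

lemma IsReflection.index_centralizer_le (hinj : Function.Injective ρ) (hG : (Nat.card G : K) ≠ 0)
    (hsq : ∀ g, LinearMap.det (ρ g) ^ 2 = 1) {r : G} (hr : IsReflection ρ r) :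
    (Subgroup.centralizer {r}).index ≤ (reflectionHyperplanes ρ).ncard := by
  have := finite_of_natCard_ne_zero hG
  let F (g : G) : Submodule K V := (ρ g).fixedSubmodule
  have hinjOn : Set.InjOn F {s | IsReflection ρ s} := fun s hs s' hs' =>
    hs.eq_of_fixedSubmodule_eq hinj hG hsq hs'
  have horbit : MulAction.orbit (ConjAct G) r ⊆ {s | IsReflection ρ s} := by
    rintro _ ⟨g, rfl⟩
    exact hr.conj _
  calc (Subgroup.centralizer {r}).index
      = (MulAction.orbit (ConjAct G) r).ncard := by
        rw [← MulAction.index_stabilizer, ConjAct.stabilizer_eq_centralizer]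
        rfl
    _ ≤ {s | IsReflection ρ s}.ncard := Set.ncard_le_ncard horbit (Set.toFinite _)
    _ = (reflectionHyperplanes ρ).ncard := hinjOn.ncard_image.symm

end Involutions

/-! ### A nonabelian group without regular vector has many reflections -/

section LowerBound

variable {V G : Type*} [AddCommGroup V] [Group G]

lemma three_mul_card_le_ncard_fixedSpaces_add_one {K : Type*} [Field K] [Finite K] [Module K V]
    [Finite V] {ρ : Representation K G V} (hinj : Function.Injective ρ)
    (hreg : ¬ HasRegularVector ρ) (hK : 3 ≤ Nat.card K)
    (hlt : (reflectionHyperplanes ρ).ncard < Nat.card K) :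
    3 * Nat.card K ≤ (fixedSpaces ρ).ncard + 1 := by
  rcases (reflectionHyperplanes ρ).eq_empty_or_nonempty with hempty | hne
  · have := sq_card_le_ncard_fixedSpaces hreg hempty
    nlinarith
  · have := sq_card_add_card_le hinj hreg hne
    have : 0 < (reflectionHyperplanes ρ).ncard := (Set.ncard_pos (Set.toFinite _)).mpr hne
    nlinarith

variable {p : ℕ} [Fact p.Prime] [Module (ZMod p) V] {ρ : Representation (ZMod p) G V}

lemma det_pow_sub_one_eq_one (ρ : Representation (ZMod p) G V) (g : G) :
    LinearMap.det (ρ g) ^ (p - 1) = 1 :=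
  ZMod.pow_card_sub_one_eq_one (LinearMap.isUnit_det _ ((Group.isUnit g).map ρ)).ne_zero

lemma isMulCommutative_of_card_eq_fourteen {V : Type*} [AddCommGroup V] [Module (ZMod 3) V]
    [Finite V] {ρ : Representation (ZMod 3) G V} (hinj : Function.Injective ρ)
    (hreg : ¬ HasRegularVector ρ) (hG : Nat.card G = 14)
    (hlt : (reflectionHyperplanes ρ).ncard < 3) : IsMulCommutative G := by
  have : Finite G := Nat.finite_of_card_ne_zero (by lia)
  have hG3 : (Nat.card G : ZMod 3) ≠ 0 := by rw [hG]; decide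
  have hsq : ∀ g, LinearMap.det (ρ g) ^ 2 = 1 := det_pow_sub_one_eq_one ρ
  have : Fact (Nat.Prime 7) := ⟨by norm_num⟩
  obtain ⟨H, hH⟩ := Sylow.exists_subgroup_card_pow_prime (G := G) 7 (n := 1) (by rw [hG]; norm_num)
  have hspaces := ncard_fixedSpaces_add_card_le ρ H (by rw [hH]; norm_num)
  obtain ⟨_, r, hr, rfl⟩ : (reflectionHyperplanes ρ).Nonempty := by
    rw [Set.nonempty_iff_ne_empty]
    intro hempty
    have := sq_card_le_ncard_fixedSpaces hreg hempty
    rw [Nat.card_zmod] at this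
    lia
  have horder : orderOf r = 2 :=
    orderOf_eq_prime (by rw [sq, hr.mul_self hinj hG3 hsq]) hr.1
  refine isMulCommutative_of_card_eq_two_mul_prime (q := 7) (by norm_num) hG
    (x := r) (by rw [horder]; exact even_two) ?_
  have hindex := hr.index_centralizer_le hinj hG3 hsq
  have := (Subgroup.centralizer {r}).index_mul_card
  nlinarith

theorem le_ncard_reflectionHyperplanes [Finite V] (hinj : Function.Injective ρ)
    (hG : (Nat.card G : ZMod p) ≠ 0) (hle : Nat.card G ≤ 2 * p + 9) (hp : 3 ≤ p)
    (hcomm : ¬ IsMulCommutative G) (hreg : ¬ HasRegularVector ρ) :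
    p ≤ (reflectionHyperplanes ρ).ncard := by
  by_contra! hlt
  have := finite_of_natCard_ne_zero hG
  have hspaces : 3 * p ≤ (fixedSpaces ρ).ncard + 1 := by
    simpa using three_mul_card_le_ncard_fixedSpaces_add_one hinj hreg (by simpa) (by simpa)
  have hpairs := two_mul_ncard_fixedSpaces_add_two_le ρ
  have hinvol : 4 * {g : G | g = g⁻¹}.ncard ≤ 3 * Nat.card G := by
    by_contra! h
    exact hcomm (isMulCommutative_of_three_mul_card_lt (MonoidHom.id G) h)
  have hprime : ¬ (Nat.card G).Prime := fun h => hcomm (isMulCommutative_of_prime_card h)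
  have hp' : p.Prime := Fact.out
  have : p ≤ 6 := by lia
  obtain rfl | rfl : p = 3 ∨ p = 5 := by interval_cases p <;> revert hp' <;> decide
  · have hcard : Nat.card G = 14 := by
      rw [Ne, ZMod.natCast_eq_zero_iff] at hG
      have h11 : Nat.card G ≠ 11 := fun h => hprime (h ▸ by norm_num)
      have h13 : Nat.card G ≠ 13 := fun h => hprime (h ▸ by norm_num)
      lia
    exact hcomm (isMulCommutative_of_card_eq_fourteen hinj hreg hcard hlt)
  · have hcard : Nat.card G = 18 := by
      have h19 : Nat.card G ≠ 19 := fun h => hprime (h ▸ by norm_num)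
      lia
    obtain ⟨H, hH⟩ :=
      Sylow.exists_subgroup_card_pow_prime (G := G) 3 (n := 2) (by rw [hcard]; norm_num)
    have := ncard_setOf_eq_inv_add_card_le (H := H) (by rw [hH]; decide)
    lia

end LowerBound

/-! ### The determinant character -/

section Determinant

variable {K V G : Type*} [Field K] [AddCommGroup V] [Module K V] [Group G]
  {ρ : Representation K G V}

/-- The determinant character of a representation, with values in the units of the field so that
its image is a group. -/
noncomputable def unitsDet (ρ : Representation K G V) : G →* Kˣ :=
  ((LinearMap.det (M := V)).comp ρ).toHomUnits

lemma val_unitsDet (ρ : Representation K G V) (g : G) :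
    (unitsDet ρ g : K) = LinearMap.det (ρ g) := rfl

lemma det_sq_eq_one_of_card_range (hdet : Nat.card (unitsDet ρ).range = 2) (g : G) :
    LinearMap.det (ρ g) ^ 2 = 1 := by
  have := orderOf_dvd_iff_pow_eq_one.mp
    (hdet ▸ Subgroup.orderOf_dvd_natCard (unitsDet ρ).range ⟨g, rfl⟩)
  rw [← val_unitsDet, ← Units.val_pow_eq_pow_val, this, Units.val_one]

variable [FiniteDimensional K V]

lemma IsReflection.unitsDet_ne_one (hinj : Function.Injective ρ) (hG : (Nat.card G : K) ≠ 0)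
    {r : G} (hr : IsReflection ρ r) : unitsDet ρ r ≠ 1 := fun h =>
  hr.det_ne_one hinj hG <| by rw [← val_unitsDet, h, Units.val_one]

lemma IsReflection.exists_fixedSubmodule_eq [Finite G] (hinj : Function.Injective ρ) {r : G}
    (hr : IsReflection ρ r) {ζ : Kˣ} (hζ : ζ ^ orderOf (unitsDet ρ r) = 1) (hζ1 : ζ ≠ 1) :
    ∃ g, (ρ g).fixedSubmodule = (ρ r).fixedSubmodule ∧ unitsDet ρ g = ζ := by
  have : NeZero (orderOf (unitsDet ρ r)) :=
    ⟨((unitsDet ρ).isOfFinOrder (isOfFinOrder_of_finite r)).orderOf_pos.ne'⟩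
  have hprim := IsPrimitiveRoot.orderOf (unitsDet ρ r : K)
  rw [orderOf_units] at hprim
  obtain ⟨k, -, hk⟩ := hprim.eq_pow_of_pow_eq_one
    (by rw [← Units.val_pow_eq_pow_val, hζ, Units.val_one])
  have hdet : unitsDet ρ (r ^ k) = ζ := by
    rw [map_pow]
    exact Units.ext hk
  refine ⟨r ^ k, hr.fixedSubmodule_eq hinj (fun h => hζ1 ?_) (fixedSubmodule_le_pow ρ r k), hdet⟩
  rw [← hdet, h, map_one]

-- For each prime `q` dividing the order of the image fix an element `ζ q` of order `q` in it.
-- Every reflecting hyperplane is the fixed space of a reflection whose determinant is some `ζ q`.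
lemma ncard_reflectionHyperplanes_le (hinj : Function.Injective ρ) (hG : (Nat.card G : K) ≠ 0) :
    (reflectionHyperplanes ρ).ncard ≤
      (Nat.card (unitsDet ρ).range).primeFactors.card * Nat.card (unitsDet ρ).ker := by
  have := finite_of_natCard_ne_zero hG
  have : Finite (unitsDet ρ).range := Set.finite_range (unitsDet ρ)
  let Q := (Nat.card (unitsDet ρ).range).primeFactors
  have hcauchy (q : ℕ) : ∃ x : G, q ∈ Q → orderOf (unitsDet ρ x) = q := by
    by_cases hq : q ∈ Q
    · have : Fact q.Prime := ⟨Nat.prime_of_mem_primeFactors hq⟩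
      obtain ⟨⟨u, hmem⟩, hu⟩ :=
        exists_prime_orderOf_dvd_card' q (Nat.dvd_of_mem_primeFactors hq)
      obtain ⟨x, rfl⟩ := id hmem
      exact ⟨x, fun _ => by rw [← hu, Subgroup.orderOf_mk]⟩
    · exact ⟨1, fun h => absurd h hq⟩
  choose x hx using hcauchy
  let fiber (q : ℕ) : Set G := unitsDet ρ ⁻¹' {unitsDet ρ (x q)}
  have hcover : reflectionHyperplanes ρ ⊆ ⋃ q ∈ Q, (fun g => (ρ g).fixedSubmodule) '' fiber q := by
    rintro _ ⟨r, hr, rfl⟩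
    have hdet : orderOf (unitsDet ρ r) ≠ 1 :=
      fun h => hr.unitsDet_ne_one hinj hG (orderOf_eq_one_iff.mp h)
    obtain ⟨q, hq, hdvd⟩ := Nat.exists_prime_and_dvd hdet
    have hqQ : q ∈ Q := Nat.mem_primeFactors.mpr
      ⟨hq, hdvd.trans (Subgroup.orderOf_dvd_natCard _ ⟨r, rfl⟩), Nat.card_pos.ne'⟩
    have hne : unitsDet ρ (x q) ≠ 1 := by
      rw [Ne, ← orderOf_eq_one_iff, hx q hqQ]
      exact hq.ne_one
    obtain ⟨g, hfix, hg⟩ := hr.exists_fixedSubmodule_eq hinj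
      (orderOf_dvd_iff_pow_eq_one.mp ((hx q hqQ).symm ▸ hdvd)) hne
    exact Set.mem_biUnion hqQ ⟨g, hg, hfix⟩
  calc (reflectionHyperplanes ρ).ncard
      ≤ (⋃ q ∈ Q, (fun g => (ρ g).fixedSubmodule) '' fiber q).ncard :=
        Set.ncard_le_ncard hcover (Q.finite_toSet.biUnion fun _ _ => Set.toFinite _)
    _ ≤ ∑ q ∈ Q, ((fun g => (ρ g).fixedSubmodule) '' fiber q).ncard :=
        Finset.set_ncard_biUnion_le _ _
    _ ≤ ∑ _q ∈ Q, Nat.card (unitsDet ρ).ker := Finset.sum_le_sum fun _ _ => by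
        rw [← Nat.card_congr ((unitsDet ρ).fiberEquivKer (x _)), Nat.card_coe_set_eq]
        exact Set.ncard_image_le (Set.toFinite _)
    _ = Q.card * Nat.card (unitsDet ρ).ker := by rw [Finset.sum_const, smul_eq_mul]

lemma IsReflection.mul_mul_eq_inv (hinj : Function.Injective ρ) (hG : (Nat.card G : K) ≠ 0)
    (hdet : Nat.card (unitsDet ρ).range = 2) {t n : G} (htn : IsReflection ρ (t * n)) :
    t * n * t = n⁻¹ := by
  rw [eq_inv_iff_mul_eq_one, mul_assoc]
  exact htn.mul_self hinj hG (det_sq_eq_one_of_card_range hdet)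

lemma IsReflection.mul_mem_ker (hinj : Function.Injective ρ) (hG : (Nat.card G : K) ≠ 0)
    (hdet : Nat.card (unitsDet ρ).range = 2) {r s : G} (hr : IsReflection ρ r)
    (hs : IsReflection ρ s) : r * s ∈ (unitsDet ρ).ker :=
  (Subgroup.mul_mem_iff_of_index_two ((Subgroup.index_ker _).trans hdet)).mpr <|
    iff_of_false (hr.unitsDet_ne_one hinj hG) (hs.unitsDet_ne_one hinj hG)

lemma ncard_reflectionHyperplanes_le_ncard_ker (hinj : Function.Injective ρ)
    (hG : (Nat.card G : K) ≠ 0) (hdet : Nat.card (unitsDet ρ).range = 2) {t : G}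
    (ht : IsReflection ρ t) :
    (reflectionHyperplanes ρ).ncard ≤ {n : (unitsDet ρ).ker | IsReflection ρ (t * n)}.ncard := by
  have := finite_of_natCard_ne_zero hG
  have htt := ht.mul_self hinj hG (det_sq_eq_one_of_card_range hdet)
  refine (Set.ncard_le_ncard ?_ (Set.toFinite _)).trans
    (Set.ncard_image_le (f := fun n : (unitsDet ρ).ker => (ρ (t * n)).fixedSubmodule)
      (Set.toFinite _))
  rintro _ ⟨r, hr, rfl⟩
  have hr' : t * (t * r) = r := by rw [← mul_assoc, htt, one_mul]
  exact ⟨⟨t * r, ht.mul_mem_ker hinj hG hdet hr⟩, by simpa only [Set.mem_ofPred_eq, hr'] using hr,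
    by simp only [hr']⟩

end Determinant

section Arithmetic

lemma two_pow_card_primeFactors_le {d : ℕ} (hd : d ≠ 0) : 2 ^ d.primeFactors.card ≤ d :=
  calc 2 ^ d.primeFactors.card = ∏ _q ∈ d.primeFactors, 2 := by rw [Finset.prod_const]
    _ ≤ ∏ q ∈ d.primeFactors, q :=
      Finset.prod_le_prod' fun _ hq => (Nat.prime_of_mem_primeFactors hq).two_le
    _ ≤ d := Nat.le_of_dvd (Nat.pos_of_ne_zero hd) (Nat.prod_primeFactors_dvd d)

lemma two_mul_card_primeFactors_add_five_le {d : ℕ} (hd : 7 ≤ d) :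
    2 * d.primeFactors.card + 5 ≤ d := by
  rcases lt_or_ge d 11 with h | h
  · revert d
    decide +kernel
  · rcases lt_or_ge d.primeFactors.card 4 with h3 | h4
    · lia
    · have hpow : ∀ w ≥ 4, 2 * w + 5 ≤ 2 ^ w := fun w hw => by
        induction w, hw using Nat.le_induction with
        | base => norm_num
        | succ w _ ih => rw [pow_succ]; lia
      exact (hpow _ h4).trans (two_pow_card_primeFactors_le (by lia))

lemma eq_two_of_le_card_primeFactors_mul {p d n : ℕ} (hp : p.Prime) (hp3 : 3 ≤ p) (hn : 2 ≤ n)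
    (hle : p ≤ d.primeFactors.card * n) (hdn : d * n ≤ 2 * p + 9) (hd : d ∣ p - 1)
    (hcop : ¬ p ∣ d * n) : d = 2 := by
  rcases lt_or_ge d 7 with h | h
  · have hcard : d.primeFactors.card ≤ if d < 2 then 0 else if d < 6 then 1 else 2 := by
      clear hle hdn hd hcop
      revert d
      decide +kernel
    have hle' := hle.trans (Nat.mul_le_mul_right n hcard)
    have hp_odd : p = 3 ∨ p = 5 ∨ p = 7 ∨ 11 ≤ p := by
      rcases lt_or_ge p 11 with h11 | h11
      · interval_cases p <;> revert hp <;> decide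
      · lia
    have hpn : ¬ p ∣ n := fun hpn => hcop (hpn.mul_left d)
    obtain rfl | rfl | rfl | h11 := hp_odd <;> interval_cases d <;>
      simp only [Nat.reduceLT, if_true, if_false] at hle' <;> lia
  · have := two_mul_card_primeFactors_add_five_le h
    nlinarith

end Arithmetic

section ZMod

variable {p : ℕ} [Fact p.Prime] {V G : Type*} [AddCommGroup V] [Module (ZMod p) V] [Finite V]
  [Group G] {ρ : Representation (ZMod p) G V}

theorem card_range_unitsDet_eq_two (hinj : Function.Injective ρ)
    (hG : (Nat.card G : ZMod p) ≠ 0) (hle : Nat.card G ≤ 2 * p + 9) (hp : 3 ≤ p)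
    (hcomm : ¬ IsMulCommutative G) (hrefl : p ≤ (reflectionHyperplanes ρ).ncard) :
    Nat.card (unitsDet ρ).range = 2 := by
  have := finite_of_natCard_ne_zero hG
  have hcard : Nat.card (unitsDet ρ).range * Nat.card (unitsDet ρ).ker = Nat.card G := by
    rw [← Subgroup.index_ker, Subgroup.index_mul_card]
  have hker : 2 ≤ Nat.card (unitsDet ρ).ker := by
    by_contra! h
    have hbot : (unitsDet ρ).ker = ⊥ := Subgroup.eq_bot_of_card_le _ (by lia)
    exact hcomm <| .of_comm fun a b => (MonoidHom.ker_eq_bot_iff _).mp hbot <| by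
      rw [map_mul, map_mul, mul_comm]
  have hrange : Nat.card (unitsDet ρ).range ∣ p - 1 := by
    have := (unitsDet ρ).range.card_subgroup_dvd_card
    rwa [Nat.card_eq_fintype_card (α := (ZMod p)ˣ), ZMod.card_units] at this
  rw [Ne, ZMod.natCast_eq_zero_iff] at hG
  exact eq_two_of_le_card_primeFactors_mul Fact.out hp hker
    (hrefl.trans (ncard_reflectionHyperplanes_le hinj (by rwa [Ne, ZMod.natCast_eq_zero_iff])))
    (hcard.trans_le hle) hrange (hcard ▸ hG)

end ZMod

/-! ### Groups of order between `p + 1` and `p + 4` -/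

section SmallGroups

variable {N : Type*} [Group N] [Finite N] {p : ℕ}

lemma eq_top_of_le_card (hp : 3 ≤ p) (hcop : ¬ p ∣ Nat.card N) (hle : Nat.card N ≤ p + 4)
    {H : Subgroup N} (hH : p ≤ Nat.card H) : H = ⊤ := by
  by_contra hne
  have hindex := Subgroup.one_lt_index_of_ne_top hne
  have hmul := H.index_mul_card
  have hHp : Nat.card H ≠ p := fun h => hcop ⟨H.index, by rw [← hmul, h, mul_comm]⟩
  nlinarith [Nat.lt_of_le_of_ne hH hHp.symm]

theorem isMulCommutative_of_le_ncard_inverted (hp : p.Prime) (hp3 : 3 ≤ p)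
    (hcop : ¬ p ∣ Nat.card N) (hle : Nat.card N ≤ p + 4) (hexc : ¬ (p = 5 ∧ Nat.card N = 8))
    (σ : N →* N) (hσ : p ≤ {n | σ n = n⁻¹}.ncard) : IsMulCommutative N := by
  by_cases hlt : 3 * Nat.card N < 4 * p
  · exact isMulCommutative_of_three_mul_card_lt σ (by lia)
  have hcard : p + 1 ≤ Nat.card N :=
    Nat.lt_of_le_of_ne (hσ.trans (Set.ncard_le_card _)) fun h => hcop (dvd_of_eq h)
  have of_prime (q : ℕ) (hq : q.Prime) (h : Nat.card N = q) : IsMulCommutative N :=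
    isMulCommutative_of_prime_card (h ▸ hq)
  have of_prime_sq (q : ℕ) (hq : q.Prime) (h : Nat.card N = q ^ 2) : IsMulCommutative N :=
    have : Fact q.Prime := ⟨hq⟩
    IsPGroup.isMulCommutative_of_card_eq_prime_sq h
  have hp_cases : p = 3 ∨ p = 5 ∨ p = 7 ∨ p = 11 := by
    have : p < 13 := by lia
    interval_cases p <;> revert hp <;> decide
  obtain rfl | rfl | rfl | rfl := hp_cases
  · obtain h | h | h : Nat.card N = 4 ∨ Nat.card N = 5 ∨ Nat.card N = 7 := by lia
    exacts [of_prime_sq 2 (by norm_num) h, of_prime 5 (by norm_num) h, of_prime 7 (by norm_num) h]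
  · obtain h | h : Nat.card N = 7 ∨ Nat.card N = 9 := by lia
    exacts [of_prime 7 (by norm_num) h, of_prime_sq 3 (by norm_num) h]
  · obtain h | h : Nat.card N = 10 ∨ Nat.card N = 11 := by lia
    · exact isMulCommutative_of_card_eq_two_mul_prime_of_inverted (q := 5) (by norm_num) h σ hσ
    · exact of_prime 11 (by norm_num) h
  · have h : Nat.card N = 15 := by lia
    apply isMulCommutative_of_minFac_lt_ncard_inverted σ
    rw [h, show Nat.minFac 15 = 3 by norm_num]
    lia

end SmallGroups

/-! ### Dihedral groups -/

section Character

variable {K : Type u} {N : Type v} {V : Type*} [Field K] [AddCommGroup V] [Module K V] [CommGroup N]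

-- The residue field of a maximal ideal of the group algebra containing the annihilator of `a`
-- turns the elements of `N` into scalars.
lemma exists_monoidHom_add_inv_eq_algebraMap (ρ : Representation K N V) {a : V} (ha : a ≠ 0) :
    ∃ (k : Type (max u v)) (_ : Field k) (_ : Algebra K k) (φ : N →* k),
      ∀ (m : N) (c : K), ρ m a + ρ m⁻¹ a = c • a → φ m + φ m⁻¹ = algebraMap K k c := by
  let A := MonoidAlgebra K N
  let x : ρ.asModule := ρ.asModuleEquiv.symm a
  obtain ⟨M, hM, hle⟩ := Ideal.exists_le_maximal (Ideal.torsionOf A ρ.asModule x) <| by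
    rw [Ideal.ne_top_iff_one, Ideal.mem_torsionOf_iff, one_smul]
    simpa only [x, ne_eq, EmbeddingLike.map_eq_zero_iff] using ha
  let ψ := (Ideal.Quotient.mk M : A →+* A ⧸ M)
  refine ⟨A ⧸ M, Ideal.Quotient.field M, inferInstance,
    (ψ : A →* A ⧸ M).comp (MonoidAlgebra.of K N), fun m c h => ?_⟩
  change ψ (MonoidAlgebra.of K N m) + ψ (MonoidAlgebra.of K N m⁻¹) = ψ (algebraMap K A c)
  rw [← map_add, Ideal.Quotient.eq]
  apply hle
  rw [Ideal.mem_torsionOf_iff, sub_smul, add_smul, sub_eq_zero, algebraMap_smul]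
  change MonoidAlgebra.of K N m • ρ.asModuleEquiv.symm a +
    MonoidAlgebra.of K N m⁻¹ • ρ.asModuleEquiv.symm a = c • ρ.asModuleEquiv.symm a
  rw [← ρ.asModuleEquiv_symm_map_rho, ← ρ.asModuleEquiv_symm_map_rho, ← map_add, h, map_smul]

end Character

section Frobenius

variable {k : Type*} [Field k] {p : ℕ} [Fact p.Prime] [CharP k p]

-- A `p`-th power map fixing the trace `x + x⁻¹` fixes or inverts `x`.
lemma pow_sub_one_eq_one_or_pow_add_one_eq_one {x : k} (hx : x ≠ 0)
    (h : (x + x⁻¹) ^ p = x + x⁻¹) : x ^ (p - 1) = 1 ∨ x ^ (p + 1) = 1 := by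
  obtain ⟨n, hn⟩ : ∃ n, p = n + 1 := ⟨p - 1, (Nat.succ_pred_prime Fact.out).symm⟩
  rw [add_pow_char, inv_pow] at h
  have hprod : (x ^ (p - 1) - 1) * (x ^ (p + 1) - 1) = 0 := by
    rw [hn] at h ⊢
    field_simp at h
    refine (mul_eq_zero_iff_left hx).mp ?_
    rw [Nat.add_sub_cancel]
    linear_combination h
  simpa only [mul_eq_zero, sub_eq_zero] using hprod

end Frobenius

section CyclicCharacter

variable {p : ℕ} [Fact p.Prime] {N V : Type*} [CommGroup N] [Finite N] [AddCommGroup V]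
  [Module (ZMod p) V] {ρ : Representation (ZMod p) N V} {a : V}

lemma isCyclic_and_card_dvd_of_forall_add_inv_eq_smul (hN : (Nat.card N : ZMod p) ≠ 0) (ha : a ≠ 0)
    (htrace : ∀ n, ∃ c : ZMod p, ρ n a + ρ n⁻¹ a = c • a) (hfix : ∀ n, ρ n a = a → n = 1) :
    IsCyclic N ∧ (Nat.card N ∣ p - 1 ∨ Nat.card N ∣ p + 1) := by
  obtain ⟨k, _, _, φ, hφ⟩ := exists_monoidHom_add_inv_eq_algebraMap ρ ha
  have : CharP k p := charP_of_injective_algebraMap (algebraMap (ZMod p) k).injective p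
  have hinj : Function.Injective φ := by
    rw [injective_iff_map_eq_one]
    intro n hn
    obtain ⟨c, hc⟩ := htrace n
    have hc2 : c = 2 := (algebraMap (ZMod p) k).injective <| by
      rw [← hφ n c hc, map_inv, hn, inv_one, map_ofNat, one_add_one_eq_two]
    refine hfix n (apply_eq_self_of_apply_sub_eq_self (n := Nat.card N) ?_ hN ?_)
    · rw [← map_pow, pow_card_eq_one', map_one]
    · have h := congrArg (ρ n) hc
      rw [map_add, ρ.self_inv_apply, hc2, map_smul, two_smul] at h
      rw [map_sub, ← sub_eq_of_eq_add h.symm]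
      abel
  have : IsCyclic N := isCyclic_of_injective_ringHom φ hinj
  refine ⟨this, ?_⟩
  obtain ⟨g, hg⟩ := IsCyclic.exists_ofOrder_eq_natCard (α := N)
  obtain ⟨c, hc⟩ := htrace g
  rw [← hg, ← orderOf_injective φ hinj]
  refine (pow_sub_one_eq_one_or_pow_add_one_eq_one ((Group.isUnit g).map φ).ne_zero ?_).imp
    orderOf_dvd_of_pow_eq_one orderOf_dvd_of_pow_eq_one
  rw [← map_inv, hφ g c hc, ← map_pow, ZMod.pow_card]

end CyclicCharacter

section TrivialModulo

variable {K V G : Type*} [Field K] [AddCommGroup V] [Module K V] [Group G]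

/-- The elements of `G` acting as the identity modulo the subspace `W`, which need not be
`G`-stable. -/
def trivialModulo (ρ : Representation K G V) (W : Submodule K V) : Subgroup G where
  carrier := {g | ∀ v, ρ g v - v ∈ W}
  one_mem' v := by rw [map_one, Module.End.one_apply, sub_self]; exact W.zero_mem
  mul_mem' {g h} hg hh v := by
    rw [map_mul, Module.End.mul_apply, ← sub_add_sub_cancel _ (ρ h v)]
    exact W.add_mem (hg _) (hh v)
  inv_mem' {g} hg v := by
    simpa only [ρ.self_inv_apply, neg_sub] using W.neg_mem (hg (ρ g⁻¹ v))

variable {ρ : Representation K G V} {W : Submodule K V}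

lemma eq_one_of_mem_trivialModulo (hinj : Function.Injective ρ) (hG : (Nat.card G : K) ≠ 0)
    {g : G} (hg : g ∈ trivialModulo ρ W) (hW : ∀ w ∈ W, ρ g w = w) : g = 1 :=
  eq_one_of_apply_sub_eq_self hinj hG fun v => hW _ (hg v)

lemma mem_trivialModulo_of_eq_transvection {g : G} {f : Module.Dual K V} {a : V}
    (hg : ρ g = LinearMap.transvection f a) (ha : a ∈ W) : g ∈ trivialModulo ρ W := fun v => by
  rw [hg, LinearMap.transvection.apply, add_sub_cancel_left]
  exact W.smul_mem _ ha

/-- The `N`-stable subspace generated by `a`. -/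
def rootSpan (ρ : Representation K G V) (N : Subgroup G) (a : V) : Submodule K V :=
  Submodule.span K (Set.range fun n : N => ρ n a)

variable {N : Subgroup G} {a : V}

lemma apply_mem_rootSpan {n : G} (hn : n ∈ N) {w : V} (hw : w ∈ rootSpan ρ N a) :
    ρ n w ∈ rootSpan ρ N a := by
  induction hw using Submodule.span_induction with
  | mem _ h =>
    obtain ⟨m, rfl⟩ := h
    rw [← Module.End.mul_apply, ← map_mul]
    exact Submodule.subset_span ⟨⟨n, hn⟩ * m, rfl⟩
  | zero => rw [map_zero]; exact Submodule.zero_mem _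
  | add _ _ _ _ hx hy => rw [map_add]; exact Submodule.add_mem _ hx hy
  | smul c _ _ hx => rw [map_smul]; exact Submodule.smul_mem _ c hx

lemma self_mem_rootSpan : a ∈ rootSpan ρ N a :=
  Submodule.subset_span ⟨1, congrArg (· a) (map_one ρ)⟩

lemma apply_eq_self_of_mem_rootSpan [IsMulCommutative N] {n : G} (hn : n ∈ N) (ha : ρ n a = a)
    {w : V} (hw : w ∈ rootSpan ρ N a) : ρ n w = w := by
  induction hw using Submodule.span_induction with
  | mem _ h =>
    obtain ⟨m, rfl⟩ := h
    rw [← Module.End.mul_apply, ← map_mul, setLike_mul_comm hn m.2, map_mul,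
      Module.End.mul_apply, ha]
  | zero => rw [map_zero]
  | add _ _ _ _ hx hy => rw [map_add, hx, hy]
  | smul c _ _ hx => rw [map_smul, hx]

end TrivialModulo

section DihedralAction

variable {K V G : Type*} [Field K] [AddCommGroup V] [Module K V] [Group G]
  {ρ : Representation K G V}

lemma IsReflection.exists_transvection_eq_neg_two [FiniteDimensional K V]
    (hinj : Function.Injective ρ) {t : G} (ht : IsReflection ρ t) (htt : t * t = 1) :
    ∃ (f : Dual K V) (a : V), ρ t = LinearMap.transvection f a ∧ a ≠ 0 ∧ f a = -2 := by
  obtain ⟨f, a, hf⟩ := ht.exists_transvection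
  obtain ⟨v, hv⟩ : ∃ v, f v • a ≠ 0 := by
    by_contra! h
    refine ht.1 (eq_one_of_forall_apply_eq_self hinj fun v => ?_)
    rw [hf, LinearMap.transvection.apply, h, add_zero]
  have hinvol : ρ t (ρ t v) = v := by
    rw [← Module.End.mul_apply, ← map_mul, htt, map_one, Module.End.one_apply]
  have hsmul : (f a + 2) • (f v • a) = 0 := by
    simp only [hf, LinearMap.transvection.apply, map_add, map_smul] at hinvol
    linear_combination (norm := module) hinvol
  exact ⟨f, a, hf, right_ne_zero_of_smul hv,
    eq_neg_of_add_eq_zero_left ((smul_eq_zero_iff_left hv).mp hsmul)⟩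

variable {t : G} {f : Dual K V} {a : V}

lemma apply_add_apply_inv_of_conj_eq_inv (htt : t * t = 1) (hf : ρ t = LinearMap.transvection f a)
    (hfa : f a = -2) {n : G} (hn : t * n * t = n⁻¹) : ρ n a + ρ n⁻¹ a = -f (ρ n a) • a := by
  have hta : ρ t a = -a := by rw [hf, LinearMap.transvection.apply, hfa]; module
  have h : ρ t (ρ n a) = ρ n⁻¹ (ρ t a) := by
    rw [← hn]
    simp only [map_mul, Module.End.mul_apply]
    rw [← Module.End.mul_apply (ρ t) (ρ t) a, ← map_mul, htt, map_one, Module.End.one_apply]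
  rw [hta, map_neg, hf, LinearMap.transvection.apply] at h
  linear_combination (norm := module) h

section Roots

variable {N : Subgroup G} [IsMulCommutative N] (hinj : Function.Injective ρ)
  (hG : (Nat.card G : K) ≠ 0) (htt : t * t = 1) (hf : ρ t = LinearMap.transvection f a)
  (hfa : f a = -2) (hinv : ∀ n ∈ N, t * n * t = n⁻¹)

include hinj hG htt hf hfa hinv

-- `n ^ 2` is the product of the reflections `n t n⁻¹` and `t`, whose roots lie in `rootSpan ρ N a`.
lemma mul_self_eq_one_of_forall_fixes_rootSpan {m : G} (hm : m ∈ N)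
    (hfix : ∀ w ∈ rootSpan ρ N a, ρ (t * m) w = w) {n : G} (hn : n ∈ N) : n * n = 1 := by
  have hta : ρ t a = -a := by rw [hf, LinearMap.transvection.apply, hfa]; module
  have hneg : ∀ x ∈ N, ρ x a = -ρ (x⁻¹ * m⁻¹) a := fun x hx => by
    have hconj : t * m * x = x⁻¹ * m⁻¹ * t := by
      rw [← mul_inv_rev, ← hinv _ (N.mul_mem hm hx), mul_assoc _ t t, htt, mul_one, mul_assoc]
    rw [← hfix _ (apply_mem_rootSpan hx self_mem_rootSpan), ← Module.End.mul_apply, ← map_mul,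
      hconj, map_mul, Module.End.mul_apply, hta, map_neg]
  have hsq : ρ (n * n) a = a := by
    have hinvn : ρ n a = ρ n⁻¹ a := by
      have h1 := hneg 1 N.one_mem
      rw [inv_one, one_mul, map_one, Module.End.one_apply] at h1
      rw [hneg n hn, map_mul, Module.End.mul_apply, ← map_neg, ← h1]
    rw [map_mul, Module.End.mul_apply, hinvn, ρ.self_inv_apply]
  refine eq_one_of_mem_trivialModulo (W := rootSpan ρ N a) hinj hG ?_ fun w hw =>
    apply_eq_self_of_mem_rootSpan (N.mul_mem hn hn) hsq hw
  have hprod : n * n = n * t * n⁻¹ * t := by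
    rw [← hinv n hn, show n * t * (t * n * t) * t = n * (t * t) * n * (t * t) by
      simp only [mul_assoc], htt, mul_one, mul_one]
  rw [hprod]
  refine mul_mem (fun v => ?_) (mem_trivialModulo_of_eq_transvection hf self_mem_rootSpan)
  rw [map_mul, map_mul, Module.End.mul_apply, Module.End.mul_apply, hf,
    LinearMap.transvection.apply, map_add, ρ.self_inv_apply, add_sub_cancel_left, map_smul]
  exact Submodule.smul_mem _ _ (apply_mem_rootSpan hn self_mem_rootSpan)

lemma mem_trivialModulo_rootSpan [FiniteDimensional K V] (hsq : ∃ n ∈ N, n * n ≠ 1) {m : G}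
    (hm : m ∈ N) (hr : IsReflection ρ (t * m)) : m ∈ trivialModulo ρ (rootSpan ρ N a) := by
  obtain ⟨f', b, hf'⟩ := hr.exists_transvection
  have htW := mem_trivialModulo_of_eq_transvection hf (self_mem_rootSpan (ρ := ρ) (N := N))
  by_cases hfix : ∀ w ∈ rootSpan ρ N a, f' w = 0
  · obtain ⟨n, hn, hne⟩ := hsq
    refine absurd (mul_self_eq_one_of_forall_fixes_rootSpan hinj hG htt hf hfa hinv hm ?_ hn) hne
    intro w hw
    rw [hf', LinearMap.transvection.apply, hfix w hw, zero_smul, add_zero]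
  · push Not at hfix
    obtain ⟨w, hw, hfw⟩ := hfix
    have hb : b ∈ rootSpan ρ N a := by
      rw [← Submodule.smul_mem_iff _ hfw]
      have hmw := apply_mem_rootSpan hm hw
      have h := Submodule.sub_mem _ (Submodule.add_mem _ (htW (ρ m w)) hmw) hw
      rwa [sub_add_cancel, ← Module.End.mul_apply, ← map_mul, hf', LinearMap.transvection.apply,
        add_sub_cancel_left] at h
    rw [← one_mul m, ← htt, mul_assoc]
    exact mul_mem htW (mem_trivialModulo_of_eq_transvection hf' hb)

end Roots

end DihedralAction

section IndexTwo

variable {G : Type*} [Group G] {N : Subgroup G} {t : G}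

lemma eq_top_of_index_eq_two_of_le (hN : N.index = 2) (htN : t ∉ N) {H : Subgroup G} (hle : N ≤ H)
    (ht : t ∈ H) : H = ⊤ := by
  refine eq_top_iff.mpr fun g _ => ?_
  by_cases hg : g ∈ N
  · exact hle hg
  · exact (H.mul_mem_cancel_left ht).mp
      (hle ((Subgroup.mul_mem_iff_of_index_two hN).mpr (iff_of_false htN hg)))

lemma isMulCommutative_of_index_eq_two [IsMulCommutative N] (hN : N.index = 2) (htN : t ∉ N)
    (hcomm : ∀ n ∈ N, t * n = n * t) : IsMulCommutative G := by
  have hle : N ≤ Subgroup.center G := fun n hn => mem_center_of_centralizer_eq_top <|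
    eq_top_of_index_eq_two_of_le hN htN
      (fun m hm => Subgroup.mem_centralizer_singleton_iff.mpr (setLike_mul_comm hm hn))
      (Subgroup.mem_centralizer_singleton_iff.mpr (hcomm n hn))
  refine isMulCommutative_of_center_eq_top (eq_top_of_index_eq_two_of_le hN htN hle ?_)
  exact mem_center_of_centralizer_eq_top <| eq_top_of_index_eq_two_of_le hN htN
    (fun n hn => Subgroup.mem_centralizer_singleton_iff.mpr (hcomm n hn).symm)
    (Subgroup.mem_centralizer_singleton_iff.mpr rfl)

lemma conj_eq_inv_of_closure_eq_top [IsMulCommutative N] (htt : t * t = 1) {S : Set N}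
    (hS : Subgroup.closure S = ⊤) (h : ∀ n ∈ S, t * (n : G) * t = (n : G)⁻¹) :
    ∀ n ∈ N, t * n * t = n⁻¹ := by
  have htinv : t⁻¹ = t := inv_eq_of_mul_eq_one_right htt
  suffices hclosure : ∀ n ∈ Subgroup.closure S, t * (n : G) * t = (n : G)⁻¹ from
    fun n hn => hclosure ⟨n, hn⟩ (hS ▸ Subgroup.mem_top _)
  intro n hn
  induction hn using Subgroup.closure_induction with
  | mem n hn => exact h n hn
  | one => rw [Subgroup.coe_one, mul_one, htt, inv_one]
  | mul x y _ _ hx hy =>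
    rw [mul_comm' x y, Subgroup.coe_mul, mul_inv_rev, ← hx, ← hy, setLike_mul_comm y.2 x.2,
      show t * (x : G) * t * (t * y * t) = t * x * (t * t) * y * t by simp only [mul_assoc], htt,
      mul_one, mul_assoc t (x : G)]
  | inv x _ hx =>
    simpa only [mul_inv_rev, htinv, mul_assoc, Subgroup.coe_inv] using congrArg (·⁻¹) hx

end IndexTwo

section Dihedral

variable {p : ℕ} [Fact p.Prime] {V G : Type*} [AddCommGroup V] [Module (ZMod p) V] [Finite V]
  [Group G] [Finite G] {ρ : Representation (ZMod p) G V} {N : Subgroup G} [IsMulCommutative N]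
  {t : G}

open scoped IsMulCommutative in
theorem nonempty_mulEquiv_dihedralGroup_of_closure_eq_top (hinj : Function.Injective ρ)
    (hG : (Nat.card G : ZMod p) ≠ 0) (hcomm : ¬ IsMulCommutative G) (hN : N.index = 2)
    (hle : p + 1 ≤ Nat.card N) (ht : IsReflection ρ t) (htt : t * t = 1) (htN : t ∉ N)
    (hconj : ∀ n : N, IsReflection ρ (t * n) → t * (n : G) * t = (n : G)⁻¹)
    (hgen : Subgroup.closure {n : N | IsReflection ρ (t * n)} = ⊤) :
    Nonempty (G ≃* DihedralGroup (p + 1)) := by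
  obtain ⟨f, a, hf, ha, hfa⟩ := ht.exists_transvection_eq_neg_two hinj htt
  have hinv := conj_eq_inv_of_closure_eq_top htt hgen hconj
  have hsq : ∃ n ∈ N, n * n ≠ 1 := by
    by_contra! h
    refine hcomm (isMulCommutative_of_index_eq_two hN htN fun n hn => ?_)
    have hc := hinv n hn
    rw [inv_eq_of_mul_eq_one_right (h n hn)] at hc
    rw [← mul_one (t * n), ← htt, ← mul_assoc, hc]
  have htriv : (⊤ : Subgroup N) ≤ (trivialModulo ρ (rootSpan ρ N a)).subgroupOf N := by
    rw [← hgen, Subgroup.closure_le]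
    exact fun m hm => mem_trivialModulo_rootSpan hinj hG htt hf hfa hinv hsq m.2 hm
  have hfix : ∀ n : N, ρ n a = a → n = 1 := fun n hn => Subtype.ext <|
    eq_one_of_mem_trivialModulo hinj hG (htriv (Subgroup.mem_top n)) fun w hw =>
      apply_eq_self_of_mem_rootSpan n.2 hn hw
  have hNp : (Nat.card N : ZMod p) ≠ 0 := by
    rw [← N.card_mul_index, Nat.cast_mul] at hG
    exact left_ne_zero_of_mul hG
  obtain ⟨_, hdvd⟩ := isCyclic_and_card_dvd_of_forall_add_inv_eq_smul (ρ := ρ.comp N.subtype)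
    hNp ha (fun n => ⟨_, apply_add_apply_inv_of_conj_eq_inv htt hf hfa (hinv n n.2)⟩) hfix
  have hcard : Nat.card N = p + 1 := by
    have hp := (Fact.out : p.Prime).two_le
    refine hdvd.elim (fun h => ?_) fun h => (Nat.le_of_dvd p.succ_pos h).antisymm hle
    have := Nat.le_of_dvd (by lia) h
    lia
  obtain ⟨c, hc⟩ := IsCyclic.exists_ofOrder_eq_natCard (α := N)
  refine nonempty_mulEquiv_dihedralGroup (c := (c : G)) (t := t) ?_ ?_ htt ?_ (hinv c c.2)
  · rw [← N.card_mul_index, hN, hcard, mul_comm]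
  · rw [Subgroup.orderOf_coe, hc, hcard]
  · exact fun h => htN (Subgroup.zpowers_le.mpr c.2 h)

end Dihedral

/-! ### Nonabelian groups of order `q ^ 3` -/

section PrimeCube

open scoped commutatorElement

variable {M : Type*} [Group M] {q : ℕ} [Fact q.Prime]

lemma isMulCommutative_of_card_dvd_prime_sq (hM : Nat.card M ∣ q ^ 2) : IsMulCommutative M := by
  have hq : q.Prime := Fact.out
  obtain ⟨k, hk, hcard⟩ := (Nat.dvd_prime_pow hq).mp hM
  interval_cases k
  · have := (Nat.card_eq_one_iff_unique.mp hcard).1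
    exact .of_comm fun a b => Subsingleton.elim _ _
  · exact isMulCommutative_of_prime_card (by rwa [hcard, pow_one])
  · exact IsPGroup.isMulCommutative_of_card_eq_prime_sq hcard

lemma card_center_and_index_of_card_eq_prime_cube (hM : Nat.card M = q ^ 3)
    (hcomm : ¬ IsMulCommutative M) :
    Nat.card (Subgroup.center M) = q ∧ (Subgroup.center M).index = q ^ 2 := by
  have hq : q.Prime := Fact.out
  have hfin : Finite M := Nat.finite_of_card_ne_zero (by rw [hM]; exact pow_ne_zero _ hq.ne_zero)
  have hnt : Nontrivial M := not_subsingleton_iff_nontrivial.mp fun _ =>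
    hcomm (.of_comm fun a b => Subsingleton.elim _ _)
  have hcenter := (IsPGroup.of_card hM).center_nontrivial
  have hmul := (Subgroup.center M).card_mul_index
  obtain ⟨k, hk, hindex⟩ := (Nat.dvd_prime_pow hq).mp (hM ▸ (Subgroup.center M).index_dvd_card)
  rw [hindex, hM] at hmul
  interval_cases k
  · exact absurd (isMulCommutative_of_center_eq_top (Subgroup.index_eq_one.mp hindex)) hcomm
  · rw [pow_one] at hindex
    exact absurd (isMulCommutative_of_prime_index_center (hindex ▸ hq)) hcomm
  · exact ⟨Nat.eq_of_mul_eq_mul_right (pow_pos hq.pos 2) (by rw [hmul]; ring), hindex⟩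
  · have := Finite.one_lt_card (α := Subgroup.center M)
    have := Nat.eq_of_mul_eq_mul_right (pow_pos hq.pos 3) (hmul.trans (one_mul _).symm)
    lia

lemma commutatorElement_mem_center_of_card_eq_prime_cube (hM : Nat.card M = q ^ 3)
    (hcomm : ¬ IsMulCommutative M) (x y : M) : ⁅x, y⁆ ∈ Subgroup.center M := by
  have := IsPGroup.isMulCommutative_of_card_eq_prime_sq (G := M ⧸ Subgroup.center M)
    (card_center_and_index_of_card_eq_prime_cube hM hcomm).2
  rw [← QuotientGroup.eq_one_iff, ← QuotientGroup.mk'_apply, map_commutatorElement,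
    commutatorElement_eq_one_iff_mul_comm]
  exact mul_comm' _ _

lemma pow_mem_center_of_card_eq_prime_cube (hM : Nat.card M = q ^ 3)
    (hcomm : ¬ IsMulCommutative M) (x : M) : x ^ q ∈ Subgroup.center M := by
  have hindex : Nat.card (M ⧸ Subgroup.center M) = q ^ 2 :=
    (card_center_and_index_of_card_eq_prime_cube hM hcomm).2
  rw [← QuotientGroup.eq_one_iff, QuotientGroup.mk_pow]
  obtain ⟨k, hk, horder⟩ := (Nat.dvd_prime_pow Fact.out).mp
    (hindex ▸ orderOf_dvd_natCard (x : M ⧸ Subgroup.center M))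
  have hk2 : k ≠ 2 := by
    rintro rfl
    have : Finite (M ⧸ Subgroup.center M) :=
      Nat.finite_of_card_ne_zero (by rw [hindex]; exact pow_ne_zero _ (NeZero.ne q))
    have := isCyclic_of_orderOf_eq_card _ (horder.trans hindex.symm)
    exact hcomm (isMulCommutative_of_isCyclic_quotient_center_self M)
  exact orderOf_dvd_iff_pow_eq_one.mp (horder ▸ pow_dvd_pow q (by lia : k ≤ 1) |>.trans
    (pow_one q).dvd)

lemma eq_top_of_not_commute_of_card_eq_prime_cube (hM : Nat.card M = q ^ 3) {x y : M}
    (hxy : ¬ Commute x y) {H : Subgroup M} (hx : x ∈ H) (hy : y ∈ H) : H = ⊤ := by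
  have hq : q.Prime := Fact.out
  have hfin : Finite M := Nat.finite_of_card_ne_zero (by rw [hM]; exact pow_ne_zero _ hq.ne_zero)
  obtain ⟨k, hk, hcard⟩ := (Nat.dvd_prime_pow hq).mp (hM ▸ H.card_subgroup_dvd_card)
  obtain rfl | hk3 := hk.eq_or_lt
  · exact Subgroup.eq_top_of_card_eq H (hcard.trans hM.symm)
  · have : IsMulCommutative H :=
      isMulCommutative_of_card_dvd_prime_sq (q := q) (by rw [hcard]; exact pow_dvd_pow q (by lia))
    exact absurd (setLike_mul_comm hx hy) hxy

end PrimeCube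

section OrderEight

open scoped commutatorElement

variable {M : Type*} [Group M]

lemma exists_not_commute_of_card_lt_two_mul_ncard [Finite M] (hcomm : ¬ IsMulCommutative M)
    {S : Set M} (hS : Nat.card M < 2 * S.ncard) : ∃ x ∈ S, ∃ y ∈ S, ¬ Commute x y := by
  by_contra! h
  have htop : Subgroup.closure S = ⊤ := eq_top_of_card_lt_two_mul_card <| hS.trans_le <|
    Nat.mul_le_mul_left 2 (Set.ncard_le_ncard Subgroup.subset_closure (Set.toFinite _))
  have := Subgroup.isMulCommutative_closure fun x hx y hy => (h x hx y hy : x * y = y * x)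
  exact hcomm <| .of_comm fun a b =>
    setLike_mul_comm (htop ▸ Subgroup.mem_top a) (htop ▸ Subgroup.mem_top b)

lemma eq_of_mem_center_of_card_eq_eight (hM : Nat.card M = 8) (hcomm : ¬ IsMulCommutative M)
    {x y : M} (hx : x ∈ Subgroup.center M) (hy : y ∈ Subgroup.center M) (hx1 : x ≠ 1)
    (hy1 : y ≠ 1) : x = y := by
  have hcard := (card_center_and_index_of_card_eq_prime_cube (q := 2) hM hcomm).1
  obtain ⟨z, -, hz⟩ := (Nat.card_eq_two_iff' (1 : Subgroup.center M)).mp hcard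
  exact congrArg Subtype.val <| (hz ⟨x, hx⟩ fun h => hx1 (congrArg Subtype.val h)).trans
    (hz ⟨y, hy⟩ fun h => hy1 (congrArg Subtype.val h)).symm

lemma mul_self_eq_one_of_mem_center_of_card_eq_eight (hM : Nat.card M = 8)
    (hcomm : ¬ IsMulCommutative M) {x : M} (hx : x ∈ Subgroup.center M) : x * x = 1 := by
  by_cases hx1 : x = 1
  · rw [hx1, one_mul]
  · exact eq_inv_iff_mul_eq_one.mp <|
      eq_of_mem_center_of_card_eq_eight hM hcomm hx (inv_mem hx) hx1 (inv_ne_one.mpr hx1)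

lemma exists_conj_eq_inv_of_not_commute (hM : Nat.card M = 8) {x y : M} (hxy : ¬ Commute x y) :
    ∃ a, Commute a y ∧ a * x * a⁻¹ = x⁻¹ := by
  have hcomm : ¬ IsMulCommutative M := fun _ => hxy (mul_comm' x y)
  by_cases hx : x * x = 1
  · exact ⟨1, Commute.one_left y, by rw [one_mul, inv_one, mul_one, inv_eq_of_mul_eq_one_left hx]⟩
  · have hsq : x⁻¹ * x⁻¹ ∈ Subgroup.center M :=
      pow_two x⁻¹ ▸ pow_mem_center_of_card_eq_prime_cube (q := 2) hM hcomm x⁻¹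
    have heq := eq_of_mem_center_of_card_eq_eight hM hcomm
      (commutatorElement_mem_center_of_card_eq_prime_cube (q := 2) hM hcomm y x) hsq
      (fun h => hxy (commutatorElement_eq_one_iff_commute.mp h).symm)
      (fun h => hx (by rwa [← mul_inv_rev, inv_eq_one] at h))
    exact ⟨y, Commute.refl y, mul_right_cancel (b := x⁻¹) heq⟩

-- If `σ` inverts the noncommuting elements `x` and `y`, so does a suitable inner automorphism.
theorem exists_forall_eq_conj_of_card_eq_eight (hM : Nat.card M = 8)
    (hcomm : ¬ IsMulCommutative M) (σ : M →* M) (hσ : 4 < {n | σ n = n⁻¹}.ncard) :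
    ∃ n, ∀ m, σ m = n * m * n⁻¹ := by
  have hfin : Finite M := Nat.finite_of_card_ne_zero (by lia)
  obtain ⟨x, hx, y, hy, hxy⟩ :=
    exists_not_commute_of_card_lt_two_mul_ncard hcomm (S := {n | σ n = n⁻¹}) (by lia)
  obtain ⟨a, hay, hax⟩ := exists_conj_eq_inv_of_not_commute hM hxy
  obtain ⟨b, hbx, hby⟩ := exists_conj_eq_inv_of_not_commute hM fun h => hxy h.symm
  have htop := eq_top_of_not_commute_of_card_eq_prime_cube (q := 2) hM hxy
    (H := σ.eqLocus (MulAut.conj (a * b)).toMonoidHom)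
    (show σ x = a * b * x * (a * b)⁻¹ by
      rw [Set.mem_ofPred_eq.mp hx, mul_assoc a b x, hbx.eq, mul_inv_rev, mul_assoc a, mul_assoc x,
        mul_inv_cancel_left, ← mul_assoc, hax])
    (show σ y = a * b * y * (a * b)⁻¹ by
      rw [Set.mem_ofPred_eq.mp hy, mul_inv_rev, mul_assoc a b y, ← mul_assoc, mul_assoc a, hby,
        hay.inv_right.eq, mul_inv_cancel_right])
  exact ⟨a * b, fun m => SetLike.ext_iff.mp htop m |>.mpr trivial⟩

end OrderEight

/-! ### The exceptional group of order 16 -/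

section CentralInvolutions

variable {K V G : Type*} [Field K] [AddCommGroup V] [Module K V] [Group G]
  {ρ : Representation K G V}

lemma eq_zero_of_neg_eq_self (h2 : (2 : K) ≠ 0) {v : V} (hv : -v = v) : v = 0 :=
  (smul_eq_zero_iff_right h2).mp ((two_smul K v).trans (neg_eq_iff_add_eq_zero.mp hv))

-- Such a vector is `w` plus a vector negated by `s`.
lemma hasRegularVector_of_index_eq_two (hinj : Function.Injective ρ) (h2 : (2 : K) ≠ 0)
    {N : Subgroup G} (hN : N.index = 2) {s : G} (hs : s ∈ Subgroup.center G) (hsN : s ∉ N)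
    (hss : s * s = 1) {w : V} (hsw : ρ s w = w) (hw : ∀ n ∈ N, ρ n w = w → n = 1) :
    HasRegularVector ρ := by
  obtain ⟨y, hy⟩ : ∃ y, ρ s y ≠ y := by
    by_contra! h
    exact hsN (eq_one_of_forall_apply_eq_self hinj h ▸ N.one_mem)
  have hanti : ρ s (y - ρ s y) = -(y - ρ s y) := by
    rw [map_sub, ← Module.End.mul_apply, ← map_mul, hss, map_one, Module.End.one_apply, neg_sub]
  have hsum : w + (y - ρ s y) + ρ s (w + (y - ρ s y)) = (2 : K) • w := by
    rw [map_add, hsw, hanti, two_smul]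
    abel
  refine ⟨w + (y - ρ s y), fun g hg => ?_⟩
  have hgw : ρ g w = w := by
    have hcomm : ρ g (ρ s (w + (y - ρ s y))) = ρ s (w + (y - ρ s y)) := by
      rw [← Module.End.mul_apply, ← map_mul, Subgroup.mem_center_iff.mp hs, map_mul,
        Module.End.mul_apply, hg]
    refine (smul_right_injective V h2 : Function.Injective fun v => (2 : K) • v) ?_
    simp only [← map_smul, ← hsum, map_add (ρ g) (w + (y - ρ s y)), hg, hcomm]
  by_cases hgN : g ∈ N
  · exact hw g hgN hgw
  · have hsg : s * g = 1 := hw _ ((Subgroup.mul_mem_iff_of_index_two hN).mpr (by tauto))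
      (by rw [map_mul, Module.End.mul_apply, hgw, hsw])
    rw [← mul_left_cancel (hss.trans hsg.symm), map_add, hsw, hanti] at hg
    exact absurd (eq_zero_of_neg_eq_self h2 (add_left_cancel hg)) (sub_ne_zero.mpr hy.symm)

lemma exists_central_involution_eigenvector (hinj : Function.Injective ρ) {z u : G}
    (hz : z ∈ Subgroup.center G) (hzz : z * z = 1) (hz1 : z ≠ 1) (huu : u * u = 1) :
    ∃ s ∈ ({u, u * z} : Set G), ∃ x ≠ 0, ρ s x = x ∧ ρ z x = -x := by
  obtain ⟨y, hy⟩ : ∃ y, ρ z y ≠ y := by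
    by_contra! h
    exact hz1 (eq_one_of_forall_apply_eq_self hinj h)
  have hzx : ρ z (y - ρ z y) = -(y - ρ z y) := by
    rw [map_sub, ← Module.End.mul_apply, ← map_mul, hzz, map_one, Module.End.one_apply, neg_sub]
  have hx : y - ρ z y ≠ 0 := sub_ne_zero.mpr hy.symm
  generalize y - ρ z y = x at hzx hx
  by_cases hux : x + ρ u x = 0
  · refine ⟨u * z, Or.inr rfl, x, hx, ?_, hzx⟩
    rw [map_mul, Module.End.mul_apply, hzx, map_neg, ← eq_neg_of_add_eq_zero_left hux]
  · refine ⟨u, Or.inl rfl, x + ρ u x, hux, ?_, ?_⟩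
    · rw [map_add, ← Module.End.mul_apply, ← map_mul, huu, map_one, Module.End.one_apply, add_comm]
    · rw [map_add, ← Module.End.mul_apply, ← map_mul, ← Subgroup.mem_center_iff.mp hz, map_mul,
        Module.End.mul_apply, hzx, map_neg, neg_add]

end CentralInvolutions

section FaithfulOrderEight

variable {K V M : Type*} [Field K] [AddCommGroup V] [Module K V] [Group M]
  {ρ : Representation K M V}

open scoped commutatorElement

lemma injective_of_card_eq_eight (hM : Nat.card M = 8) (hcomm : ¬ IsMulCommutative M) {z : M}
    (hz : z ∈ Subgroup.center M) (hρz : ρ z ≠ 1) : Function.Injective ρ := by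
  have hz1 : z ≠ 1 := fun h => hρz (by rw [h, map_one])
  refine (injective_iff_map_eq_one ρ).mpr fun n hn => ?_
  by_cases hnc : n ∈ Subgroup.center M
  · by_contra hn1
    exact hρz (eq_of_mem_center_of_card_eq_eight hM hcomm hz hnc hz1 hn1 ▸ hn)
  · obtain ⟨y, hy⟩ : ∃ y, y * n ≠ n * y := by simpa [Subgroup.mem_center_iff] using hnc
    have hzy : z = ⁅y, n⁆ := eq_of_mem_center_of_card_eq_eight hM hcomm hz
      (commutatorElement_mem_center_of_card_eq_prime_cube (q := 2) hM hcomm y n) hz1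
      fun h => hy (commutatorElement_eq_one_iff_mul_comm.mp h)
    refine absurd ?_ hρz
    have hn' : ρ n⁻¹ = 1 := by rw [← mul_one (ρ n⁻¹), ← hn, ← map_mul, inv_mul_cancel, map_one, hn]
    rw [hzy, commutatorElement_def, map_mul, map_mul, map_mul, hn, hn', mul_one, mul_one,
      ← map_mul, mul_inv_cancel, map_one]

lemma ncard_involutions_le (hM : Nat.card M = 8) (hcomm : ¬ IsMulCommutative M) {z : M}
    (hz1 : z ≠ 1) (hzz : z = z⁻¹) : ({n : M | n = n⁻¹} \ {1, z}).ncard ≤ 4 := by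
  have : Finite M := Nat.finite_of_card_ne_zero (by lia)
  have hle : 4 * {n : M | n = n⁻¹}.ncard ≤ 3 * Nat.card M := by
    by_contra! h
    exact hcomm (isMulCommutative_of_three_mul_card_lt (MonoidHom.id M) h)
  have hsub : ({1, z} : Set M) ⊆ {n | n = n⁻¹} := by
    rintro n (rfl | rfl)
    exacts [inv_one.symm, hzz]
  rw [Set.ncard_sdiff hsub, Set.ncard_pair hz1.symm]
  lia

theorem hasRegularVector_of_card_eq_eight [Finite K] [Finite V] [Nontrivial V]
    (h2 : (2 : K) ≠ 0) (hK : 4 < Nat.card K) (hM : Nat.card M = 8)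
    (hcomm : ¬ IsMulCommutative M) {z : M} (hz : z ∈ Subgroup.center M) (hρz : ρ z = -1) :
    HasRegularVector ρ := by
  have hzv : ∀ v ≠ 0, ρ z v ≠ v := fun v hv h =>
    hv (eq_zero_of_neg_eq_self h2 ((LinearMap.congr_fun hρz v).symm.trans h))
  obtain ⟨w, hw⟩ := exists_ne (0 : V)
  have hρz1 : ρ z ≠ 1 := fun h => hzv w hw (LinearMap.congr_fun h w)
  have hinj := injective_of_card_eq_eight hM hcomm hz hρz1
  have hz1 : z ≠ 1 := fun h => hρz1 (by rw [h, map_one])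
  have hzz : z = z⁻¹ := eq_inv_of_mul_eq_one_left <| hinj <| by
    rw [map_mul, hρz, neg_one_mul, neg_neg, map_one]
  by_contra hreg
  have hnonzero : ∀ v ≠ 0, ∃ n ∈ {n : M | n = n⁻¹} \ {1, z}, ρ n v = v := by
    intro v hv
    obtain ⟨n, hn1, hn⟩ := exists_ne_one_of_not_hasRegularVector hreg v
    refine ⟨n, ⟨?_, ?_⟩, hn⟩
    · by_contra hnn
      have hsq : n * n = z := eq_of_mem_center_of_card_eq_eight hM hcomm
        (pow_two n ▸ pow_mem_center_of_card_eq_prime_cube (q := 2) hM hcomm n) hz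
        (fun h => hnn (eq_inv_of_mul_eq_one_left h)) hz1
      exact hzv v hv (by rw [← hsq, map_mul, Module.End.mul_apply, hn, hn])
    · rintro (rfl | rfl)
      exacts [hn1 rfl, hzv v hv hn]
  have hcover : ∀ v ∈ (Set.univ : Set V), ∃ n ∈ {n : M | n = n⁻¹} \ {1, z} ∪ ∅,
      v ∈ ((ρ n).fixedSubmodule : Set V) := by
    intro v _
    obtain rfl | hv := eq_or_ne v 0
    · obtain ⟨n, hn, -⟩ := hnonzero w hw
      exact ⟨n, Or.inl hn, zero_mem _⟩
    · obtain ⟨n, hn, hnv⟩ := hnonzero v hv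
      exact ⟨n, Or.inl hn, hnv⟩
  have : Finite M := Nat.finite_of_card_ne_zero (by lia)
  have hsq := sq_le_of_forall_exists_mem Set.univ_nonempty (Set.toFinite _) Set.finite_empty _
    hcover (q := Nat.card K)
    (fun n hn => by
      rw [Set.univ_inter, Set.ncard_univ]
      exact card_mul_card_le_of_mem_fixedSpaces hinj ⟨n, fun h => hn.2 (Or.inl h), rfl⟩)
    (fun n hn => hn.elim)
  have := ncard_involutions_le hM hcomm hz1 hzz
  rw [Set.ncard_empty, add_zero] at hsq
  nlinarith

end FaithfulOrderEight

section OrderSixteen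

variable {K V G : Type*} [Field K] [AddCommGroup V] [Module K V] [Group G]
  {ρ : Representation K G V} {N : Subgroup G}

lemma mem_center_of_index_eq_two (hN : N.index = 2) {u g : G} (hu : u ∉ N) (hug : u * g = g * u)
    (hg : ∀ n ∈ N, n * g = g * n) : g ∈ Subgroup.center G :=
  mem_center_of_centralizer_eq_top <| eq_top_of_index_eq_two_of_le hN hu
    (fun n hn => Subgroup.mem_centralizer_singleton_iff.mpr (hg n hn))
    (Subgroup.mem_centralizer_singleton_iff.mpr hug)

lemma exists_regularVector_apply_eq_self [Finite K] [Finite V] (h2 : (2 : K) ≠ 0)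
    (hK : 4 < Nat.card K) (hcard : Nat.card N = 8) (hcomm : ¬ IsMulCommutative N) {s z : G}
    (hs : s ∈ Subgroup.center G) (hz : z ∈ Subgroup.center G) (hzN : z ∈ N) {x : V} (hx : x ≠ 0)
    (hsx : ρ s x = x) (hzx : ρ z x = -x) : ∃ w, ρ s w = w ∧ ∀ n ∈ N, ρ n w = w → n = 1 := by
  have apply_comm {c : G} (hc : c ∈ Subgroup.center G) (g : G) (v : V) :
      ρ c (ρ g v) = ρ g (ρ c v) := by
    rw [← Module.End.mul_apply, ← map_mul, ← Subgroup.mem_center_iff.mp hc, map_mul,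
      Module.End.mul_apply]
  let W : Submodule K V := (ρ s).fixedSubmodule ⊓ (-ρ z).fixedSubmodule
  have mem_W {v : V} : v ∈ W ↔ ρ s v = v ∧ -ρ z v = v := Iff.rfl
  have W_le (n : N) : W ≤ W.comap (ρ n) := fun v hv =>
    mem_W.mpr ⟨(apply_comm hs n v).trans (congrArg (ρ n) hv.1), by
      rw [apply_comm hz, ← map_neg, (mem_W.mp hv).2]⟩
  let σ : Representation K N W := Representation.subrepresentation (ρ.comp N.subtype) W W_le
  have : Nontrivial W :=
    ⟨⟨x, hsx, neg_eq_iff_eq_neg.mpr hzx⟩, 0, fun h => hx (congrArg Subtype.val h)⟩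
  obtain ⟨w, hw⟩ := hasRegularVector_of_card_eq_eight (ρ := σ) h2 hK hcard hcomm (z := ⟨z, hzN⟩)
    (Subgroup.mem_center_iff.mpr fun n => Subtype.ext (Subgroup.mem_center_iff.mp hz n))
    (LinearMap.ext fun v => Subtype.ext (neg_eq_iff_eq_neg.mp (mem_W.mp v.2).2))
  exact ⟨w, w.2.1, fun n hn hnw => congrArg Subtype.val (hw ⟨n, hn⟩ (Subtype.ext hnw))⟩

theorem hasRegularVector_of_central_involution [Finite K] [Finite V]
    (hinj : Function.Injective ρ) (h2 : (2 : K) ≠ 0) (hK : 4 < Nat.card K) (hN : N.index = 2)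
    (hcard : Nat.card N = 8) (hcomm : ¬ IsMulCommutative N) {u : G}
    (hu : u ∈ Subgroup.center G) (huN : u ∉ N) (huu : u * u = 1) : HasRegularVector ρ := by
  have hZ := (card_center_and_index_of_card_eq_prime_cube (q := 2) hcard hcomm).1
  obtain ⟨⟨z, hz⟩, hz1⟩ : ∃ z : Subgroup.center N, z ≠ 1 := by
    obtain ⟨z, hz, -⟩ := (Nat.card_eq_two_iff' (1 : Subgroup.center N)).mp hZ
    exact ⟨z, hz⟩
  have hzz : (z : G) * z = 1 :=
    congrArg Subtype.val (mul_self_eq_one_of_mem_center_of_card_eq_eight hcard hcomm hz)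
  have hzG : (z : G) ∈ Subgroup.center G := mem_center_of_index_eq_two hN huN
    (Subgroup.mem_center_iff.mp hu z).symm
    fun n hn => congrArg Subtype.val (Subgroup.mem_center_iff.mp hz ⟨n, hn⟩)
  obtain ⟨s, hs, x, hx, hsx, hzx⟩ := exists_central_involution_eigenvector hinj hzG hzz
    (fun h => hz1 (Subtype.ext (Subtype.ext h))) huu
  have hsG : s ∈ Subgroup.center G ∧ s ∉ N ∧ s * s = 1 := by
    obtain rfl | rfl := hs
    · exact ⟨hu, huN, huu⟩
    · exact ⟨mul_mem hu hzG, fun h => huN ((N.mul_mem_cancel_right z.2).mp h), by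
        rw [Commute.mul_mul_mul_comm (Subgroup.mem_center_iff.mp hu z), huu, hzz, one_mul]⟩
  obtain ⟨w, hsw, hw⟩ :=
    exists_regularVector_apply_eq_self h2 hK hcard hcomm hsG.1 hzG z.2 hx hsx hzx
  exact hasRegularVector_of_index_eq_two hinj h2 hN hsG.1 hsG.2.1 hsG.2.2 hsw hw

/-- The central product `D₈ ∗ C₄`, encoded by the properties that characterise it among the groups
of order 16. -/
def IsCentralProductD8C4 (G : Type*) [Group G] : Prop :=
  Nat.card G = 16 ∧ (¬ ∀ a b : G, a * b = b * a) ∧ IsCyclic (Subgroup.center G) ∧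
    Nat.card (Subgroup.center G) = 4 ∧ Monoid.exponent G = 4

lemma isCentralProductD8C4_of_orderOf_eq_four (hN : N.index = 2) (hcard : Nat.card N = 8)
    (hcomm : ¬ IsMulCommutative N) {u : G} (hu : u ∈ Subgroup.center G) (huN : u ∉ N)
    (hu4 : orderOf u = 4) : IsCentralProductD8C4 G := by
  have hG : Nat.card G = 16 := by rw [← N.card_mul_index, hN, hcard]
  have hGcomm : ¬ IsMulCommutative G := fun _ =>
    hcomm (.of_comm fun a b => Subtype.ext (mul_comm' (a : G) b))
  have hfin : Finite G := Nat.finite_of_card_ne_zero (by lia)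
  have hu' : orderOf (⟨u, hu⟩ : Subgroup.center G) = 4 := by rwa [Subgroup.orderOf_mk]
  have hZ : Nat.card (Subgroup.center G) = 4 := by
    obtain ⟨k, hk⟩ : 4 ∣ Nat.card (Subgroup.center G) := hu' ▸ orderOf_dvd_natCard _
    have hmul := (Subgroup.center G).card_mul_index
    have hindex : (Subgroup.center G).index ≠ 1 := fun h =>
      hGcomm (isMulCommutative_of_center_eq_top (Subgroup.index_eq_one.mp h))
    have hindex' : (Subgroup.center G).index ≠ 2 := fun h =>
      hGcomm (isMulCommutative_of_prime_index_center (h ▸ Nat.prime_two))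
    rw [hG, hk, mul_assoc] at hmul
    have hdvd : k ∣ 4 := ⟨(Subgroup.center G).index, by lia⟩
    have : k ≤ 4 := Nat.le_of_dvd (by lia) hdvd
    interval_cases k <;> lia
  have pow_four_of_mem : ∀ n ∈ N, n ^ 4 = 1 := by
    intro n hn
    have h := mul_self_eq_one_of_mem_center_of_card_eq_eight hcard hcomm
      (pow_mem_center_of_card_eq_prime_cube (q := 2) hcard hcomm ⟨n, hn⟩)
    rw [← sq, ← pow_mul] at h
    exact congrArg Subtype.val h
  refine ⟨hG, fun h => hGcomm (.of_comm h), isCyclic_of_orderOf_eq_card _ (hu'.trans hZ.symm), hZ,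
    Nat.dvd_antisymm (Monoid.exponent_dvd_of_forall_pow_eq_one fun g => ?_)
      (hu4 ▸ Monoid.order_dvd_exponent u)⟩
  by_cases hg : g ∈ N
  · exact pow_four_of_mem g hg
  · have hug : (u * g) ^ 4 = 1 := pow_four_of_mem _
      ((Subgroup.mul_mem_iff_of_index_two hN).mpr (by tauto))
    rwa [Commute.mul_pow (Subgroup.mem_center_iff.mp hu g).symm, ← hu4, pow_orderOf_eq_one,
      one_mul, hu4] at hug

theorem isCentralProductD8C4_of_not_hasRegularVector [Finite K] [Finite V]
    (hinj : Function.Injective ρ) (h2 : (2 : K) ≠ 0) (hK : 4 < Nat.card K)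
    (hreg : ¬ HasRegularVector ρ) (hN : N.index = 2) (hcard : Nat.card N = 8)
    (hcomm : ¬ IsMulCommutative N) {t : G} (htN : t ∉ N) (σ : N →* N)
    (hσ : ∀ n : N, (σ n : G) = t * n * t⁻¹) (hinv : 4 < {n | σ n = n⁻¹}.ncard) :
    IsCentralProductD8C4 G := by
  obtain ⟨m, hm⟩ := exists_forall_eq_conj_of_card_eq_eight hcard hcomm σ hinv
  have huN : (m : G)⁻¹ * t ∉ N := fun h =>
    htN ((N.mul_mem_cancel_left (N.inv_mem m.2)).mp h)
  have hun : ∀ n ∈ N, n * ((m : G)⁻¹ * t) = (m : G)⁻¹ * t * n := by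
    intro n hn
    have h : t * n * t⁻¹ = m * n * (m : G)⁻¹ :=
      (hσ ⟨n, hn⟩).symm.trans (congrArg Subtype.val (hm ⟨n, hn⟩))
    calc n * ((m : G)⁻¹ * t) = (m : G)⁻¹ * (m * n * (m : G)⁻¹) * t := by group
      _ = (m : G)⁻¹ * t * n := by rw [← h]; group
  generalize (m : G)⁻¹ * t = u at huN hun
  have hu := mem_center_of_index_eq_two hN huN rfl hun
  have huu : u * u ≠ 1 := fun h =>
    hreg (hasRegularVector_of_central_involution hinj h2 hK hN hcard hcomm hu huN h)
  have huuN : (⟨u * u, Subgroup.mul_self_mem_of_index_two hN u⟩ : N) ∈ Subgroup.center N :=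
    Subgroup.mem_center_iff.mpr fun n =>
      Subtype.ext (Subgroup.mem_center_iff.mp (mul_mem hu hu) n)
  have hu4 : u ^ 4 = 1 := by
    rw [pow_mul u 2 2, sq, sq]
    exact congrArg Subtype.val (mul_self_eq_one_of_mem_center_of_card_eq_eight hcard hcomm huuN)
  exact isCentralProductD8C4_of_orderOf_eq_four hN hcard hcomm hu huN
    (orderOf_eq_prime_pow (p := 2) (n := 1) (by rwa [pow_one, sq]) hu4)

end OrderSixteen

/-! ### The linear case -/

lemma isMulCommutative_of_odd_card_of_le {G : Type*} [Group G] (hodd : Odd (Nat.card G))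
    (hle : Nat.card G ≤ 13) : IsMulCommutative G := by
  have hcard : (Nat.card G).Prime ∨ Nat.card G ∣ 3 ^ 2 := by
    generalize Nat.card G = m at *
    interval_cases m <;> revert hodd <;> decide
  rcases hcard with h | h
  · exact isMulCommutative_of_prime_card h
  · have : Fact (Nat.Prime 3) := ⟨Nat.prime_three⟩
    exact isMulCommutative_of_card_dvd_prime_sq h

section Linear

variable {p : ℕ} [Fact p.Prime] {V G : Type*} [AddCommGroup V] [Module (ZMod p) V] [Finite V]
  [Group G] {ρ : Representation (ZMod p) G V}

theorem dihedral_or_centralProduct_of_isReflection (hinj : Function.Injective ρ)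
    (hG : (Nat.card G : ZMod p) ≠ 0) (hle : Nat.card G ≤ 2 * p + 9) (hp : 3 ≤ p)
    (hcomm : ¬ IsMulCommutative G) (hreg : ¬ HasRegularVector ρ)
    (hdet : Nat.card (unitsDet ρ).range = 2) {t : G} (ht : IsReflection ρ t)
    (hR : p ≤ {n : (unitsDet ρ).ker | IsReflection ρ (t * n)}.ncard) :
    Nonempty (G ≃* DihedralGroup (p + 1)) ∨ p = 5 ∧ IsCentralProductD8C4 G := by
  have hpp : p.Prime := Fact.out
  have := finite_of_natCard_ne_zero hG
  have hN : (unitsDet ρ).ker.index = 2 := (Subgroup.index_ker _).trans hdet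
  have htt : t * t = 1 := ht.mul_self hinj hG (det_sq_eq_one_of_card_range hdet)
  have htN : t ∉ (unitsDet ρ).ker := ht.unitsDet_ne_one hinj hG
  have hconj (n : (unitsDet ρ).ker) (hn : IsReflection ρ (t * n)) : t * (n : G) * t = (n : G)⁻¹ :=
    hn.mul_mul_eq_inv hinj hG hdet
  have hmul : Nat.card (unitsDet ρ).ker * 2 = Nat.card G := hN ▸ (unitsDet ρ).ker.card_mul_index
  have hcop : ¬ p ∣ Nat.card (unitsDet ρ).ker := fun h =>
    hG ((ZMod.natCast_eq_zero_iff _ _).mpr (hmul ▸ h.mul_right 2))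
  have h2 : (2 : ZMod p) ≠ 0 := fun h =>
    hG (by rw [← hmul, Nat.cast_mul, Nat.cast_ofNat, h, mul_zero])
  have hNle : Nat.card (unitsDet ρ).ker ≤ p + 4 := by lia
  by_cases hNcomm : IsMulCommutative (unitsDet ρ).ker
  · refine Or.inl (nonempty_mulEquiv_dihedralGroup_of_closure_eq_top hinj hG hcomm hN ?_ ht htt htN
      hconj (eq_top_of_le_card hp hcop hNle ?_))
    · exact Nat.lt_of_le_of_ne (hR.trans (Set.ncard_le_card _)) fun h => hcop (dvd_of_eq h)
    · exact hR.trans (Set.ncard_le_ncard Subgroup.subset_closure (Set.toFinite _))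
  · let σ : (unitsDet ρ).ker →* (unitsDet ρ).ker := (MulAut.conjNormal t).toMonoidHom
    have hσ : p ≤ {n | σ n = n⁻¹}.ncard := hR.trans <| Set.ncard_le_ncard
      (fun n hn => Subtype.ext (by
        simpa [σ, inv_eq_of_mul_eq_one_left htt] using hconj n hn)) (Set.toFinite _)
    obtain ⟨rfl, hcard⟩ : p = 5 ∧ Nat.card (unitsDet ρ).ker = 8 := by_contra fun hexc =>
      hNcomm (isMulCommutative_of_le_ncard_inverted hpp hp hcop hNle hexc σ hσ)
    exact Or.inr ⟨rfl, isCentralProductD8C4_of_not_hasRegularVector hinj h2 (by simp) hreg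
      hN hcard hNcomm htN σ (fun n => MulAut.conjNormal_apply t n) hσ⟩

theorem hasRegularVector_or_dihedral_or_centralProduct (hinj : Function.Injective ρ)
    (hcop : ¬ p ∣ Nat.card G) (hle : Nat.card G ≤ 2 * p + 9) :
    HasRegularVector ρ ∨ Nonempty (G ≃* DihedralGroup (p + 1)) ∨
      p = 5 ∧ IsCentralProductD8C4 G := by
  have hG : (Nat.card G : ZMod p) ≠ 0 := by rwa [Ne, ZMod.natCast_eq_zero_iff]
  by_cases hcomm : IsMulCommutative G
  · exact Or.inl (hasRegularVector_of_isMulCommutative hinj hG)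
  refine or_iff_not_imp_left.mpr fun hreg => ?_
  have hp : 3 ≤ p := by
    by_contra! h
    obtain rfl : p = 2 := by have := (Fact.out : p.Prime).two_le; lia
    exact hcomm (isMulCommutative_of_odd_card_of_le
      (Nat.not_even_iff_odd.mp fun h => hcop h.two_dvd) hle)
  have hrefl := le_ncard_reflectionHyperplanes hinj hG hle hp hcomm hreg
  have hdet := card_range_unitsDet_eq_two hinj hG hle hp hcomm hrefl
  obtain ⟨_, t, ht, rfl⟩ : (reflectionHyperplanes ρ).Nonempty :=
    Set.nonempty_of_ncard_ne_zero (by lia)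
  exact dihedral_or_centralProduct_of_isReflection hinj hG hle hp hcomm hreg hdet ht
    (hrefl.trans (ncard_reflectionHyperplanes_le_ncard_ker hinj hG hdet ht))

end Linear

/-! ### Reduction to the Frattini quotient -/

section Frattini

variable {P : Type u} [Group P]

lemma mem_frattini_iff {x : P} : x ∈ frattini P ↔ ∀ M : Subgroup P, IsCoatom M → x ∈ M := by
  simp only [frattini, Order.radical, Subgroup.mem_iInf, Set.mem_ofPred_eq]

lemma exists_representation_of_surjective {p : ℕ} {V : Type*} [AddCommGroup V] [Module (ZMod p) V]
    {π : P → V} (hπ : Function.Surjective π) (hmul : ∀ x y, π (x * y) = π x + π y)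
    (hker : ∀ (g : MulAut P) {x y}, π x = π y → π (g x) = π (g y)) :
    ∃ ρ : Representation (ZMod p) (MulAut P) V, ∀ g x, ρ g (π x) = π (g x) := by
  let action (g : MulAut P) (v : V) : V := π (g (Function.surjInv hπ v))
  have action_apply (g : MulAut P) (x : P) : action g (π x) = π (g x) :=
    hker g (Function.surjInv_eq hπ _)
  let linearAction (g : MulAut P) : V →ₗ[ZMod p] V :=
    (AddMonoidHom.mk' (action g) <| hπ.forall₂.mpr fun x y => by
      rw [← hmul, action_apply, action_apply, action_apply, map_mul, hmul]).toZModLinearMap p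
  have linearAction_apply : ∀ g x, linearAction g (π x) = π (g x) := action_apply
  refine ⟨{ toFun := linearAction, map_one' := ?_, map_mul' := ?_ }, linearAction_apply⟩
  · exact LinearMap.ext <| hπ.forall.mpr (linearAction_apply 1)
  · intro g h
    refine LinearMap.ext <| hπ.forall.mpr fun x => ?_
    rw [Module.End.mul_apply, linearAction_apply, linearAction_apply, linearAction_apply,
      MulAut.mul_apply]

variable [Finite P] {p : ℕ} [Fact p.Prime]

lemma normal_of_isCoatom (hP : IsPGroup p P) {M : Subgroup P} (hM : IsCoatom M) : M.Normal :=
  have := hP.isNilpotent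
  Subgroup.NormalizerCondition.normal_of_coatom M Group.normalizerCondition_of_isNilpotent hM

lemma index_eq_of_isCoatom (hP : IsPGroup p P) {M : Subgroup P} (hM : IsCoatom M) :
    M.index = p := by
  obtain ⟨m, hm⟩ := IsPGroup.iff_card.mp hP
  obtain ⟨n, hn⟩ := IsPGroup.iff_card.mp (hP.to_subgroup M)
  have hp : p.Prime := Fact.out
  have hlt : p ^ n < p ^ m := by
    rw [← hn, ← hm]
    exact lt_of_not_ge fun h => hM.1 (Subgroup.eq_top_of_le_card M h)
  obtain ⟨L, hL, hML⟩ := Sylow.exists_subgroup_card_pow_succ (p := p)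
    (hm ▸ pow_dvd_pow p ((Nat.pow_lt_pow_iff_right hp.one_lt).mp hlt)) hn
  have hL_top : L = ⊤ := hM.2 L <| hML.lt_of_ne fun h => by
    have := Nat.pow_right_injective hp.two_le (hn.symm.trans (h ▸ hL))
    lia
  rw [hL_top, Subgroup.card_top, ← M.card_mul_index, hn, pow_succ] at hL
  exact Nat.eq_of_mul_eq_mul_left (pow_pos hp.pos n) hL

lemma mul_comm_frattiniQuotient (hP : IsPGroup p P) (a b : P ⧸ frattini P) : a * b = b * a := by
  obtain ⟨a, rfl⟩ := QuotientGroup.mk_surjective a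
  obtain ⟨b, rfl⟩ := QuotientGroup.mk_surjective b
  rw [← QuotientGroup.mk_mul, ← QuotientGroup.mk_mul, QuotientGroup.eq, mem_frattini_iff]
  intro M hM
  have := normal_of_isCoatom hP hM
  have hindex : Nat.card (P ⧸ M) = p := index_eq_of_isCoatom hP hM
  have : IsMulCommutative (P ⧸ M) := isMulCommutative_of_prime_card (hindex ▸ Fact.out)
  rw [← QuotientGroup.eq, QuotientGroup.mk_mul, QuotientGroup.mk_mul, mul_comm']

lemma pow_eq_one_frattiniQuotient (hP : IsPGroup p P) (a : P ⧸ frattini P) : a ^ p = 1 := by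
  obtain ⟨a, rfl⟩ := QuotientGroup.mk_surjective a
  rw [← QuotientGroup.mk_pow, QuotientGroup.eq_one_iff, mem_frattini_iff]
  intro M hM
  have := normal_of_isCoatom hP hM
  exact index_eq_of_isCoatom hP hM ▸ M.pow_index_mem a

theorem exists_representation_frattiniQuotient (hP : IsPGroup p P) :
    ∃ (V : Type u) (_ : AddCommGroup V) (_ : Module (ZMod p) V)
      (ρ : Representation (ZMod p) (MulAut P) V) (π : P → V),
      Function.Surjective π ∧ (∀ g x, ρ g (π x) = π (g x)) ∧
        ∀ x y, π x = π y → (x : P ⧸ frattini P) = y := by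
  let _ : CommGroup (P ⧸ frattini P) := { mul_comm := mul_comm_frattiniQuotient hP }
  let _ : Module (ZMod p) (Additive (P ⧸ frattini P)) :=
    AddCommGroup.zmodModule fun a => pow_eq_one_frattiniQuotient hP a.toMul
  let π (x : P) : Additive (P ⧸ frattini P) := Additive.ofMul (x : P ⧸ frattini P)
  have hπ : Function.Surjective π := QuotientGroup.mk_surjective
  have frattini_le_comap (g : MulAut P) : frattini P ≤ (frattini P).comap g.toMonoidHom :=
    (Subgroup.characteristic_iff_comap_eq.mp frattini_characteristic g).ge
  obtain ⟨ρ, hρ⟩ := exists_representation_of_surjective (p := p) hπ (fun _ _ => rfl)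
    fun g _ _ h => congrArg (QuotientGroup.map _ _ g.toMonoidHom (frattini_le_comap g)) h
  exact ⟨_, _, _, ρ, π, hπ, hρ, fun _ _ h => h⟩

end Frattini

section Coprime

variable {P : Type*} [Group P] [Finite P] {q : ℕ} [Fact q.Prime] {g : MulAut P}

lemma exists_apply_eq_self_of_not_dvd_card {N : Subgroup P} (hN : ¬ q ∣ Nat.card N)
    (hg : g ^ q = 1) (hgN : ∀ x, (g x : P ⧸ N) = x) (x : P) :
    ∃ y : P, (y : P ⧸ N) = x ∧ g y = y := by
  let σ : Equiv.Perm {y : P // (y : P ⧸ N) = x} :=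
    Equiv.Perm.subtypePerm g.toEquiv fun y => by
      change (g y : P ⧸ N) = x ↔ _
      rw [hgN]
  have hcard : Nat.card {y : P // (y : P ⧸ N) = x} = Nat.card N := by
    have := QuotientGroup.card_preimage_mk N {(x : P ⧸ N)}
    rwa [Nat.card_unique (α := ({(x : P ⧸ N)} : Set (P ⧸ N))), mul_one] at this
  have hσ : σ ^ q ^ 1 = 1 := by
    ext y
    have hpow (n : ℕ) : ((σ ^ n) y : P) = (g ^ n) y := by
      induction n with
      | zero => rfl
      | succ n ih => rw [pow_succ', pow_succ', MulAut.mul_apply, ← ih]; rfl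
    rw [hpow, pow_one, hg]
    rfl
  have := Fintype.ofFinite {y : P // (y : P ⧸ N) = x}
  obtain ⟨y, hy⟩ := Equiv.Perm.exists_fixed_point_of_prime
    (by rwa [← Nat.card_eq_fintype_card, hcard]) hσ
  exact ⟨y, y.2, congrArg Subtype.val hy⟩

lemma eq_one_of_forall_frattiniQuotient_eq {p : ℕ} [Fact p.Prime] (hP : IsPGroup p P)
    (hqp : q ≠ p) (hg : g ^ q = 1) (h : ∀ x, (g x : P ⧸ frattini P) = x) : g = 1 := by
  obtain ⟨k, hk⟩ := IsPGroup.iff_card.mp (hP.to_subgroup (frattini P))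
  have hq : ¬ q ∣ Nat.card (frattini P) := fun hdvd =>
    hqp ((Nat.prime_dvd_prime_iff_eq Fact.out Fact.out).mp
      (Nat.Prime.dvd_of_dvd_pow Fact.out (hk ▸ hdvd)))
  have hsup : g.toMonoidHom.eqLocus (MonoidHom.id P) ⊔ frattini P = ⊤ := by
    refine eq_top_iff.mpr fun x _ => ?_
    obtain ⟨y, hyx, hy⟩ := exists_apply_eq_self_of_not_dvd_card hq hg h x
    rw [← mul_inv_cancel_left y x]
    exact Subgroup.mul_mem_sup hy (QuotientGroup.eq.mp hyx)
  have htop := frattini_nongenerating hsup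
  exact MulEquiv.ext fun x => (SetLike.ext_iff.mp htop x).mpr trivial

lemma eq_bot_of_forall_frattiniQuotient_eq {p : ℕ} [Fact p.Prime] (hP : IsPGroup p P)
    {H : Subgroup (MulAut P)} (hH : ¬ p ∣ Nat.card H)
    (h : ∀ g ∈ H, ∀ x, (g x : P ⧸ frattini P) = x) : H = ⊥ := by
  by_contra hne
  obtain ⟨q, hq, hqH⟩ := Nat.exists_prime_and_dvd (H.card_eq_one.not.mpr hne)
  have : Fact q.Prime := ⟨hq⟩
  obtain ⟨g, hg⟩ := exists_prime_orderOf_dvd_card' q hqH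
  have hqp : q ≠ p := fun hqp => hH (hqp ▸ hqH)
  have hgq : (g : MulAut P) ^ q = 1 := by
    rw [← hg, ← Subgroup.orderOf_coe, pow_orderOf_eq_one]
  have hg1 : (g : MulAut P) = 1 := eq_one_of_forall_frattiniQuotient_eq hP hqp hgq (h g g.2)
  rw [← Subgroup.orderOf_coe, hg1, orderOf_one] at hg
  exact hq.one_lt.ne hg

end Coprime

theorem exists_faithful_representation {p : ℕ} [Fact p.Prime] {P : Type u} [Group P] [Finite P]
    (hP : IsPGroup p P) {G : Subgroup (MulAut P)} (hcop : ¬ p ∣ Nat.card G) :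
    ∃ (V : Type u) (_ : AddCommGroup V) (_ : Module (ZMod p) V) (ρ : Representation (ZMod p) G V)
      (π : P → V), Function.Injective ρ ∧ Function.Surjective π ∧
        ∀ (g : G) x, ρ g (π x) = π ((g : MulAut P) x) := by
  obtain ⟨V, _, _, ρ, π, hπ, hρ, hker⟩ := exists_representation_frattiniQuotient hP
  refine ⟨V, _, _, ρ.comp G.subtype, π, ?_, hπ, fun g x => hρ g x⟩
  let K : Subgroup (MulAut P) := (ρ.comp G.subtype).ker.map G.subtype
  have hK : ¬ p ∣ Nat.card K := fun h =>
    hcop (h.trans (Subgroup.card_dvd_of_le (Subgroup.map_subtype_le _)))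
  have hK_bot : K = ⊥ := eq_bot_of_forall_frattiniQuotient_eq hP hK <| by
    rintro _ ⟨g, hg, rfl⟩ x
    exact hker _ _ ((hρ g x).symm.trans (LinearMap.congr_fun hg (π x)))
  exact (MonoidHom.ker_eq_bot_iff _).mp
    ((Subgroup.map_eq_bot_iff_of_injective _ G.subtype_injective).mp hK_bot)

end RegularOrbit

/-- Main theorem: if `G` is a `p'`-automorphism group of a finite `p`-group `P` with
`|G| ≤ 2p + 9`, then either `G` has a regular orbit on `P`, or `G ≅ D_{2p+2}`,
or `p = 5` and `G ≅ D₈ ∗ C₄` (the unique nonabelian group of order 16 with cyclic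
center of order 4 and exponent 4). -/
theorem regular_orbit_of_le_two_mul_add_nine
    (p : ℕ) (hp : p.Prime) (P : Type*) [Group P] [Finite P] (hP : IsPGroup p P)
    (G : Subgroup (MulAut P)) (hcop : ¬ p ∣ Nat.card G)
    (hle : Nat.card G ≤ 2 * p + 9) :
    (∃ x : P, ∀ g ∈ G, g x = x → g = 1) ∨
    Nonempty (G ≃* DihedralGroup (p + 1)) ∨
    (p = 5 ∧ Nat.card G = 16 ∧ (¬ ∀ a b : G, a * b = b * a) ∧
      IsCyclic (Subgroup.center G) ∧ Nat.card (Subgroup.center G) = 4 ∧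
      Monoid.exponent G = 4) := by
  have : Fact p.Prime := ⟨hp⟩
  obtain ⟨V, _, _, ρ, π, hinj, hπ, hρ⟩ := RegularOrbit.exists_faithful_representation hP hcop
  have : Finite V := Finite.of_surjective π hπ
  refine (RegularOrbit.hasRegularVector_or_dihedral_or_centralProduct hinj hcop hle).imp_left ?_
  rintro ⟨v, hv⟩
  obtain ⟨x, rfl⟩ := hπ v
  exact ⟨x, fun g hg hgx =>
    congrArg Subtype.val (hv ⟨g, hg⟩ ((hρ ⟨g, hg⟩ x).trans (congrArg π hgx)))⟩
end

section
/- For every odd prime p there exists a faithful action of the dihedral group D_{2p+2} of order 2p + 2 on an elementary abelian group P of order p² (a 2-dimensional vector space over F_p, acting by linear automorphisms) such that D_{2p+2} has no regular orbit on P, i.e. every point of P has nontrivial stabilizer. -/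
/-!
Let `L / K` be the quadratic extension of the field with `q` elements, `σ : x ↦ x ^ q` its
Frobenius and `H` the group of `u ∈ Lˣ` with `u * σ u = 1`, i.e. the group of `(q + 1)`-st roots of
unity. It is cyclic of order `q + 1` and `σ` inverts it, so `H ⋊ ⟨σ⟩` is dihedral of order
`2 * (q + 1)`, acting `K`-linearly on `L`. If `x ≠ 0`, then `u = σ x / x` lies in `H`, and the
reflection `y ↦ σ (u * y)` fixes `x` because `σ (u * x) = σ (σ x) = x`.
-/

section DihedralLift

variable {G : Type*} [Group G] {n : ℕ} {r s : G}

theorem zpow_zmodCast_intCast (hr : r ^ n = 1) (k : ℤ) : r ^ ((k : ZMod n).cast : ℤ) = r ^ k := by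
  conv_rhs => rw [← Int.emod_add_mul_ediv k n, zpow_add, zpow_mul, zpow_natCast, hr, one_zpow,
    mul_one, ← ZMod.coe_intCast]

/-- The universal property of the dihedral group: the homomorphism sending the rotation `r 1` to
`r` and the reflection `sr 0` to `s`. The relation `s * r * s⁻¹ = r⁻¹` is expressed by
`SemiconjBy`, and the exponent of `r` is taken to be an integer representing `i : ZMod n`. -/
def dihedralLift (hr : r ^ n = 1) (hs : s ^ 2 = 1) (hsr : SemiconjBy s r r⁻¹) :
    DihedralGroup n →* G where
  toFun
    | .r i => r ^ (i.cast : ℤ)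
    | .sr i => s * r ^ (i.cast : ℤ)
  map_one' := by simp only [DihedralGroup.one_def, ZMod.cast_zero, zpow_zero]
  map_mul' := by
    have hswap (k : ℤ) : r ^ k * s = s * r ^ (-k) := by
      simpa only [inv_zpow', neg_neg] using (hsr.zpow_right (-k)).eq.symm
    rintro (i | i) (j | j) <;>
      obtain ⟨i, rfl⟩ := ZMod.intCast_surjective i <;>
      obtain ⟨j, rfl⟩ := ZMod.intCast_surjective j
    · simp only [DihedralGroup.r_mul_r, ← Int.cast_add, zpow_zmodCast_intCast hr, zpow_add]
    · simp only [DihedralGroup.r_mul_sr, ← Int.cast_sub, zpow_zmodCast_intCast hr]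
      rw [← mul_assoc, hswap, mul_assoc, ← zpow_add, neg_add_eq_sub]
    · simp only [DihedralGroup.sr_mul_r, ← Int.cast_add, zpow_zmodCast_intCast hr, zpow_add,
        mul_assoc]
    · simp only [DihedralGroup.sr_mul_sr, ← Int.cast_sub, zpow_zmodCast_intCast hr]
      rw [mul_assoc, ← mul_assoc _ s, hswap, ← mul_assoc, ← mul_assoc, ← sq, hs, one_mul,
        ← zpow_add, neg_add_eq_sub]

theorem dihedralLift_r_intCast (hr : r ^ n = 1) (hs : s ^ 2 = 1) (hsr : SemiconjBy s r r⁻¹)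
    (k : ℤ) : dihedralLift hr hs hsr (.r k) = r ^ k :=
  zpow_zmodCast_intCast hr k

theorem dihedralLift_sr_intCast (hr : r ^ n = 1) (hs : s ^ 2 = 1) (hsr : SemiconjBy s r r⁻¹)
    (k : ℤ) : dihedralLift hr hs hsr (.sr k) = s * r ^ k :=
  congrArg (s * ·) (zpow_zmodCast_intCast hr k)

theorem dihedralLift_injective (hr : orderOf r = n) (hs : s ^ 2 = 1) (hsr : SemiconjBy s r r⁻¹)
    (hmem : s ∉ Subgroup.zpowers r) :
    Function.Injective (dihedralLift (orderOf_dvd_iff_pow_eq_one.mp hr.dvd) hs hsr) := by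
  rw [injective_iff_map_eq_one]
  rintro (i | i) hi <;> obtain ⟨k, rfl⟩ := ZMod.intCast_surjective i
  · rw [dihedralLift_r_intCast, ← orderOf_dvd_iff_zpow_eq_one, hr] at hi
    rw [(ZMod.intCast_zmod_eq_zero_iff_dvd k n).mpr hi, DihedralGroup.r_zero]
  · rw [dihedralLift_sr_intCast, mul_eq_one_iff_eq_inv, ← zpow_neg] at hi
    exact absurd ⟨-k, hi.symm⟩ hmem

end DihedralLift

theorem toModuleAut_injective {K S M : Type*} [Semiring K] [AddCommMonoid M] [Module K M] [Group S]
    [DistribMulAction S M] [SMulCommClass S K M] [FaithfulSMul S M] :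
    Function.Injective (DistribMulAction.toModuleAut K M (S := S)) :=
  fun _ _ h ↦ eq_of_smul_eq_smul (DFunLike.congr_fun h)

section NormOneUnits

open DistribMulAction (toModuleAut)

variable {K L : Type*} [CommSemiring K]

section CommSemiring

variable [CommSemiring L] [Algebra K L] {σ : Gal(L/K)} {u : Lˣ}

/-- The units `u` with `u * σ u = 1`. For the nontrivial automorphism `σ` of a quadratic extension
these are the elements of norm one. -/
def normOneUnits (σ : Gal(L/K)) : Subgroup Lˣ :=
  (MonoidHom.id Lˣ * Units.map (σ : L →* L)).ker

theorem mem_normOneUnits : u ∈ normOneUnits σ ↔ (u : L) * σ u = 1 := by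
  simp [normOneUnits, Units.ext_iff]

theorem semiconjBy_toModuleAut_of_mem_normOneUnits (hu : u ∈ normOneUnits σ) :
    SemiconjBy (toModuleAut K L σ) (toModuleAut K L u) (toModuleAut K L u)⁻¹ := by
  have hσu : σ u = ↑u⁻¹ := Units.eq_inv_of_mul_eq_one_left (mem_normOneUnits.mp hu)
  rw [← map_inv]
  ext x
  simp [Units.smul_def, hσu]

theorem eq_one_of_toModuleAut_eq (h : toModuleAut K L σ = toModuleAut K L u) : σ = 1 := by
  have hu : u = 1 := by
    have h₁ : σ • (1 : L) = u • (1 : L) := DFunLike.congr_fun h 1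
    rw [smul_one, Units.smul_def, smul_eq_mul, mul_one] at h₁
    exact Units.ext h₁.symm
  rw [hu, map_one] at h
  exact toModuleAut_injective (h.trans (map_one _).symm)

theorem map_div_mem_normOneUnits (hσ : σ ^ 2 = 1) (u : Lˣ) :
    Units.map (σ : L →* L) u / u ∈ normOneUnits σ := by
  have hσσ : Units.map (σ : L →* L) (Units.map (σ : L →* L) u) = u :=
    Units.ext <| DFunLike.congr_fun ((sq σ).symm.trans hσ) (u : L)
  rw [normOneUnits, MonoidHom.mem_ker, MonoidHom.mul_apply, MonoidHom.id_apply, map_div, hσσ,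
    div_mul_div_cancel, div_self']

end CommSemiring

variable [Field L] [Algebra K L] {σ : Gal(L/K)}

-- If the group is infinite then `Nat.card` is `0`, and `DihedralGroup 0` is the infinite dihedral
-- group, as it should be.
theorem exists_faithful_dihedral_action_without_regular_orbit [IsCyclic (normOneUnits σ)]
    (hσ : orderOf σ = 2) :
    ∃ φ : DihedralGroup (Nat.card (normOneUnits σ)) →* (L ≃ₗ[K] L),
      Function.Injective φ ∧ ∀ x, ∃ g, g ≠ 1 ∧ φ g x = x := by
  obtain ⟨ζ, hζ⟩ := (Subgroup.isCyclic_iff_exists_zpowers_eq_top (normOneUnits σ)).mp inferInstance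
  have hσ₂ : σ ^ 2 = 1 := hσ ▸ pow_orderOf_eq_one σ
  have horder : orderOf (toModuleAut K L ζ) = Nat.card (normOneUnits σ) := by
    rw [orderOf_injective _ toModuleAut_injective, ← hζ, Nat.card_zpowers]
  have hsq : toModuleAut K L σ ^ 2 = 1 := by rw [← map_pow, hσ₂, map_one]
  have hsemi := semiconjBy_toModuleAut_of_mem_normOneUnits (hζ ▸ Subgroup.mem_zpowers ζ)
  have hmem : toModuleAut K L σ ∉ Subgroup.zpowers (toModuleAut K L ζ) := by
    rintro ⟨k, hk⟩
    have hσ₁ : σ = 1 := eq_one_of_toModuleAut_eq (hk.symm.trans (map_zpow _ ζ k).symm)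
    simp [hσ₁] at hσ
  refine ⟨_, dihedralLift_injective horder hsq hsemi hmem, fun x ↦ ?_⟩
  have hsr (i) : DihedralGroup.sr i ≠ (1 : DihedralGroup (Nat.card (normOneUnits σ))) := nofun
  rcases eq_or_ne x 0 with rfl | hx
  · exact ⟨.sr 0, hsr 0, map_zero _⟩
  · obtain ⟨k, hk⟩ := hζ.ge (map_div_mem_normOneUnits hσ₂ (Units.mk0 x hx))
    have hkx : (ζ ^ k) • x = σ x := congrArg Units.val (eq_div_iff_mul_eq'.mp hk)
    refine ⟨.sr k, hsr k, ?_⟩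
    rw [dihedralLift_sr_intCast, ← map_zpow]
    calc σ ((ζ ^ k) • x) = (σ ^ 2) x := by rw [hkx, sq, AlgEquiv.mul_apply]
      _ = x := by rw [hσ₂, AlgEquiv.one_apply]

end NormOneUnits

section FiniteField

variable {K L : Type*} [Field K] [Fintype K] [Field L] [Algebra K L]

theorem normOneUnits_frobeniusAlgEquivOfAlgebraic [Algebra.IsAlgebraic K L] :
    normOneUnits (FiniteField.frobeniusAlgEquivOfAlgebraic K L) =
      rootsOfUnity (Fintype.card K + 1) L := by
  ext u
  rw [mem_normOneUnits, mem_rootsOfUnity', pow_succ',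
    FiniteField.coe_frobeniusAlgEquivOfAlgebraic]

theorem card_normOneUnits_frobeniusAlgEquivOfAlgebraic [Finite L] (hL : Module.finrank K L = 2) :
    Nat.card (normOneUnits (FiniteField.frobeniusAlgEquivOfAlgebraic K L)) =
      Fintype.card K + 1 := by
  obtain ⟨g, hg⟩ := IsCyclic.exists_ofOrder_eq_natCard (α := Lˣ)
  have hcard : Nat.card Lˣ = (Fintype.card K - 1) * (Fintype.card K + 1) := by
    rw [Nat.card_units, Module.natCard_eq_pow_finrank (K := K), hL, Nat.card_eq_fintype_card,
      mul_comm, ← Nat.sq_sub_sq, one_pow]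
  rw [normOneUnits_frobeniusAlgEquivOfAlgebraic]
  exact (IsPrimitiveRoot.pow Nat.card_pos (IsPrimitiveRoot.iff_orderOf.mpr hg)
    hcard).card_rootsOfUnity'

end FiniteField

section LinearAutCongr

variable {R M N : Type*} [Semiring R] [AddCommMonoid M] [AddCommMonoid N] [Module R M] [Module R N]

/-- Conjugation by a linear equivalence, as an isomorphism of groups of linear automorphisms. -/
def linearAutCongr (e : M ≃ₗ[R] N) : (M ≃ₗ[R] M) ≃* (N ≃ₗ[R] N) :=
  (LinearMap.GeneralLinearGroup.generalLinearEquiv R M).symm.trans <|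
    (LinearMap.GeneralLinearGroup.congrLinearEquiv e).trans <|
      LinearMap.GeneralLinearGroup.generalLinearEquiv R N

theorem linearAutCongr_apply (e : M ≃ₗ[R] N) (f : M ≃ₗ[R] M) (x : N) :
    linearAutCongr e f x = e (f (e.symm x)) :=
  rfl

end LinearAutCongr

theorem dihedral_faithful_action_without_regular_orbit_general (K V : Type*) [Field K] [Finite K]
    [AddCommGroup V] [Module K V] (hV : Module.finrank K V = 2) :
    ∃ φ : DihedralGroup (Nat.card K + 1) →* (V ≃ₗ[K] V),
      Function.Injective φ ∧ ∀ v, ∃ g, g ≠ 1 ∧ φ g v = v := by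
  obtain ⟨p, hK⟩ := CharP.exists K
  have : Fact p.Prime := ⟨CharP.char_is_prime K p⟩
  have := Fintype.ofFinite K
  have : Module.Finite K V := Module.finite_of_finrank_pos (hV ▸ two_pos)
  let L := FiniteField.Extension K p 2
  have hL : Module.finrank K L = 2 := FiniteField.finrank_extension K p 2
  have hact := exists_faithful_dihedral_action_without_regular_orbit
    ((FiniteField.orderOf_frobeniusAlgEquivOfAlgebraic K L).trans hL)
  rw [card_normOneUnits_frobeniusAlgEquivOfAlgebraic hL, ← Nat.card_eq_fintype_card] at hact
  obtain ⟨φ, hφ, hfix⟩ := hact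
  let e : L ≃ₗ[K] V := LinearEquiv.ofFinrankEq L V (hL.trans hV.symm)
  refine ⟨(linearAutCongr e).toMonoidHom.comp φ, (linearAutCongr e).injective.comp hφ, fun v ↦ ?_⟩
  obtain ⟨g, hg, hgv⟩ := hfix (e.symm v)
  refine ⟨g, hg, ?_⟩
  calc linearAutCongr e (φ g) v = e (φ g (e.symm v)) := linearAutCongr_apply e (φ g) v
    _ = v := by rw [hgv, e.apply_symm_apply]

/-- For every odd prime `p` the dihedral group `D_{2p+2}` of order `2p + 2` acts
faithfully by linear automorphisms on a 2-dimensional vector space over `F_p`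
(an elementary abelian group of order `p²`) without a regular orbit: every point
has nontrivial stabilizer. -/
theorem dihedral_faithful_action_without_regular_orbit
    (p : ℕ) [Fact p.Prime] (hodd : Odd p) :
    ∃ φ : DihedralGroup (p + 1) →* ((Fin 2 → ZMod p) ≃ₗ[ZMod p] (Fin 2 → ZMod p)),
      Function.Injective φ ∧
      ∀ v : Fin 2 → ZMod p, ∃ g : DihedralGroup (p + 1), g ≠ 1 ∧ φ g v = v := by
  have h := dihedral_faithful_action_without_regular_orbit_general (ZMod p) (Fin 2 → ZMod p)
    (Module.finrank_fin_fun _)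
  rwa [Nat.card_zmod] at h
end

section
/- Let F be a finite field with q elements, let V be a finite-dimensional vector space over F, and let G be a nontrivial finite subgroup of GL(V). If G has no regular orbit on V (i.e. every v ∈ V has nontrivial stabilizer in G), then the number of subgroups of G of prime order is at least q + 1. -/
/-!
If a nontrivial element of a torsion group fixes `v`, then so does the prime-order subgroup
generated by one of its powers. Hence, when there is no regular orbit, the fixed spaces of the
prime-order subgroups, all of them proper, cover `V`.

A cover of `V` by finitely many proper subspaces has more than `|F|` members: in an irredundant
subcover, some `u ∈ W i` lies in no other member. Choose `v ∉ W i`. Each point of the line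
`v + F u` avoids `W i`, and any other member meets the line at most once, so the points of the
line lie in `|F|` further subspaces.
-/

section Cover

lemma exists_subset_iUnion_eq_univ_irredundant {α ι : Type*} [Finite ι] {s : ι → Set α}
    (hs : ⋃ i, s i = Set.univ) :
    ∃ t : Set ι, ⋃ i : t, s i = Set.univ ∧ ∀ i : t, ∃ x, ∀ j : t, x ∈ s j ↔ j = i := by
  obtain ⟨t, ht⟩ := exists_minimal_of_wellFoundedLT
    (fun t : Set ι ↦ ⋃ i : t, s i = Set.univ) ⟨Set.univ, by simpa using hs⟩
  refine ⟨t, ht.prop, fun i ↦ ?_⟩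
  have not_cover : ⋃ j : ↥(t \ {i.1}), s j ≠ Set.univ := fun hcover ↦
    (ht.le_of_le hcover Set.sdiff_subset i.2).2 rfl
  obtain ⟨x, hx⟩ := (Set.ne_univ_iff_exists_notMem _).1 not_cover
  have eq_of_mem (j : t) (hj : x ∈ s j) : j = i := by
    by_contra hne
    exact hx (Set.mem_iUnion.2 ⟨⟨j, j.2, Subtype.coe_ne_coe.2 hne⟩, hj⟩)
  obtain ⟨j, hj⟩ := Set.iUnion_eq_univ_iff.1 ht.prop x
  exact ⟨x, fun k ↦ ⟨eq_of_mem k, fun hk ↦ by rwa [hk, ← eq_of_mem j hj]⟩⟩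

variable {F V ι : Type*} [DivisionRing F] [AddCommGroup V] [Module F V]

lemma eq_of_add_smul_mem_of_notMem {W : Submodule F V} {u v : V} (hu : u ∉ W) {a b : F}
    (ha : v + a • u ∈ W) (hb : v + b • u ∈ W) : a = b := by
  by_contra hne
  have hsub : (a - b) • u ∈ W := by
    simpa [sub_smul] using W.sub_mem ha hb
  exact hu ((W.smul_mem_iff (sub_ne_zero.2 hne)).1 hsub)

lemma enatCard_add_one_le_of_mem_iff_eq {W : ι → Submodule F V}
    (hcover : ⋃ i, (W i : Set V) = Set.univ) {i : ι} (hi : W i ≠ ⊤) {u : V}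
    (hu : ∀ j, u ∈ W j ↔ j = i) : ENat.card F + 1 ≤ ENat.card ι := by
  obtain ⟨v, hv⟩ := SetLike.exists_not_mem_of_ne_top (W i) hi
  choose f hf using fun c : F ↦ Set.iUnion_eq_univ_iff.1 hcover (v + c • u)
  have f_ne (c : F) : f c ≠ i := fun hc ↦
    hv (((W i).add_mem_iff_left ((W i).smul_mem c ((hu i).2 rfl))).1 (hc ▸ hf c))
  have f_injective : Function.Injective f := fun a b hab ↦
    eq_of_add_smul_mem_of_notMem (mt (hu (f a)).1 (f_ne a)) (hf a) (hab ▸ hf b)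
  calc ENat.card F + 1 = ENat.card (F ⊕ Unit) := by simp
    _ ≤ ENat.card ι := ENat.card_le_card_of_injective
      (f_injective.sumElim (Function.injective_of_subsingleton fun _ : Unit ↦ i)
        fun c _ ↦ f_ne c)

theorem enatCard_add_one_le_of_iUnion_eq_univ {W : ι → Submodule F V} (hW : ∀ i, W i ≠ ⊤)
    (hcover : ⋃ i, (W i : Set V) = Set.univ) : ENat.card F + 1 ≤ ENat.card ι := by
  cases finite_or_infinite ι
  · obtain ⟨t, ht, hirr⟩ := exists_subset_iUnion_eq_univ_irredundant hcover
    obtain ⟨i, -⟩ := Set.iUnion_eq_univ_iff.1 ht 0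
    obtain ⟨u, hu⟩ := hirr i
    exact (enatCard_add_one_le_of_mem_iff_eq ht (hW i) hu).trans
      (ENat.card_le_card_of_injective Subtype.val_injective)
  · simp

end Cover

section FixedSpace

variable (F V G : Type*) [Semiring F] [AddCommMonoid V] [Module F V] [Monoid G]
  [DistribMulAction G V] [SMulCommClass G F V]

/-- The fixed space `C_V(G)` of a linear action of `G` on `V`. For a subgroup `M` of a group
acting on `V`, the fixed space `C_V(M)` is `fixedSpace F V M`, with the restricted action. -/
def fixedSpace : Submodule F V where
  __ := FixedPoints.addSubmonoid G V
  smul_mem' c v hv g := by rw [smul_comm, hv g]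

variable {F V G}

lemma mem_fixedSpace {v : V} : v ∈ fixedSpace F V G ↔ ∀ g : G, g • v = v :=
  Iff.rfl

lemma fixedSpace_ne_top [FaithfulSMul G V] [Nontrivial G] : fixedSpace F V G ≠ ⊤ := by
  intro htop
  obtain ⟨g, hg⟩ := exists_ne (1 : G)
  refine hg (FaithfulSMul.eq_of_smul_eq_smul fun v : V ↦ ?_)
  rw [one_smul, mem_fixedSpace.1 (htop ▸ Submodule.mem_top : v ∈ fixedSpace F V G) g]

end FixedSpace

lemma exists_le_zpowers_prime_card {G : Type*} [Group G] {g : G} (hfin : IsOfFinOrder g)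
    (hg : g ≠ 1) : ∃ M ≤ Subgroup.zpowers g, (Nat.card M).Prime := by
  obtain ⟨p, hp, hdvd⟩ := Nat.exists_prime_and_dvd (orderOf_eq_one_iff.not.2 hg)
  refine ⟨Subgroup.zpowers (g ^ (orderOf g / p)),
    Subgroup.zpowers_le.2 (Subgroup.npow_mem_zpowers g _), ?_⟩
  rwa [Nat.card_zpowers, orderOf_pow_orderOf_div hfin.orderOf_pos.ne' hdvd]

theorem card_minimal_subgroups_of_no_regular_orbit_general
    (F V G : Type*) [DivisionRing F] [AddCommGroup V] [Module F V]
    [Group G] [DistribMulAction G V] [SMulCommClass G F V] [FaithfulSMul G V]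
    (hG : IsMulTorsion G) (hno : ∀ v : V, ∃ g : G, g ≠ 1 ∧ g • v = v) :
    ENat.card F + 1 ≤ ENat.card {M : Subgroup G // (Nat.card M).Prime} := by
  refine enatCard_add_one_le_of_iUnion_eq_univ
    (W := fun M : {M : Subgroup G // (Nat.card M).Prime} ↦ fixedSpace F V M.1) ?_ ?_
  · rintro ⟨M, hM⟩
    have : Finite M := Nat.finite_of_card_ne_zero hM.ne_zero
    have : Nontrivial M := Finite.one_lt_card_iff_nontrivial.1 hM.one_lt
    exact fixedSpace_ne_top
  · refine Set.iUnion_eq_univ_iff.2 fun v ↦ ?_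
    obtain ⟨g, hg, hgv⟩ := hno v
    obtain ⟨M, hMg, hM⟩ := exists_le_zpowers_prime_card (hG g) hg
    have hMv : M ≤ MulAction.stabilizer G v := hMg.trans (Subgroup.zpowers_le.2 hgv)
    exact ⟨⟨M, hM⟩, mem_fixedSpace.2 fun m ↦ hMv m.2⟩

/-- If a nontrivial finite subgroup `G` of `GL(V)`, `V` a finite-dimensional vector
space over a finite field `F` with `q` elements, has no regular orbit on `V`, then
`G` has at least `q + 1` subgroups of prime order (minimal subgroups). -/
theorem card_minimal_subgroups_of_no_regular_orbit
    (F : Type*) [Field F] [Fintype F]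
    (V : Type*) [AddCommGroup V] [Module F V] [FiniteDimensional F V]
    (G : Subgroup (LinearMap.GeneralLinearGroup F V)) (hG : G ≠ ⊥)
    (hno : ∀ v : V, ∃ g ∈ G, g ≠ 1 ∧ (g : V →ₗ[F] V) v = v) :
    Fintype.card F + 1 ≤ Nat.card {M : Subgroup G // (Nat.card M).Prime} := by
  have : Finite (V →ₗ[F] V) := Module.finite_of_finite F
  have hcard := card_minimal_subgroups_of_no_regular_orbit_general F V G isMulTorsion_of_finite
    fun v ↦ let ⟨g, hg, hne, hgv⟩ := hno v; ⟨⟨g, hg⟩, by simpa using hne, hgv⟩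
  rw [ENat.card_eq_coe_fintype_card, ENat.card_eq_coe_natCard] at hcard
  exact_mod_cast hcard
end

section
/- Let p be a prime and let N be a finite subgroup of SL(n, F_p) with p ∤ |N| and |N| ≤ p². Then N has a regular orbit on the natural module F_p^n, i.e. there exists v ∈ F_p^n with trivial stabilizer in N. -/
/-!
An element `g ≠ 1` of `SL(V)` whose order is invertible in the field `K` fixes a subspace of
codimension at least two: if `g` fixed a hyperplane pointwise, then `det g = 1` would make it a
transvection `x ↦ x + f x • v` with `f v = 0`, whose `m`-th power `x ↦ x + m • f x • v` is not the
identity when `m ≠ 0` in `K`. Hence, for `|K| = q`, each nontrivial element of `N` fixes at most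
`|V| / q ^ 2` vectors, and the fewer than `q ^ 2` nontrivial elements cannot have fixed spaces
covering `V`.
-/

theorem exists_stabilizer_eq_bot_of_mul_card_fixedBy_le {G X : Type*} [Group G] [Finite G]
    [MulAction G X] [Finite X] [Nonempty X] {c : ℕ}
    (hfix : ∀ g : G, g ≠ 1 → c * Nat.card (MulAction.fixedBy X g) ≤ Nat.card X)
    (hcard : Nat.card G ≤ c) : ∃ x : X, MulAction.stabilizer G x = ⊥ := by
  classical
  have := Fintype.ofFinite G
  by_contra! hstab
  have hsurj : Function.Surjective
      fun y : Σ g : {g : G // g ≠ 1}, MulAction.fixedBy X g.1 ↦ (y.2 : X) := fun x ↦ by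
    obtain ⟨g, hg⟩ := Subgroup.ne_bot_iff_exists_ne_one.1 (hstab x)
    exact ⟨⟨⟨g, by simpa using hg⟩, x, g.2⟩, rfl⟩
  have hcover : c * Nat.card X ≤ (Nat.card G - 1) * Nat.card X :=
    calc
      c * Nat.card X ≤ c * ∑ g : {g : G // g ≠ 1}, Nat.card (MulAction.fixedBy X g.1) := by
        rw [← Nat.card_sigma]
        exact Nat.mul_le_mul_left c (Nat.card_le_card_of_surjective _ hsurj)
      _ = ∑ g : {g : G // g ≠ 1}, c * Nat.card (MulAction.fixedBy X g.1) := Finset.mul_sum _ _ _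
      _ ≤ ∑ _g : {g : G // g ≠ 1}, Nat.card X := Finset.sum_le_sum fun g _ ↦ hfix g g.2
      _ = (Nat.card G - 1) * Nat.card X := by simp
  have hle : c ≤ Nat.card G - 1 := Nat.le_of_mul_le_mul_right hcover Nat.card_pos
  have hpos : 0 < Nat.card G := Nat.card_pos
  omega

section Transvection

open LinearEquiv

variable {R V : Type*} [AddCommGroup V]

theorem transvection_pow_apply [Ring R] [Module R V] {f : Module.Dual R V} {v : V} (hfv : f v = 0)
    (m : ℕ) (x : V) : (transvection hfv ^ m) x = x + m • f x • v := by
  induction m with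
  | zero => simp
  | succ m ih =>
    rw [pow_succ', LinearEquiv.mul_apply, ih, transvection.apply]
    simp [hfv, succ_nsmul, add_assoc]

theorem eq_one_of_mem_transvections_of_pow_eq_one [Ring R] [Module R V] {e : V ≃ₗ[R] V}
    (he : e ∈ transvections R V) {m : ℕ} (hm : IsUnit (m : R)) (hpow : e ^ m = 1) : e = 1 := by
  obtain ⟨f, v, hfv, rfl⟩ := he
  ext x
  have hx : m • f x • v = 0 := by
    have := transvection_pow_apply hfv m x
    rwa [hpow, LinearEquiv.coe_one, id_eq, left_eq_add] at this
  rw [← Nat.cast_smul_eq_nsmul R, hm.smul_eq_zero] at hx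
  simp [LinearMap.transvection.apply, hx]

theorem mem_transvections_of_mem_dilatransvections_of_det_eq_one [CommRing R] [Module R V]
    [Module.Free R V] [Module.Finite R V] {e : V ≃ₗ[R] V} (he : e ∈ dilatransvections R V)
    (hdet : LinearMap.det (e : V →ₗ[R] V) = 1) : e ∈ transvections R V := by
  obtain ⟨f, v, hfv⟩ := he
  rw [hfv, LinearMap.transvection.det, add_eq_left] at hdet
  exact ⟨f, v, hdet, toLinearMap_injective hfv⟩

end Transvection

section FixedSpace

variable {K V : Type*} [Field K] [AddCommGroup V] [Module K V] [FiniteDimensional K V]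

theorem two_le_finrank_quotient_fixedSubmodule {e : V ≃ₗ[K] V}
    (hdet : LinearMap.det (e : V →ₗ[K] V) = 1) {m : ℕ} (hm : (m : K) ≠ 0) (hpow : e ^ m = 1)
    (he : e ≠ 1) : 2 ≤ Module.finrank K (V ⧸ e.fixedSubmodule) := by
  by_contra! hlt
  have hdil : e ∈ LinearEquiv.dilatransvections K V :=
    LinearEquiv.mem_dilatransvections_iff_finrank_quotient.2 (Nat.le_of_lt_succ hlt)
  exact he (eq_one_of_mem_transvections_of_pow_eq_one
    (mem_transvections_of_mem_dilatransvections_of_det_eq_one hdil hdet) hm.isUnit hpow)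

theorem natCard_pow_mul_natCard_le_of_le_finrank_quotient [Finite K] {W : Submodule K V} {d : ℕ}
    (hd : d ≤ Module.finrank K (V ⧸ W)) : Nat.card K ^ d * Nat.card W ≤ Nat.card V := by
  calc
    Nat.card K ^ d * Nat.card W ≤ Nat.card K ^ Module.finrank K (V ⧸ W) * Nat.card W :=
      Nat.mul_le_mul_right _ (Nat.pow_le_pow_right Nat.card_pos hd)
    _ = Nat.card V := by
      rw [← Module.natCard_eq_pow_finrank, mul_comm, W.card_eq_card_quotient_mul_card]

end FixedSpace

theorem regular_orbit_of_sl_subgroup_general {K V : Type*} [Field K] [Finite K] [AddCommGroup V]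
    [Module K V] [FiniteDimensional K V] (N : Subgroup (SpecialLinearGroup K V))
    (hcop : (Nat.card N : K) ≠ 0) (hle : Nat.card N ≤ Nat.card K ^ 2) :
    ∃ v : V, ∀ g ∈ N, g • v = v → g = 1 := by
  have : Finite V := Module.finite_of_finite K
  have : Finite N := Nat.finite_of_card_ne_zero fun h ↦ hcop (by simp [h])
  have hfix (g : N) (hg : g ≠ 1) :
      Nat.card K ^ 2 * Nat.card (MulAction.fixedBy V g) ≤ Nat.card V := by
    have hpow : (g.1 : V ≃ₗ[K] V) ^ Nat.card N = 1 :=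
      congrArg (fun h : N ↦ (h.1 : V ≃ₗ[K] V)) (pow_card_eq_one' (x := g))
    have hne : (g.1 : V ≃ₗ[K] V) ≠ 1 := fun h ↦ hg (Subtype.ext (Subtype.ext h))
    exact natCard_pow_mul_natCard_le_of_le_finrank_quotient
      (two_le_finrank_quotient_fixedSubmodule g.1.det_eq_one hcop hpow hne)
  obtain ⟨v, hv⟩ := exists_stabilizer_eq_bot_of_mul_card_fixedBy_le hfix hle
  exact ⟨v, fun g hg hgv ↦
    congrArg Subtype.val ((Subgroup.eq_bot_iff_forall _).1 hv ⟨g, hg⟩ hgv)⟩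

/-- A finite subgroup `N ≤ SL(n, F_p)` with `p ∤ |N|` and `|N| ≤ p²` has a regular
orbit on the natural module `F_p^n`. -/
theorem regular_orbit_of_sl_subgroup
    (p n : ℕ) [Fact p.Prime]
    (N : Subgroup (Matrix.SpecialLinearGroup (Fin n) (ZMod p)))
    (hcop : ¬ p ∣ Nat.card N) (hle : Nat.card N ≤ p ^ 2) :
    ∃ v : Fin n → ZMod p, ∀ g ∈ N,
      Matrix.mulVec (g : Matrix (Fin n) (Fin n) (ZMod p)) v = v → g = 1 := by
  let φ := Matrix.SpecialLinearGroup.toLin'_equiv (n := Fin n) (R := ZMod p)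
  have hcard : Nat.card (N.map φ.toMonoidHom) = Nat.card N :=
    Subgroup.card_map_of_injective φ.injective
  obtain ⟨v, hv⟩ := regular_orbit_of_sl_subgroup_general (N.map φ.toMonoidHom)
    (by rwa [hcard, Ne, ZMod.natCast_eq_zero_iff]) (by rwa [hcard, Nat.card_zmod])
  exact ⟨v, fun g hg hgv ↦
    φ.map_eq_one_iff.1 (hv (φ g) (Subgroup.mem_map_of_mem φ.toMonoidHom hg) hgv)⟩
end

section
/- Let k be a field and let A be a finite abelian subgroup of SL(2, k) whose order is not divisible by the characteristic of k. Then A is cyclic. -/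
/-! The Cayley–Hamilton identity for `a ∈ SL(2, k)` reads `(a - 1) ^ 2 = (tr a - 2) • a`. The
algebra `k[A]` is commutative and has a prime ideal `P` meeting `k` only in `0`. If `a ≡ 1` modulo
`P`, then `tr a - 2` lies in `P`, because `a` is a unit, so `tr a = 2` and `(a - 1) ^ 2 = 0`. Then
`1 = a ^ |A| = 1 + |A| • (a - 1)`, and `|A|` is nonzero in `k`, so `a = 1`. Hence `A` embeds in the
multiplicative monoid of the domain `k[A] ⧸ P`, whose finite subgroups are cyclic. -/

section Ring

variable {R : Type*} [Ring R] {x : R}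

lemma pow_eq_one_add_nsmul_sub_one (hx : (x - 1) ^ 2 = 0) (n : ℕ) :
    x ^ n = 1 + n • (x - 1) := by
  induction n with
  | zero => simp
  | succ n ih =>
    calc x ^ (n + 1) = (1 + n • (x - 1)) * (1 + (x - 1)) := by
          rw [pow_succ, ih, add_sub_cancel]
      _ = 1 + (n + 1) • (x - 1) + n • (x - 1) ^ 2 := by
          rw [add_mul, one_mul, mul_add, mul_one, smul_mul_assoc, ← sq, succ_nsmul]; abel
      _ = 1 + (n + 1) • (x - 1) := by rw [hx, smul_zero, add_zero]

lemma eq_one_of_sub_one_sq_eq_zero_of_pow_eq_one (k : Type*) [CommRing k] [IsDomain k]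
    [Algebra k R] [Module.IsTorsionFree k R] (hx : (x - 1) ^ 2 = 0) {n : ℕ}
    (hn : (n : k) ≠ 0) (hpow : x ^ n = 1) : x = 1 := by
  have hsmul : (n : k) • (x - 1) = 0 := by
    rw [Nat.cast_smul_eq_nsmul]
    simpa only [hpow, left_eq_add] using pow_eq_one_add_nsmul_sub_one hx n
  exact sub_eq_zero.mp ((smul_eq_zero_iff_right hn).mp hsmul)

lemma sub_one_sq_eq_smul {k : Type*} [CommRing k] [Algebra k R] {t : k}
    (hx : x ^ 2 + 1 = t • x) : (x - 1) ^ 2 = (t - 2) • x := by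
  calc (x - 1) ^ 2 = x ^ 2 + 1 - (2 : k) • x := by rw [two_smul]; noncomm_ring
    _ = (t - 2) • x := by rw [hx, sub_smul]

end Ring

lemma exists_isPrime_comap_algebraMap_eq_bot (k R : Type*) [CommRing k] [IsDomain k] [CommRing R]
    [Algebra k R] [FaithfulSMul k R] :
    ∃ P : Ideal R, P.IsPrime ∧ P.comap (algebraMap k R) = ⊥ :=
  Ideal.exists_comap_eq_of_mem_minimalPrimes_of_injective
    (FaithfulSMul.algebraMap_injective k R) ⊥ (by simp [IsDomain.minimalPrimes_eq_singleton_bot])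

section CyclicCriterion

open scoped IsMulCommutative

variable {k R G : Type*} [CommRing k] [IsDomain k] [Group G] [Finite G]

theorem isCyclic_of_forall_sq_add_one_eq_smul [CommRing R] [Nontrivial R] [Algebra k R]
    [Module.IsTorsionFree k R] (hcard : (Nat.card G : k) ≠ 0) (f : G →* R)
    (hf : Function.Injective f) (hquad : ∀ g, ∃ t : k, f g ^ 2 + 1 = t • f g) : IsCyclic G := by
  obtain ⟨P, hP, hPk⟩ := exists_isPrime_comap_algebraMap_eq_bot k R
  let φ : G →* R ⧸ P := (Ideal.Quotient.mk P : R →* R ⧸ P).comp f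
  suffices hker : ∀ g, φ g = 1 → g = 1 from
    isCyclic_of_injective_ringHom φ ((injective_iff_map_eq_one φ).mpr hker)
  intro g hg
  obtain ⟨t, ht⟩ := hquad g
  have hsq : (f g - 1) ^ 2 = (t - 2) • f g := sub_one_sq_eq_smul ht
  have hmem : (t - 2) • f g ∈ P := by
    rw [← hsq]
    exact P.pow_mem_of_mem (Ideal.Quotient.eq.mp hg) 2 two_pos
  have htrace : t - 2 ∈ P.comap (algebraMap k R) := by
    rw [Algebra.smul_def] at hmem
    exact (P.mul_unit_mem_iff_mem ((Group.isUnit g).map f)).mp hmem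
  rw [hPk, Ideal.mem_bot] at htrace
  rw [htrace, zero_smul] at hsq
  have hpow : f g ^ Nat.card G = 1 := by rw [← map_pow, pow_card_eq_one', map_one]
  exact (map_eq_one_iff f hf).mp (eq_one_of_sub_one_sq_eq_zero_of_pow_eq_one k hsq hcard hpow)

theorem isCyclic_of_commute_of_forall_sq_add_one_eq_smul [Ring R] [Nontrivial R] [Algebra k R]
    [Module.IsTorsionFree k R] (hcard : (Nat.card G : k) ≠ 0) (f : G →* R)
    (hf : Function.Injective f) (hcomm : ∀ a b, Commute (f a) (f b))
    (hquad : ∀ g, ∃ t : k, f g ^ 2 + 1 = t • f g) : IsCyclic G := by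
  have : IsMulCommutative (Algebra.adjoin k (Set.range f)) := by
    refine Algebra.isMulCommutative_adjoin k ?_
    rintro _ ⟨a, rfl⟩ _ ⟨b, rfl⟩
    exact hcomm a b
  let f' : G →* Algebra.adjoin k (Set.range f) :=
    f.codRestrict _ fun g => Algebra.subset_adjoin (Set.mem_range_self g)
  refine isCyclic_of_forall_sq_add_one_eq_smul hcard f'
    (fun a b hab => hf (congrArg Subtype.val hab)) fun g => ?_
  obtain ⟨t, ht⟩ := hquad g
  exact ⟨t, Subtype.ext ht⟩

end CyclicCriterion

lemma sq_add_one_eq_trace_smul {k : Type*} [CommRing k] (a : Matrix.SpecialLinearGroup (Fin 2) k) :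
    (a : Matrix (Fin 2) (Fin 2) k) ^ 2 + 1 = (a : Matrix (Fin 2) (Fin 2) k).trace • a.val := by
  nontriviality k
  have hCH := Matrix.aeval_self_charpoly a.val
  simp only [Matrix.charpoly_fin_two, a.det_coe, map_add, map_sub, map_mul, map_pow, map_one,
    Polynomial.aeval_X, Polynomial.aeval_C, ← Algebra.smul_def] at hCH
  rwa [sub_add_eq_add_sub, sub_eq_zero] at hCH

theorem abelian_sl2_subgroup_isCyclic_general
    (k : Type*) [CommRing k] [IsDomain k]
    (A : Subgroup (Matrix.SpecialLinearGroup (Fin 2) k)) [Finite A]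
    (hab : ∀ a b : A, a * b = b * a)
    (hcop : ¬ ringChar k ∣ Nat.card A) :
    IsCyclic A := by
  let f : A →* Matrix (Fin 2) (Fin 2) k :=
    (Units.coeHom _).comp (Matrix.SpecialLinearGroup.toGL.comp A.subtype)
  have hf : Function.Injective f := Subtype.val_injective.comp Subtype.val_injective
  have hcard : (Nat.card A : k) ≠ 0 := mt (ringChar.dvd (R := k)) hcop
  have hcomm (a b : A) : Commute (f a) (f b) := Commute.map (hab a b) f
  exact isCyclic_of_commute_of_forall_sq_add_one_eq_smul hcard f hf hcomm
    fun a => ⟨_, sq_add_one_eq_trace_smul a.val⟩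

/-- A finite abelian subgroup of `SL(2, k)` whose order is not divisible by the
characteristic of the field `k` is cyclic. -/
theorem abelian_sl2_subgroup_isCyclic
    (k : Type*) [Field k]
    (A : Subgroup (Matrix.SpecialLinearGroup (Fin 2) k)) [Finite A]
    (hab : ∀ a b : A, a * b = b * a)
    (hcop : ¬ ringChar k ∣ Nat.card A) :
    IsCyclic A :=
  abelian_sl2_subgroup_isCyclic_general k A hab hcop
end

section
/- There exists a subgroup G of GL(2, F_5) of order 16 that is nonabelian with cyclic center of order 4 and exponent 4 (so G is isomorphic to the central product D_8 ∗ C_4), such that G has no regular orbit on F_5², i.e. every vector in F_5² has nontrivial stabilizer in G. -/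
/-!
The group is the Pauli group over `F_5`, generated by the scalars, the swap `X` and
`Z = diag(1, -1)`. The relation `Z * X = -(X * Z)` gives the normal forms `c • (Z ^ j * X ^ s)`, and
two of these commute exactly when the signs acquired by reordering their products agree. Since
`-1 ≠ 1`, only the scalars are central, and there are `4 * |F_5ˣ|` normal forms.

A vector with a zero coordinate is fixed by `Z` or by `-Z`. A vector `(x, y)` without zero
coordinates is fixed by the antidiagonal matrix with entries `c = x / y` and `c⁻¹`, which has the
form `c • (Z ^ j * X)` because `c ^ 4 = 1` in `F_5ˣ` forces `c⁻¹ = ±c`.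
-/

section Ring

variable {R : Type*} [Ring R]

theorem neg_one_intUnits_smul (u : Rˣ) : (-1 : ℤˣ) • u = -u :=
  Units.ext (by simp)

theorem exists_intUnits_smul_eq_inv [NoZeroDivisors R] {u : Rˣ} (hu : u ^ 4 = 1) :
    ∃ ε : ℤˣ, ε • u = u⁻¹ := by
  have inv_sq : (u ^ 2)⁻¹ = u ^ 2 := by
    rw [inv_eq_iff_mul_eq_one, ← pow_add, hu]
  rcases (Units.inv_eq_self_iff _).1 inv_sq with h | h
  · exact ⟨1, by rw [one_smul, eq_inv_iff_mul_eq_one, ← sq, h]⟩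
  · exact ⟨-1, by rw [neg_one_intUnits_smul, eq_inv_iff_mul_eq_one, neg_mul, ← sq, h, neg_neg]⟩

theorem units_neg_ne_self [NeZero (2 : R)] (c : Rˣ) : -c ≠ c := by
  intro h
  have two_mul_eq_zero : (2 : R) * c = 0 := by
    rw [two_mul, ← neg_eq_iff_add_eq_zero, ← Units.val_neg, h]
  exact two_ne_zero (c.mul_left_eq_zero.1 two_mul_eq_zero)

theorem intUnits_smul_left_inj [NeZero (2 : R)] {ε δ : ℤˣ} {c : Rˣ} : ε • c = δ • c ↔ ε = δ := by
  rcases Int.units_eq_one_or ε with rfl | rfl <;> rcases Int.units_eq_one_or δ with rfl | rfl <;>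
    simp [neg_one_intUnits_smul, units_neg_ne_self, (units_neg_ne_self _).symm]

end Ring

/-- The sign `(-1) ^ (s j)`, where `δ = (-1) ^ j`, in the relation
`X ^ s * Z ^ j = (-1) ^ (s j) • (Z ^ j * X ^ s)` between the Pauli matrices. -/
def pauliCocycle : Bool → ℤˣ → ℤˣ
  | false, _ => 1
  | true, δ => δ

@[simp]
theorem pauliCocycle_false (δ : ℤˣ) : pauliCocycle false δ = 1 := rfl

@[simp]
theorem pauliCocycle_true (δ : ℤˣ) : pauliCocycle true δ = δ := rfl

@[simp]
theorem pauliCocycle_one (s : Bool) : pauliCocycle s 1 = 1 := by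
  cases s <;> rfl

section CommRing

variable {R : Type*} [CommRing R]

/-- The matrix `c • (Z ^ j * X ^ s)`, where `X` is the swap, `Z = diag(1, -1)` and `j` is encoded by
the sign `ε = (-1) ^ j`. -/
def pauliMatrix (c : R) (ε : ℤˣ) : Bool → Matrix (Fin 2) (Fin 2) R
  | false => !![c, 0; 0, ε • c]
  | true => !![0, c; ε • c, 0]

theorem pauliMatrix_one : pauliMatrix (1 : R) 1 false = 1 := by
  simp [pauliMatrix, Matrix.one_fin_two]

theorem pauliMatrix_mul (c d : R) (ε δ : ℤˣ) (s t : Bool) :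
    pauliMatrix c ε s * pauliMatrix d δ t =
      pauliMatrix (pauliCocycle s δ • (c * d)) (ε * δ) (xor s t) := by
  rcases Int.units_eq_one_or ε with rfl | rfl <;> rcases Int.units_eq_one_or δ with rfl | rfl <;>
    cases s <;> cases t <;> simp [pauliMatrix]

/-- The Pauli matrix `pauliMatrix c ε s` with unit scalar, as an element of `GL (Fin 2) R`. -/
def pauli (c : Rˣ) (ε : ℤˣ) (s : Bool) : GL (Fin 2) R where
  val := pauliMatrix c ε s
  inv := pauliMatrix ↑(pauliCocycle s ε • c⁻¹) ε s
  val_inv := by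
    rcases Int.units_eq_one_or ε with rfl | rfl <;> cases s <;>
      simp [pauliMatrix_mul, pauliMatrix_one]
  inv_val := by
    rcases Int.units_eq_one_or ε with rfl | rfl <;> cases s <;>
      simp [pauliMatrix_mul, pauliMatrix_one]

theorem pauli_one : pauli (1 : Rˣ) 1 false = 1 :=
  Units.ext pauliMatrix_one

theorem pauli_mul (c d : Rˣ) (ε δ : ℤˣ) (s t : Bool) :
    pauli c ε s * pauli d δ t = pauli (pauliCocycle s δ • (c * d)) (ε * δ) (xor s t) :=
  Units.ext (pauliMatrix_mul (c : R) d ε δ s t)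

theorem pauli_inv (c : Rˣ) (ε : ℤˣ) (s : Bool) :
    (pauli c ε s)⁻¹ = pauli (pauliCocycle s ε • c⁻¹) ε s :=
  Units.ext rfl

theorem pauli_pow_four (c : Rˣ) (ε : ℤˣ) (s : Bool) :
    pauli c ε s ^ 4 = pauli (c ^ 4) 1 false := by
  have pauli_sq : pauli c ε s ^ 2 = pauli (pauliCocycle s ε • c ^ 2) 1 false := by
    simp [sq, pauli_mul]
  rw [pow_mul (pauli c ε s) 2 2, pauli_sq, sq, pauli_mul]
  rcases Int.units_eq_one_or (pauliCocycle s ε) with h | h <;>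
    simp [h, neg_one_intUnits_smul, ← pow_add]

variable (R) in
/-- The Pauli group: the subgroup of `GL (Fin 2) R` generated by the unit scalars, the swap `X` and
`Z = diag(1, -1)`, given here by its normal forms. If `2 ≠ 0` in `R`, it is a central product of
`D₈ = ⟨X, Z⟩` with `Rˣ`. -/
def pauliGroup : Subgroup (GL (Fin 2) R) where
  carrier := Set.range fun t : Rˣ × ℤˣ × Bool ↦ pauli t.1 t.2.1 t.2.2
  one_mem' := ⟨(1, 1, false), pauli_one⟩
  mul_mem' := by
    rintro _ _ ⟨⟨c, ε, s⟩, rfl⟩ ⟨⟨d, δ, t⟩, rfl⟩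
    exact ⟨(_, _, _), (pauli_mul c d ε δ s t).symm⟩
  inv_mem' := by
    rintro _ ⟨⟨c, ε, s⟩, rfl⟩
    exact ⟨(_, _, _), (pauli_inv c ε s).symm⟩

namespace pauliGroup

theorem pauli_mem (c : Rˣ) (ε : ℤˣ) (s : Bool) : pauli c ε s ∈ pauliGroup R :=
  ⟨(c, ε, s), rfl⟩

variable (R) in
/-- The embedding of the unit scalars into the Pauli group. -/
def scalar : Rˣ →* pauliGroup R where
  toFun c := ⟨pauli c 1 false, pauli_mem c 1 false⟩
  map_one' := Subtype.ext pauli_one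
  map_mul' c d := Subtype.ext <| by simp [pauli_mul]

end pauliGroup

section NeZero

variable [NeZero (2 : R)]

theorem pauli_inj {c d : Rˣ} {ε δ : ℤˣ} {s t : Bool} :
    pauli c ε s = pauli d δ t ↔ c = d ∧ ε = δ ∧ s = t := by
  have : Nontrivial R := ⟨2, 0, two_ne_zero⟩
  refine ⟨fun h ↦ ?_, by rintro ⟨rfl, rfl, rfl⟩; rfl⟩
  have hmat : pauliMatrix (c : R) ε s = pauliMatrix (d : R) δ t := congr_arg Units.val h
  obtain rfl : s = t := by
    cases s <;> cases t <;> simp_all [pauliMatrix]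
  obtain ⟨hc, hε⟩ : (c : R) = d ∧ ε • (c : R) = δ • (d : R) := by
    cases s <;> simpa [pauliMatrix] using hmat
  obtain rfl : c = d := Units.ext hc
  exact ⟨rfl, intUnits_smul_left_inj.1 (Units.ext hε), rfl⟩

theorem commute_pauli_iff {c d : Rˣ} {ε δ : ℤˣ} {s t : Bool} :
    Commute (pauli c ε s) (pauli d δ t) ↔ pauliCocycle s δ = pauliCocycle t ε := by
  rw [commute_iff_eq, pauli_mul, pauli_mul, pauli_inj, mul_comm d c, intUnits_smul_left_inj]
  simp [mul_comm, Bool.xor_comm]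

theorem orderOf_pauli_one_neg_one_true : orderOf (pauli (1 : Rˣ) (-1) true) = 4 := by
  refine orderOf_eq_prime_pow (p := 2) (n := 1) ?_ ?_
  · rw [pow_one, sq, pauli_mul, ← pauli_one, pauli_inj]
    simpa [Units.ext_iff] using units_neg_ne_self (1 : Rˣ)
  · simp [pauli_pow_four, pauli_one]

namespace pauliGroup

variable (R) in
theorem card_eq : Nat.card (pauliGroup R) = 4 * Nat.card Rˣ := by
  have inj : Function.Injective fun t : Rˣ × ℤˣ × Bool ↦ pauli t.1 t.2.1 t.2.2 :=
    fun t u h ↦ by simpa [Prod.ext_iff] using pauli_inj.1 h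
  calc Nat.card (pauliGroup R) = Nat.card (Rˣ × ℤˣ × Bool) := Nat.card_range_of_injective inj
    _ = 4 * Nat.card Rˣ := by simp [mul_comm]

theorem not_forall_mul_comm : ¬ ∀ a b : pauliGroup R, a * b = b * a := by
  intro h
  have hc : Commute (pauli (1 : Rˣ) 1 true) (pauli 1 (-1) false) :=
    congr_arg Subtype.val (h ⟨_, pauli_mem _ _ _⟩ ⟨_, pauli_mem _ _ _⟩)
  simp [commute_pauli_iff] at hc

theorem scalar_injective : Function.Injective (scalar R) :=
  fun _ _ h ↦ (pauli_inj.1 (congr_arg Subtype.val h)).1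

theorem center_eq_range_scalar : Subgroup.center (pauliGroup R) = (scalar R).range := by
  ext ⟨_, ⟨c, ε, s⟩, rfl⟩
  rw [Subgroup.mem_center_iff]
  constructor
  · intro h
    have hX : Commute (pauli 1 1 true) (pauli c ε s) :=
      congr_arg Subtype.val (h ⟨_, pauli_mem 1 1 true⟩)
    have hZ : Commute (pauli 1 (-1) false) (pauli c ε s) :=
      congr_arg Subtype.val (h ⟨_, pauli_mem 1 (-1) false⟩)
    rw [commute_pauli_iff] at hX hZ
    obtain rfl : ε = 1 := by simpa using hX
    obtain rfl : s = false := by cases s <;> simp_all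
    exact ⟨c, rfl⟩
  · rintro ⟨d, hd⟩ ⟨_, ⟨b, δ, t⟩, rfl⟩
    rw [← hd]
    exact Subtype.ext (commute_pauli_iff.2 (by simp)).eq

variable (R) in
/-- The center of the Pauli group is the group of unit scalars. -/
noncomputable def unitsEquivCenter : Rˣ ≃* Subgroup.center (pauliGroup R) :=
  (MonoidHom.ofInjective scalar_injective).trans
    (MulEquiv.subgroupCongr center_eq_range_scalar.symm)

variable (R) in
theorem exponent_eq_lcm :
    Monoid.exponent (pauliGroup R) = Nat.lcm 4 (Monoid.exponent Rˣ) := by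
  apply Nat.dvd_antisymm
  · apply Monoid.exponent_dvd_of_forall_pow_eq_one
    rintro ⟨_, ⟨c, ε, s⟩, rfl⟩
    obtain ⟨k, hk⟩ := Nat.dvd_lcm_left 4 (Monoid.exponent Rˣ)
    have pow_lcm : c ^ (4 * k) = 1 :=
      hk ▸ Monoid.exponent_dvd_iff_forall_pow_eq_one.1 (Nat.dvd_lcm_right 4 _) c
    have pow_four : (⟨pauli c ε s, pauli_mem c ε s⟩ : pauliGroup R) ^ 4 = scalar R (c ^ 4) :=
      Subtype.ext (pauli_pow_four c ε s)
    rw [hk, pow_mul, pow_four, ← map_pow, ← pow_mul, pow_lcm, map_one]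
  · apply Nat.lcm_dvd
    · rw [← orderOf_pauli_one_neg_one_true (R := R),
        ← Subgroup.orderOf_mk _ (pauli_mem 1 (-1) true)]
      exact Monoid.order_dvd_exponent _
    · exact Monoid.exponent_dvd_of_monoidHom (scalar R) scalar_injective

end pauliGroup

end NeZero

end CommRing

theorem pauliGroup.exists_ne_one_mulVec_eq {F : Type*} [Field F] [NeZero (2 : F)]
    (hF : ∀ u : Fˣ, u ^ 4 = 1) (v : Fin 2 → F) :
    ∃ g ∈ pauliGroup F, g ≠ 1 ∧ (g : Matrix (Fin 2) (Fin 2) F).mulVec v = v := by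
  suffices ∃ (c : Fˣ) (ε : ℤˣ) (s : Bool), ¬(c = 1 ∧ ε = 1 ∧ s = false) ∧
      (pauliMatrix (c : F) ε s).mulVec v = v by
    obtain ⟨c, ε, s, hne, hfix⟩ := this
    exact ⟨_, pauli_mem c ε s, by rwa [← pauli_one, Ne, pauli_inj], hfix⟩
  by_cases hx : v 0 = 0
  · refine ⟨-1, -1, false, by simp, ?_⟩
    ext i
    fin_cases i <;> simp [pauliMatrix, hx, Matrix.mulVec, dotProduct]
  by_cases hy : v 1 = 0
  · refine ⟨1, -1, false, by simp, ?_⟩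
    ext i
    fin_cases i <;> simp [pauliMatrix, hy, Matrix.mulVec, dotProduct]
  let c := Units.mk0 (v 0) hx / Units.mk0 (v 1) hy
  obtain ⟨ε, hε⟩ := exists_intUnits_smul_eq_inv (hF c)
  refine ⟨c, ε, true, by simp, ?_⟩
  have coe_c : (c : F) = v 0 / v 1 := Units.val_div_eq_div_val _ _
  have smul_div : ε • (v 0 / v 1) = v 1 / v 0 := by
    rw [← coe_c, ← Units.val_smul, hε, Units.val_inv_eq_inv_val, coe_c, inv_div]
  ext i
  fin_cases i <;> simp [pauliMatrix, Matrix.mulVec, dotProduct, coe_c, smul_div, hx, hy]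

/-- There is a subgroup `G ≤ GL(2, F_5)` of order 16, nonabelian with cyclic center
of order 4 and exponent 4 (hence `G ≅ D₈ ∗ C₄`), having no regular orbit on `F_5²`:
every vector has nontrivial stabilizer in `G`. -/
theorem central_product_d8_c4_in_gl2_f5_no_regular_orbit :
    ∃ G : Subgroup (GL (Fin 2) (ZMod 5)),
      Nat.card G = 16 ∧ (¬ ∀ a b : G, a * b = b * a) ∧
      IsCyclic (Subgroup.center G) ∧ Nat.card (Subgroup.center G) = 4 ∧
      Monoid.exponent G = 4 ∧
      ∀ v : Fin 2 → ZMod 5, ∃ g ∈ G, g ≠ 1 ∧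
        Matrix.mulVec (g : Matrix (Fin 2) (Fin 2) (ZMod 5)) v = v := by
  have : NeZero (2 : ZMod 5) := ⟨by decide⟩
  have : Fact (Nat.Prime 5) := ⟨Nat.prime_five⟩
  have card_units : Nat.card (ZMod 5)ˣ = 4 := by
    rw [Nat.card_eq_fintype_card, ZMod.card_units]
  have pow_four (u : (ZMod 5)ˣ) : u ^ 4 = 1 := ZMod.units_pow_card_sub_one_eq_one 5 u
  let e := pauliGroup.unitsEquivCenter (ZMod 5)
  refine ⟨pauliGroup (ZMod 5), ?_, pauliGroup.not_forall_mul_comm, e.isCyclic.1 inferInstance, ?_,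
    ?_, pauliGroup.exists_ne_one_mulVec_eq pow_four⟩
  · rw [pauliGroup.card_eq, card_units]
  · rw [← Nat.card_congr e.toEquiv, card_units]
  · rw [pauliGroup.exponent_eq_lcm, IsCyclic.exponent_eq_card, card_units, Nat.lcm_self]
end
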